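/- arXiv:1406.1887 — 3 statements merged into one kernel-verified Lean document; each statement's English description precedes it below -/
import Mathlib

section
/- There exists n₀ such that for every n ≥ n₀ and every integer E with 1 ≤ E ≤ n/100, every family F ⊆ 2^[n] with |F| = Σ(n,2) + E contains at least E·f(n) copies of the butterfly. -/
def IsButterfly {n : ℕ} (S : Finset (Finset (Fin n))) : Prop :=
  ∃ A B C D : Finset (Fin n), S = {A, B, C, D} ∧ A ≠ B ∧ C ≠ D ∧
    A ⊂ C ∧ A ⊂ D ∧ B ⊂ C ∧ B ⊂ D

open Classical in
noncomputable def numButterflies {n : ℕ} (F : Finset (Finset (Fin n))) : ℕ :=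
  (F.powerset.filter (fun S => IsButterfly S)).card

def Sigma2 (n : ℕ) : ℕ := n.choose (n / 2) + n.choose (n / 2 + 1)

/-- `f(n) = (⌈n/2⌉+1)·C(⌈n/2⌉,2)`. -/
def fB (n : ℕ) : ℕ := ((n + 1) / 2 + 1) * Nat.choose ((n + 1) / 2) 2

noncomputable def bfPk {n : ℕ} (F : Finset (Finset (Fin n))) : ℕ → Finset (Fin n) → ℝ
  | 0, _ => 0
  | k+1, B => (∑ x ∈ B, if B.erase x ∈ F then 1 else bfPk F k (B.erase x)) / ((k:ℝ)+1)

noncomputable def bfP {n : ℕ} (F : Finset (Finset (Fin n))) (B : Finset (Fin n)) : ℝ :=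
  bfPk F B.card B

theorem bfP_zero {n : ℕ} (F : Finset (Finset (Fin n))) (B : Finset (Fin n)) (h : B.card = 0) :
    bfP F B = 0 := by
  unfold bfP; rw [h]; rfl

theorem bfP_succ {n : ℕ} (F : Finset (Finset (Fin n))) (B : Finset (Fin n)) (k : ℕ)
    (h : B.card = k + 1) :
    bfP F B = (∑ x ∈ B, if B.erase x ∈ F then 1 else bfP F (B.erase x)) / ((k:ℝ)+1) := by
  unfold bfP
  rw [h]
  simp only [bfPk]
  congr 1
  apply Finset.sum_congr rfl
  intro x hx
  rw [Finset.card_erase_of_mem hx, h]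
  rfl

theorem bfP_bounds {n : ℕ} (F : Finset (Finset (Fin n))) :
    ∀ (k : ℕ) (B : Finset (Fin n)), B.card = k → 0 ≤ bfP F B ∧ bfP F B ≤ 1 := by
  intro k
  induction k with
  | zero => intro B h; rw [bfP_zero F B h]; norm_num
  | succ k ih =>
    intro B h
    rw [bfP_succ F B k h]
    have hk : (0:ℝ) < (k:ℝ)+1 := by positivity
    have hc : ∀ x ∈ B, 0 ≤ (if B.erase x ∈ F then (1:ℝ) else bfP F (B.erase x)) ∧
        (if B.erase x ∈ F then (1:ℝ) else bfP F (B.erase x)) ≤ 1 := by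
      intro x hx
      split_ifs
      · norm_num
      · exact ih _ (by rw [Finset.card_erase_of_mem hx, h]; rfl)
    constructor
    · exact div_nonneg (Finset.sum_nonneg fun x hx => (hc x hx).1) hk.le
    · rw [div_le_one hk]
      calc _ ≤ ∑ x ∈ B, (1:ℝ) := Finset.sum_le_sum fun x hx => (hc x hx).2
        _ = (k:ℝ)+1 := by simp [h]

theorem bfP_nonneg {n : ℕ} (F : Finset (Finset (Fin n))) (B : Finset (Fin n)) : 0 ≤ bfP F B :=
  (bfP_bounds F _ B rfl).1

theorem bfP_le_one {n : ℕ} (F : Finset (Finset (Fin n))) (B : Finset (Fin n)) : bfP F B ≤ 1 :=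
  (bfP_bounds F _ B rfl).2

theorem bfP_mono {n : ℕ} {F G : Finset (Finset (Fin n))} (hFG : F ⊆ G) :
    ∀ (k : ℕ) (B : Finset (Fin n)), B.card = k → bfP F B ≤ bfP G B := by
  intro k
  induction k with
  | zero => intro B h; rw [bfP_zero F B h, bfP_zero G B h]
  | succ k ih =>
    intro B h
    rw [bfP_succ F B k h, bfP_succ G B k h]
    have hk : (0:ℝ) < (k:ℝ)+1 := by positivity
    apply div_le_div_of_nonneg_right _ hk.le
    apply Finset.sum_le_sum
    intro x hx
    by_cases h1 : B.erase x ∈ F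
    · rw [if_pos h1, if_pos (hFG h1)]
    · rw [if_neg h1]
      split_ifs
      · exact bfP_le_one _ _
      · exact ih _ (by rw [Finset.card_erase_of_mem hx, h]; rfl)

theorem bfP_congr {n : ℕ} {F G : Finset (Finset (Fin n))} :
    ∀ (k : ℕ) (B : Finset (Fin n)), B.card = k → (∀ A, A ⊂ B → (A ∈ F ↔ A ∈ G)) →
      bfP F B = bfP G B := by
  intro k
  induction k with
  | zero => intro B h _; rw [bfP_zero F B h, bfP_zero G B h]
  | succ k ih =>
    intro B h hh
    rw [bfP_succ F B k h, bfP_succ G B k h]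
    congr 1
    apply Finset.sum_congr rfl
    intro x hx
    have e1 := hh _ (Finset.erase_ssubset hx)
    have e2 := ih (B.erase x) (by rw [Finset.card_erase_of_mem hx, h]; rfl)
      (fun A hA => hh A (hA.trans (Finset.erase_ssubset hx)))
    simp only [e1, e2]

/-- main representation -/
theorem bfP_rep {n : ℕ} (F : Finset (Finset (Fin n))) :
    ∀ (k : ℕ) (V : Finset (Fin n)), V.card = k →
      bfP F V = ∑ B ∈ F.filter (fun B => B ⊂ V), (1 - bfP F B) / (V.card.choose B.card : ℝ) := by
  intro k
  induction k with
  | zero =>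
    intro V h
    rw [bfP_zero F V h]
    symm
    apply Finset.sum_eq_zero
    intro B hB
    rw [Finset.card_eq_zero] at h
    subst h
    simp at hB
  | succ k ih =>
    intro V h
    rw [bfP_succ F V k h]
    have step : ∀ x ∈ V, (if V.erase x ∈ F then (1:ℝ) else bfP F (V.erase x)) =
        ∑ B ∈ F.filter (fun B => B ⊂ V), if x ∉ B then (1 - bfP F B) / (k.choose B.card : ℝ) else 0 := by
      intro x hx
      have hc : (V.erase x).card = k := by rw [Finset.card_erase_of_mem hx, h]; rfl
      have e := ih (V.erase x) hc
      rw [hc] at e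
      have e2 : (if V.erase x ∈ F then (1:ℝ) else bfP F (V.erase x)) =
          ∑ B ∈ F.filter (fun B => B ⊆ V.erase x), (1 - bfP F B) / (k.choose B.card : ℝ) := by
        by_cases hm : V.erase x ∈ F
        · rw [if_pos hm]
          have : F.filter (fun B => B ⊆ V.erase x) =
              insert (V.erase x) (F.filter (fun B => B ⊂ V.erase x)) := by
            ext B
            simp only [Finset.mem_filter, Finset.mem_insert]
            constructor
            · rintro ⟨a, b⟩
              rcases eq_or_ssubset_of_subset b with c | c
              · exact Or.inl c
              · exact Or.inr ⟨a, c⟩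
            · rintro (c | ⟨a, b⟩)
              · subst c; exact ⟨hm, subset_rfl⟩
              · exact ⟨a, b.subset⟩
          rw [this, Finset.sum_insert (by simp), ← e, hc]
          simp
        · rw [if_neg hm, e]
          apply Finset.sum_congr _ (fun _ _ => rfl)
          ext B
          simp only [Finset.mem_filter]
          constructor
          · rintro ⟨a, b⟩; exact ⟨a, b.subset⟩
          · rintro ⟨a, b⟩
            refine ⟨a, ?_⟩
            rcases eq_or_ssubset_of_subset b with c | c
            · subst c; exact absurd a hm
            · exact c
      rw [e2, ← Finset.sum_filter, Finset.filter_filter]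
      apply Finset.sum_congr _ (fun _ _ => rfl)
      ext B
      simp only [Finset.mem_filter]
      constructor
      · rintro ⟨a, b⟩
        exact ⟨a, lt_of_le_of_lt b (Finset.erase_ssubset hx), fun hb => by simpa using b hb⟩
      · rintro ⟨a, b, c⟩
        exact ⟨a, Finset.subset_erase.2 ⟨b.subset, c⟩⟩
    rw [Finset.sum_congr rfl step, Finset.sum_comm, Finset.sum_div]
    apply Finset.sum_congr rfl
    intro B hB
    have hBV : B ⊂ V := (Finset.mem_filter.1 hB).2
    rw [← Finset.sum_filter, Finset.sum_const, h]
    have hcard : (V.filter (fun x => x ∉ B)).card = k + 1 - B.card := by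
      rw [Finset.filter_notMem_eq_sdiff, Finset.card_sdiff_of_subset hBV.subset, h]
    rw [hcard]
    have hlt : B.card < k + 1 := by rw [← h]; exact Finset.card_lt_card hBV
    have hid := Nat.choose_mul_succ_eq k B.card
    have hid' : (k.choose B.card : ℝ) * ((k:ℝ)+1) = ((k+1).choose B.card : ℝ) * ((k + 1 - B.card : ℕ) : ℝ) := by
      exact_mod_cast hid
    have p1 : (0:ℝ) < (k.choose B.card : ℝ) := by exact_mod_cast Nat.choose_pos (by omega)
    have p2 : (0:ℝ) < ((k+1).choose B.card : ℝ) := by exact_mod_cast Nat.choose_pos (by omega)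
    have p3 : (0:ℝ) < (k:ℝ)+1 := by positivity
    rw [nsmul_eq_mul]
    field_simp
    linear_combination (-(1 - bfP F B)) * hid'

theorem bfP_univ {n : ℕ} (F : Finset (Finset (Fin n))) (V : Finset (Fin n)) :
    ∑ B ∈ F.filter (fun B => B ⊆ V), (1 - bfP F B) / (V.card.choose B.card : ℝ) ≤ 1 := by
  have e := bfP_rep F _ V rfl
  by_cases hm : V ∈ F
  · have : F.filter (fun B => B ⊆ V) = insert V (F.filter (fun B => B ⊂ V)) := by
      ext B
      simp only [Finset.mem_filter, Finset.mem_insert]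
      constructor
      · rintro ⟨a, b⟩
        rcases eq_or_ssubset_of_subset b with c | c
        · exact Or.inl c
        · exact Or.inr ⟨a, c⟩
      · rintro (c | ⟨a, b⟩)
        · subst c; exact ⟨hm, subset_rfl⟩
        · exact ⟨a, b.subset⟩
    rw [this, Finset.sum_insert (by simp), ← e]
    simp
  · have : F.filter (fun B => B ⊆ V) = F.filter (fun B => B ⊂ V) := by
      ext B
      simp only [Finset.mem_filter]
      constructor
      · rintro ⟨a, b⟩
        refine ⟨a, ?_⟩
        rcases eq_or_ssubset_of_subset b with c | c
        · subst c; exact absurd a hm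
        · exact c
      · rintro ⟨a, b⟩; exact ⟨a, b.subset⟩
    rw [this, ← e]
    exact bfP_le_one _ _

theorem bfP_le_sum {n : ℕ} (F : Finset (Finset (Fin n))) (V : Finset (Fin n)) :
    bfP F V ≤ ∑ B ∈ F.filter (fun B => B ⊂ V), 1 / (V.card.choose B.card : ℝ) := by
  rw [bfP_rep F _ V rfl]
  apply Finset.sum_le_sum
  intro B _
  apply div_le_div_of_nonneg_right _ (by positivity)
  linarith [bfP_nonneg F B]

theorem bfP_lym {n : ℕ} (F : Finset (Finset (Fin n))) :
    ∑ B ∈ F, (1 - bfP F B) / (n.choose B.card : ℝ) ≤ 1 := by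
  have := bfP_univ F Finset.univ
  simpa using this

def bfD {n : ℕ} (F : Finset (Finset (Fin n))) (B : Finset (Fin n)) : Finset (Finset (Fin n)) :=
  F.filter (fun A => A ⊂ B)
def bfD1 {n : ℕ} (F : Finset (Finset (Fin n))) (B : Finset (Fin n)) : Finset (Finset (Fin n)) :=
  F.filter (fun A => A ⊂ B ∧ A.card + 1 = B.card)
def bfU {n : ℕ} (F : Finset (Finset (Fin n))) (B : Finset (Fin n)) : Finset (Finset (Fin n)) :=
  F.filter (fun A => B ⊂ A)
def bfU1 {n : ℕ} (F : Finset (Finset (Fin n))) (B : Finset (Fin n)) : Finset (Finset (Fin n)) :=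
  F.filter (fun A => B ⊂ A ∧ B.card + 1 = A.card)

def bfT {n : ℕ} (F : Finset (Finset (Fin n))) (B : Finset (Fin n)) : ℕ :=
  (bfU F B).card * ((bfD F B).card.choose 2 + (bfD1 F B).card.choose 2) +
  (bfD F B).card * ((bfU F B).card.choose 2 + (bfU1 F B).card.choose 2)

/-- pairs of (lower part, upper part), where the pairs are taken in `D'`, `U'` -/
def bfDom {n : ℕ} (D D' U U' : Finset (Finset (Fin n))) :
    Finset (Finset (Finset (Fin n)) × Finset (Finset (Fin n))) :=
  (D'.powersetCard 2 ×ˢ U.powersetCard 1) ∪ (D.powersetCard 1 ×ˢ U'.powersetCard 2)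

theorem bfDom_card {n : ℕ} (D D' U U' : Finset (Finset (Fin n))) :
    (bfDom D D' U U').card = U.card * D'.card.choose 2 + D.card * U'.card.choose 2 := by
  unfold bfDom
  rw [Finset.card_union_of_disjoint]
  · simp [Finset.card_product, Finset.card_powersetCard, mul_comm]
  · rw [Finset.disjoint_left]
    rintro ⟨s, t⟩ h1 h2
    simp only [Finset.mem_product, Finset.mem_powersetCard] at h1 h2
    omega

def bfG {n : ℕ} (F : Finset (Finset (Fin n))) (B : Finset (Fin n)) :
    Finset (Finset (Finset (Fin n))) :=
  (bfDom (bfD F B) (bfD F B) (bfU F B) (bfU F B)).image (fun st => insert B (st.1 ∪ st.2))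

def bfH {n : ℕ} (F : Finset (Finset (Fin n))) (B : Finset (Fin n)) :
    Finset (Finset (Finset (Fin n))) :=
  (bfDom (bfD F B) (bfD1 F B) (bfU F B) (bfU1 F B)).image (fun st => insert B (st.1 ∪ st.2))

theorem bfD1_sub {n : ℕ} (F : Finset (Finset (Fin n))) (B : Finset (Fin n)) :
    bfD1 F B ⊆ bfD F B := by
  intro A hA
  simp only [bfD1, bfD, Finset.mem_filter] at *
  tauto

theorem bfU1_sub {n : ℕ} (F : Finset (Finset (Fin n))) (B : Finset (Fin n)) :
    bfU1 F B ⊆ bfU F B := by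
  intro A hA
  simp only [bfU1, bfU, Finset.mem_filter] at *
  tauto

theorem bfDom_sub {n : ℕ} {D D' U U' : Finset (Finset (Fin n))} (hD : D' ⊆ D) (hU : U' ⊆ U)
    {st} (h : st ∈ bfDom D D' U U') : st.1 ⊆ D ∧ st.2 ⊆ U := by
  unfold bfDom at h
  simp only [Finset.mem_union, Finset.mem_product, Finset.mem_powersetCard] at h
  rcases h with ⟨⟨a, _⟩, b, _⟩ | ⟨⟨a, _⟩, b, _⟩
  · exact ⟨a.trans hD, b⟩
  · exact ⟨a, b.trans hU⟩

theorem bf_recover {n : ℕ} {F : Finset (Finset (Fin n))} {B : Finset (Fin n)}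
    {s t : Finset (Finset (Fin n))} (hs : s ⊆ bfD F B) (ht : t ⊆ bfU F B) :
    (insert B (s ∪ t)).filter (fun A => A ⊂ B) = s ∧
    (insert B (s ∪ t)).filter (fun A => B ⊂ A) = t := by
  have hs' : ∀ A ∈ s, A ⊂ B := fun A hA => (Finset.mem_filter.1 (hs hA)).2
  have ht' : ∀ A ∈ t, B ⊂ A := fun A hA => (Finset.mem_filter.1 (ht hA)).2
  constructor
  · ext A
    simp only [Finset.mem_filter, Finset.mem_insert, Finset.mem_union]
    constructor
    · rintro ⟨h | h | h, h2⟩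
      · subst h; exact absurd h2 (ssubset_irrefl _)
      · exact h
      · exact absurd (h2.trans (ht' A h)) (ssubset_irrefl _)
    · intro h; exact ⟨Or.inr (Or.inl h), hs' A h⟩
  · ext A
    simp only [Finset.mem_filter, Finset.mem_insert, Finset.mem_union]
    constructor
    · rintro ⟨h | h | h, h2⟩
      · subst h; exact absurd h2 (ssubset_irrefl _)
      · exact absurd (h2.trans (hs' A h)) (ssubset_irrefl _)
      · exact h
    · intro h; exact ⟨Or.inr (Or.inr h), ht' A h⟩

theorem bf_inj {n : ℕ} {F : Finset (Finset (Fin n))} {B : Finset (Fin n)}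
    {D' U' : Finset (Finset (Fin n))} (hD : D' ⊆ bfD F B) (hU : U' ⊆ bfU F B) :
    ((bfDom (bfD F B) D' (bfU F B) U').image (fun st => insert B (st.1 ∪ st.2))).card =
      (bfU F B).card * D'.card.choose 2 + (bfD F B).card * U'.card.choose 2 := by
  rw [Finset.card_image_of_injOn, bfDom_card]
  intro a ha b hb hab
  have ha' := bfDom_sub hD hU ha
  have hb' := bfDom_sub hD hU hb
  have e1 := bf_recover ha'.1 ha'.2
  have e2 := bf_recover hb'.1 hb'.2
  simp only at hab
  rw [hab] at e1
  exact Prod.ext (e1.1.symm.trans e2.1) (e1.2.symm.trans e2.2)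

theorem bfT_eq {n : ℕ} (F : Finset (Finset (Fin n))) (B : Finset (Fin n)) :
    bfT F B = (bfG F B).card + (bfH F B).card := by
  unfold bfT bfG bfH
  rw [bf_inj subset_rfl subset_rfl, bf_inj (bfD1_sub F B) (bfU1_sub F B)]
  ring

/-- facts about members of G -/
theorem bfG_facts {n : ℕ} {F : Finset (Finset (Fin n))} {B : Finset (Fin n)} (hB : B ∈ F)
    {S : Finset (Finset (Fin n))} (hS : S ∈ bfG F B) :
    S ⊆ F ∧ IsButterfly S ∧ B ∈ S ∧ S.card = 4 ∧ (∃ A ∈ S, A ⊂ B) ∧ (∃ C ∈ S, B ⊂ C) := by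
  unfold bfG at hS
  rw [Finset.mem_image] at hS
  obtain ⟨⟨s, t⟩, hst, rfl⟩ := hS
  have hsub := bfDom_sub subset_rfl subset_rfl hst
  simp only at hsub ⊢
  have hs' : ∀ A ∈ s, A ⊂ B := fun A hA => (Finset.mem_filter.1 (hsub.1 hA)).2
  have ht' : ∀ A ∈ t, B ⊂ A := fun A hA => (Finset.mem_filter.1 (hsub.2 hA)).2
  have hdisj : Disjoint s t := by
    rw [Finset.disjoint_left]
    intro A h1 h2
    exact ssubset_irrefl _ ((hs' A h1).trans (ht' A h2))
  have hBn : B ∉ s ∪ t := by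
    rw [Finset.mem_union]
    rintro (h | h)
    · exact ssubset_irrefl _ (hs' B h)
    · exact ssubset_irrefl _ (ht' B h)
  have hF : insert B (s ∪ t) ⊆ F := by
    intro A hA
    rw [Finset.mem_insert, Finset.mem_union] at hA
    rcases hA with h | h | h
    · subst h; exact hB
    · exact (Finset.mem_filter.1 (hsub.1 h)).1
    · exact (Finset.mem_filter.1 (hsub.2 h)).1
  have hcard : (insert B (s ∪ t)).card = s.card + t.card + 1 := by
    rw [Finset.card_insert_of_notMem hBn, Finset.card_union_of_disjoint hdisj]
  unfold bfDom at hst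
  simp only [Finset.mem_union, Finset.mem_product, Finset.mem_powersetCard] at hst
  refine ⟨hF, ?_, Finset.mem_insert_self _ _, ?_, ?_, ?_⟩
  · rcases hst with ⟨⟨_, h2⟩, _, h1⟩ | ⟨⟨_, h1⟩, _, h2⟩
    · obtain ⟨a, b, hab, rfl⟩ := Finset.card_eq_two.1 h2
      obtain ⟨c, rfl⟩ := Finset.card_eq_one.1 h1
      have ha := hs' a (by simp)
      have hb := hs' b (by simp)
      have hc := ht' c (by simp)
      refine ⟨a, b, B, c, ?_, hab, hc.ne, ha, ha.trans hc, hb, hb.trans hc⟩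
      ext x; simp only [Finset.mem_insert, Finset.mem_union, Finset.mem_singleton]; tauto
    · obtain ⟨a, b, hab, rfl⟩ := Finset.card_eq_two.1 h2
      obtain ⟨c, rfl⟩ := Finset.card_eq_one.1 h1
      have ha := ht' a (by simp)
      have hb := ht' b (by simp)
      have hc := hs' c (by simp)
      refine ⟨c, B, a, b, ?_, hc.ne, hab, hc.trans ha, hc.trans hb, ha, hb⟩
      ext x; simp only [Finset.mem_insert, Finset.mem_union, Finset.mem_singleton]; tauto
  · rw [hcard]; omega
  · have : s.Nonempty := by rw [← Finset.card_pos]; omega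
    obtain ⟨a, ha⟩ := this
    exact ⟨a, by simp [ha], hs' a ha⟩
  · have : t.Nonempty := by rw [← Finset.card_pos]; omega
    obtain ⟨a, ha⟩ := this
    exact ⟨a, by simp [ha], ht' a ha⟩

theorem bfH_sub_G {n : ℕ} (F : Finset (Finset (Fin n))) (B : Finset (Fin n)) :
    bfH F B ⊆ bfG F B := by
  unfold bfH bfG
  apply Finset.image_subset_image
  unfold bfDom
  apply Finset.union_subset_union
  · exact Finset.product_subset_product (Finset.powersetCard_mono (bfD1_sub F B)) subset_rfl
  · exact Finset.product_subset_product subset_rfl (Finset.powersetCard_mono (bfU1_sub F B))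

theorem bfH_unique {n : ℕ} {F : Finset (Finset (Fin n))} {B B' : Finset (Fin n)}
    (hB' : B' ∈ F) {S : Finset (Finset (Fin n))} (hS : S ∈ bfH F B) (hS' : S ∈ bfG F B') :
    B' = B := by
  obtain ⟨_, _, hm, _, ⟨A, hA, hAB⟩, ⟨C, hC, hBC⟩⟩ := bfG_facts hB' hS'
  clear hS'
  unfold bfH at hS
  rw [Finset.mem_image] at hS
  obtain ⟨⟨s, t⟩, hst, rfl⟩ := hS
  have hsub := bfDom_sub (bfD1_sub F B) (bfU1_sub F B) hst
  simp only at hsub hm hA hC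
  have hs' : ∀ A ∈ s, A ⊂ B := fun A hA => (Finset.mem_filter.1 (hsub.1 hA)).2
  have ht' : ∀ A ∈ t, B ⊂ A := fun A hA => (Finset.mem_filter.1 (hsub.2 hA)).2
  unfold bfDom at hst
  simp only [Finset.mem_union, Finset.mem_product, Finset.mem_powersetCard] at hst
  simp only [Finset.mem_insert, Finset.mem_union] at hm hA hC
  have key : (∀ x ∈ s, ∀ y ∈ s, ¬ x ⊂ y) ∧ (∀ x ∈ t, ∀ y ∈ t, ¬ x ⊂ y) := by
    rcases hst with ⟨⟨h3, _⟩, _, h1⟩ | ⟨⟨_, h1⟩, h3, _⟩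
    · obtain ⟨c, rfl⟩ := Finset.card_eq_one.1 h1
      constructor
      · intro x hx y hy hxy
        have a1 := (Finset.mem_filter.1 (h3 hx)).2.2
        have a2 := (Finset.mem_filter.1 (h3 hy)).2.2
        have := Finset.card_lt_card hxy
        omega
      · intro x hx y hy hxy
        simp only [Finset.mem_singleton] at hx hy
        rw [hx, hy] at hxy; exact ssubset_irrefl _ hxy
    · obtain ⟨c, rfl⟩ := Finset.card_eq_one.1 h1
      constructor
      · intro x hx y hy hxy
        simp only [Finset.mem_singleton] at hx hy
        rw [hx, hy] at hxy; exact ssubset_irrefl _ hxy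
      · intro x hx y hy hxy
        have a1 := (Finset.mem_filter.1 (h3 hx)).2.2
        have a2 := (Finset.mem_filter.1 (h3 hy)).2.2
        have := Finset.card_lt_card hxy
        omega
  rcases hm with h | h | h
  · exact h
  · exfalso
    rcases hA with a | a | a
    · rw [a] at hAB; exact ssubset_irrefl _ (hAB.trans (hs' _ h))
    · exact key.1 _ a _ h hAB
    · exact ssubset_irrefl _ ((hAB.trans (hs' _ h)).trans (ht' _ a))
  · exfalso
    rcases hC with a | a | a
    · rw [a] at hBC; exact ssubset_irrefl _ (hBC.trans (ht' _ h))
    · exact ssubset_irrefl _ ((hBC.trans (hs' _ a)).trans (ht' _ h))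
    · exact key.2 _ h _ a hBC

theorem bfG_two {n : ℕ} {F : Finset (Finset (Fin n))} (S : Finset (Finset (Fin n))) :
    (F.filter (fun B => S ∈ bfG F B)).card ≤ 2 := by
  by_cases hne : (F.filter (fun B => S ∈ bfG F B)).Nonempty
  swap
  · rw [Finset.not_nonempty_iff_eq_empty] at hne
    rw [hne]; simp
  obtain ⟨B0, hB0⟩ := hne
  rw [Finset.mem_filter] at hB0
  obtain ⟨_, _, hm, hc, ⟨A, hA, hAB⟩, _⟩ := bfG_facts hB0.1 hB0.2
  have hSne : S.Nonempty := ⟨B0, hm⟩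
  obtain ⟨A0, hA0, hmin⟩ := Finset.exists_min_image S Finset.card hSne
  obtain ⟨C0, hC0, hmax⟩ := Finset.exists_max_image S Finset.card hSne
  have hne : A0 ≠ C0 := by
    intro h
    have h1 := hmin A hA
    have h2 := hmax B0 hm
    have := Finset.card_lt_card hAB
    rw [h] at h1
    omega
  have hsub : F.filter (fun B => S ∈ bfG F B) ⊆ (S.erase A0).erase C0 := by
    intro B hB
    rw [Finset.mem_filter] at hB
    obtain ⟨_, _, hm, _, ⟨A, hA, hAB⟩, ⟨C, hC, hBC⟩⟩ := bfG_facts hB.1 hB.2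
    rw [Finset.mem_erase, Finset.mem_erase]
    refine ⟨?_, ?_, hm⟩
    · rintro rfl
      have := hmax C hC
      have := Finset.card_lt_card hBC
      omega
    · rintro rfl
      have := hmin A hA
      have := Finset.card_lt_card hAB
      omega
  have := Finset.card_le_card hsub
  rw [Finset.card_erase_of_mem (by rw [Finset.mem_erase]; exact ⟨hne.symm, hC0⟩),
    Finset.card_erase_of_mem hA0, hc] at this
  exact this

open Classical in
theorem bfT_sum {n : ℕ} (F : Finset (Finset (Fin n))) :
    ∑ B ∈ F, bfT F B ≤ 2 * numButterflies F := by
  set Bt := F.powerset.filter (fun S => IsButterfly S) with hBt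
  have hG : ∀ B ∈ F, bfG F B = Bt.filter (fun S => S ∈ bfG F B) := by
    intro B hB
    ext S
    simp only [hBt, Finset.mem_filter, Finset.mem_powerset]
    constructor
    · intro h
      have := bfG_facts hB h
      exact ⟨⟨this.1, this.2.1⟩, h⟩
    · exact fun h => h.2
  have hH : ∀ B ∈ F, bfH F B = Bt.filter (fun S => S ∈ bfH F B) := by
    intro B hB
    ext S
    simp only [hBt, Finset.mem_filter, Finset.mem_powerset]
    constructor
    · intro h
      have := bfG_facts hB (bfH_sub_G F B h)
      exact ⟨⟨this.1, this.2.1⟩, h⟩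
    · exact fun h => h.2
  have e1 : ∑ B ∈ F, (bfG F B).card = ∑ S ∈ Bt, (F.filter (fun B => S ∈ bfG F B)).card := by
    rw [Finset.sum_congr rfl (fun B hB => congrArg Finset.card (hG B hB))]
    simp only [Finset.card_filter]
    exact Finset.sum_comm
  have e2 : ∑ B ∈ F, (bfH F B).card = ∑ S ∈ Bt, (F.filter (fun B => S ∈ bfH F B)).card := by
    rw [Finset.sum_congr rfl (fun B hB => congrArg Finset.card (hH B hB))]
    simp only [Finset.card_filter]
    exact Finset.sum_comm
  have e3 : ∀ S ∈ Bt, (F.filter (fun B => S ∈ bfG F B)).card +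
      (F.filter (fun B => S ∈ bfH F B)).card ≤ 2 := by
    intro S _
    by_cases hne : (F.filter (fun B => S ∈ bfH F B)).Nonempty
    · obtain ⟨B, hB⟩ := hne
      rw [Finset.mem_filter] at hB
      have s1 : F.filter (fun B => S ∈ bfG F B) ⊆ {B} := by
        intro B' hB'
        rw [Finset.mem_filter] at hB'
        rw [Finset.mem_singleton]
        exact bfH_unique hB'.1 hB.2 hB'.2
      have s2 : F.filter (fun B => S ∈ bfH F B) ⊆ {B} := by
        intro B' hB'
        rw [Finset.mem_filter] at hB'
        rw [Finset.mem_singleton]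
        exact bfH_unique hB'.1 hB.2 (bfH_sub_G F B' hB'.2)
      have c1 := Finset.card_le_card s1
      have c2 := Finset.card_le_card s2
      simp only [Finset.card_singleton] at c1 c2
      omega
    · rw [Finset.not_nonempty_iff_eq_empty] at hne
      rw [hne]
      have := bfG_two (F := F) S
      simpa using this
  calc ∑ B ∈ F, bfT F B = ∑ B ∈ F, ((bfG F B).card + (bfH F B).card) :=
        Finset.sum_congr rfl (fun B _ => bfT_eq F B)
    _ = ∑ S ∈ Bt, ((F.filter (fun B => S ∈ bfG F B)).card +
          (F.filter (fun B => S ∈ bfH F B)).card) := by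
        rw [Finset.sum_add_distrib, e1, e2, Finset.sum_add_distrib]
    _ ≤ ∑ S ∈ Bt, 2 := Finset.sum_le_sum e3
    _ = 2 * numButterflies F := by
        rw [Finset.sum_const, smul_eq_mul, mul_comm]; rfl

def bfC {n : ℕ} (F : Finset (Finset (Fin n))) : Finset (Finset (Fin n)) := F.image (fun A => Aᶜ)

theorem mem_bfC {n : ℕ} (F : Finset (Finset (Fin n))) (A : Finset (Fin n)) :
    A ∈ bfC F ↔ Aᶜ ∈ F := by
  unfold bfC
  rw [Finset.mem_image]
  constructor
  · rintro ⟨B, hB, rfl⟩; simpa using hB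
  · intro h; exact ⟨Aᶜ, h, by simp⟩

theorem bfC_bfC {n : ℕ} (F : Finset (Finset (Fin n))) : bfC (bfC F) = F := by
  ext A; simp [mem_bfC]

theorem bfC_card {n : ℕ} (F : Finset (Finset (Fin n))) : (bfC F).card = F.card := by
  unfold bfC
  exact Finset.card_image_of_injective _ compl_injective

theorem bfC_sum {n : ℕ} {M : Type*} [AddCommMonoid M] (F : Finset (Finset (Fin n)))
    (g : Finset (Fin n) → M) :
    ∑ B ∈ bfC F, g B = ∑ B ∈ F, g Bᶜ := by
  unfold bfC
  exact Finset.sum_image (fun a _ b _ h => compl_injective h)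

theorem bf_compl_ssub {n : ℕ} (A B : Finset (Fin n)) : Aᶜ ⊂ Bᶜ ↔ B ⊂ A := by
  rw [← Finset.lt_iff_ssubset, ← Finset.lt_iff_ssubset, compl_lt_compl_iff_lt]

theorem bf_card_compl {n : ℕ} (A : Finset (Fin n)) : Aᶜ.card + A.card = n := by
  have h := Finset.card_compl_add_card A
  simpa using h

theorem bfD_C {n : ℕ} (F : Finset (Finset (Fin n))) (B : Finset (Fin n)) :
    bfD (bfC F) Bᶜ = bfC (bfU F B) := by
  ext A
  have := bf_compl_ssub Aᶜ B
  simp only [bfD, bfU, Finset.mem_filter, mem_bfC, ← this, compl_compl]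

theorem bfD1_C {n : ℕ} (F : Finset (Finset (Fin n))) (B : Finset (Fin n)) :
    bfD1 (bfC F) Bᶜ = bfC (bfU1 F B) := by
  ext A
  have := bf_compl_ssub Aᶜ B
  have h1 := bf_card_compl A
  have h2 := bf_card_compl B
  simp only [bfD1, bfU1, Finset.mem_filter, mem_bfC, ← this, compl_compl]
  have : A.card + 1 = Bᶜ.card ↔ B.card + 1 = Aᶜ.card := by omega
  rw [this]

theorem bfU_C {n : ℕ} (F : Finset (Finset (Fin n))) (B : Finset (Fin n)) :
    bfU (bfC F) Bᶜ = bfC (bfD F B) := by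
  have h := bfD_C (bfC F) Bᶜ
  rw [bfC_bfC, compl_compl] at h
  rw [h, bfC_bfC]

theorem bfU1_C {n : ℕ} (F : Finset (Finset (Fin n))) (B : Finset (Fin n)) :
    bfU1 (bfC F) Bᶜ = bfC (bfD1 F B) := by
  have h := bfD1_C (bfC F) Bᶜ
  rw [bfC_bfC, compl_compl] at h
  rw [h, bfC_bfC]

theorem bfT_C {n : ℕ} (F : Finset (Finset (Fin n))) (B : Finset (Fin n)) :
    bfT (bfC F) Bᶜ = bfT F B := by
  unfold bfT
  rw [bfD_C, bfD1_C, bfU_C, bfU1_C]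
  simp only [bfC_card]
  ring

noncomputable def bfQ {n : ℕ} (F : Finset (Finset (Fin n))) (B : Finset (Fin n)) : ℝ :=
  bfP (bfC F) Bᶜ

theorem bfQ_C {n : ℕ} (F : Finset (Finset (Fin n))) (B : Finset (Fin n)) :
    bfQ (bfC F) Bᶜ = bfP F B := by
  unfold bfQ; rw [bfC_bfC, compl_compl]

theorem bfQ_nonneg {n : ℕ} (F : Finset (Finset (Fin n))) (B : Finset (Fin n)) : 0 ≤ bfQ F B :=
  bfP_nonneg _ _
theorem bfQ_le_one {n : ℕ} (F : Finset (Finset (Fin n))) (B : Finset (Fin n)) : bfQ F B ≤ 1 :=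
  bfP_le_one _ _

theorem bfQ_lym {n : ℕ} (F : Finset (Finset (Fin n))) :
    ∑ B ∈ F, (1 - bfQ F B)/(n.choose B.card:ℝ) ≤ 1 := by
  have h := bfP_lym (bfC F)
  rw [bfC_sum] at h
  refine le_trans (le_of_eq ?_) h
  refine Finset.sum_congr rfl fun B _ => ?_
  have h1 := bf_card_compl B
  unfold bfQ
  rw [← Nat.choose_symm (show B.card ≤ n by omega)]
  congr 4
  omega

/-- members at levels `≤ 1` and `≥ n-1` are excluded -/
def bfMid {n : ℕ} (F : Finset (Finset (Fin n))) : Prop := ∀ B ∈ F, 2 ≤ B.card ∧ B.card + 2 ≤ n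

theorem bfMid_C {n : ℕ} {F : Finset (Finset (Fin n))} (h : bfMid F) : bfMid (bfC F) := by
  intro B hB
  have := h _ ((mem_bfC F B).1 hB)
  have h1 := bf_card_compl B
  omega

theorem bf_choose_mono (n i a : ℕ) (h1 : i ≤ a) (h2 : a ≤ n / 2) : n.choose i ≤ n.choose a := by
  induction a, h1 using Nat.le_induction with
  | base => exact le_rfl
  | succ k hk ih => exact (ih (by omega)).trans (Nat.choose_le_succ_of_lt_half_left (by omega))

theorem bf_choose_unimodal (n i a : ℕ) (h1 : i ≤ a) (h2 : a + i ≤ n) :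
    n.choose i ≤ n.choose a := by
  by_cases h : a ≤ n / 2
  · exact bf_choose_mono n i a h1 h
  · rw [← Nat.choose_symm (show a ≤ n by omega)]
    exact bf_choose_mono n i (n - a) (by omega) (by omega)

theorem bfP_local {n : ℕ} {F : Finset (Finset (Fin n))} (hF : bfMid F) (B : Finset (Fin n)) :
    bfP F B ≤ ((bfD1 F B).card:ℝ)/(B.card:ℝ) +
      (((bfD F B).card:ℝ) - (bfD1 F B).card)/(B.card.choose 2:ℝ) := by
  have h := bfP_le_sum F B
  change bfP F B ≤ ∑ A ∈ bfD F B, _ at h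
  rw [← Finset.sum_sdiff (bfD1_sub F B)] at h
  have hc := Finset.card_sdiff_add_card_eq_card (bfD1_sub F B)
  have h1 : ∑ A ∈ bfD1 F B, 1/(B.card.choose A.card:ℝ) ≤ ((bfD1 F B).card:ℝ)/(B.card:ℝ) := by
    rw [div_eq_mul_one_div, ← nsmul_eq_mul]
    refine Finset.sum_le_card_nsmul _ _ _ fun A hA => ?_
    simp only [bfD1, Finset.mem_filter] at hA
    rw [← hA.2.2, Nat.choose_succ_self_right, hA.2.2]
  have h2 : ∑ A ∈ bfD F B \ bfD1 F B, 1/(B.card.choose A.card:ℝ) ≤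
      ((bfD F B \ bfD1 F B).card:ℝ)/(B.card.choose 2:ℝ) := by
    rw [div_eq_mul_one_div, ← nsmul_eq_mul]
    refine Finset.sum_le_card_nsmul _ _ _ fun A hA => ?_
    simp only [bfD, bfD1, Finset.mem_filter, Finset.mem_sdiff] at hA
    have h3 := Finset.card_lt_card hA.1.2
    have h4 := (hF A hA.1.1).1
    have h5 : A.card + 1 ≠ B.card := fun h => hA.2 ⟨hA.1.1, hA.1.2, h⟩
    have h6 := bf_choose_unimodal B.card 2 A.card h4 (by omega)
    have h7 : 0 < B.card.choose 2 := Nat.choose_pos (by omega)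
    apply one_div_le_one_div_of_le
    · exact_mod_cast h7
    · exact_mod_cast h6
  have : ((bfD F B \ bfD1 F B).card:ℝ) = ((bfD F B).card:ℝ) - (bfD1 F B).card := by
    rw [← hc]; push_cast; ring
  rw [this] at h2
  linarith

theorem bfQ_local {n : ℕ} {F : Finset (Finset (Fin n))} (hF : bfMid F) (B : Finset (Fin n)) :
    bfQ F B ≤ ((bfU1 F B).card:ℝ)/(Bᶜ.card:ℝ) +
      (((bfU F B).card:ℝ) - (bfU1 F B).card)/(Bᶜ.card.choose 2:ℝ) := by
  have h := bfP_local (bfMid_C hF) Bᶜ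
  rw [bfD_C, bfD1_C, bfC_card, bfC_card] at h
  exact h

theorem bf_hnn (D : ℕ) : (0:ℝ) ≤ (D:ℝ)*((D:ℝ)-1) := by
  rcases Nat.eq_zero_or_pos D with h | h
  · subst h; simp
  · have : (1:ℝ) ≤ D := by exact_mod_cast h
    exact mul_nonneg (by linarith) (by linarith)

/-- half-sum of the two pair counts -/
noncomputable def bfh (D D1 : ℕ) : ℝ := ((D:ℝ)*((D:ℝ)-1) + (D1:ℝ)*((D1:ℝ)-1))/2

theorem bfh_nonneg (D D1 : ℕ) : 0 ≤ bfh D D1 := by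
  unfold bfh
  have := bf_hnn D
  have := bf_hnn D1
  linarith

theorem bfh_ge (D D1 : ℕ) (h : D1 ≤ D) (x : ℝ) (hx : x ≤ ((D:ℝ)+D1)/2) :
    x ≤ D ∧ (0 ≤ x → x*(x-1) ≤ bfh D D1) := by
  have h' : (D1:ℝ) ≤ D := by exact_mod_cast h
  refine ⟨by linarith, fun h0 => ?_⟩
  by_cases h1 : x ≤ 1
  · have := bfh_nonneg D D1
    nlinarith
  · push Not at h1
    unfold bfh
    nlinarith [sq_nonneg ((D:ℝ)-D1), mul_nonneg (sub_nonneg.2 hx) (by linarith : (0:ℝ) ≤ ((D:ℝ)+D1)/2 + x - 1)]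

noncomputable def bftau (D D1 U U1 : ℕ) : ℝ := (U:ℝ) * bfh D D1 + (D:ℝ) * bfh U U1

theorem bftau_nonneg (D D1 U U1 : ℕ) : 0 ≤ bftau D D1 U U1 := by
  unfold bftau
  have := bfh_nonneg D D1
  have := bfh_nonneg U U1
  positivity

theorem bfT_tau {n : ℕ} (F : Finset (Finset (Fin n))) (B : Finset (Fin n)) :
    (bfT F B : ℝ) = bftau (bfD F B).card (bfD1 F B).card (bfU F B).card (bfU1 F B).card := by
  unfold bfT bftau bfh
  push_cast [Nat.cast_choose_two]
  ring

theorem bftau_ge (D D1 U U1 : ℕ) (x y : ℝ) (hx : 0 ≤ x) (hy : 0 ≤ y) (h1 : x ≤ D)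
    (h2 : x*(x-1) ≤ bfh D D1) (h3 : y ≤ U) (h4 : y*(y-1) ≤ bfh U U1) :
    x*y*(x+y-2) ≤ bftau D D1 U U1 := by
  unfold bftau
  have a1 := mul_le_mul_of_nonneg_right h3 (bfh_nonneg D D1)
  have a2 := mul_le_mul_of_nonneg_right h1 (bfh_nonneg U U1)
  have a3 := mul_le_mul_of_nonneg_left h2 hy
  have a4 := mul_le_mul_of_nonneg_left h4 hx
  nlinarith

/-- local inequality between the hitting probability and degrees -/
def bfLoc (p d : ℝ) (D D1 : ℕ) : Prop :=
  0 ≤ p ∧ p ≤ 1 ∧ D1 ≤ D ∧ p * d ≤ D1 + 2/(d-1)*((D:ℝ)-D1)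

theorem bfLoc_half {p d : ℝ} {D D1 : ℕ} (h : bfLoc p d D D1) (hd : 5 ≤ d) :
    p*d ≤ ((D:ℝ)+D1)/2 := by
  obtain ⟨h0, h1, h2, h3⟩ := h
  have h2' : (D1:ℝ) ≤ D := by exact_mod_cast h2
  have : 2/(d-1) ≤ 1/2 := by
    rw [div_le_div_iff₀ (by linarith) (by norm_num)]; linarith
  nlinarith

theorem bfLoc_pos {p d : ℝ} {D D1 : ℕ} (h : bfLoc p d D D1) (hd : 5 ≤ d) (hp : 0 < p) :
    (1:ℝ) ≤ D := by
  have h1 := bfLoc_half h hd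
  obtain ⟨_, _, h2, _⟩ := h
  have : 0 < D := by
    by_contra hD
    have e1 : D = 0 := by omega
    have e2 : D1 = 0 := by omega
    rw [e1, e2] at h1
    norm_num at h1
    nlinarith
  exact_mod_cast this

theorem bf_basic {p q d u : ℝ} {D D1 U U1 : ℕ} (hp : bfLoc p d D D1) (hq : bfLoc q u U U1)
    (hd : 5 ≤ d) (hu : 5 ≤ u) :
    d*u*(p*q)*(p*d+q*u-2) ≤ bftau D D1 U U1 := by
  have a1 := bfh_ge D D1 hp.2.2.1 _ (bfLoc_half hp hd)
  have a2 := bfh_ge U U1 hq.2.2.1 _ (bfLoc_half hq hu)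
  have p0 := hp.1
  have q0 := hq.1
  have := bftau_ge D D1 U U1 (p*d) (q*u) (by positivity) (by positivity) a1.1
    (a1.2 (by positivity)) a2.1 (a2.2 (by positivity))
  nlinarith

/-- consequence used in several places -/
theorem bf_delta {p q d u : ℝ} {D D1 U U1 : ℕ} (hp : bfLoc p d D D1) (hq : bfLoc q u U U1)
    (hd : 5 ≤ d) (hdu : d ≤ u) (hδ : 0 ≤ p + q - 1) :
    d*u*(p+q-1)*(d*(1+(p+q-1))-2) ≤ bftau D D1 U U1 := by
  refine le_trans ?_ (bf_basic hp hq hd (by linarith))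
  obtain ⟨p0, p1, _⟩ := hp
  obtain ⟨q0, q1, _⟩ := hq
  have h1 : p + q - 1 ≤ p*q := by nlinarith
  have h2 : d*(1+(p+q-1))-2 ≤ p*d+q*u-2 := by nlinarith
  have h3 : 0 ≤ d*(1+(p+q-1))-2 := by nlinarith
  have h4 : 0 ≤ d*u := by nlinarith
  apply mul_le_mul (mul_le_mul_of_nonneg_left h1 h4) h2 h3
  positivity

theorem bf_levelm {p q m : ℝ} {D D1 U U1 : ℕ} (hp : bfLoc p m D D1) (hq : bfLoc q m U U1)
    (hm : 5 ≤ m) : m^2*(m-1)*(p+q-1) ≤ bftau D D1 U U1 := by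
  have t0 := bftau_nonneg D D1 U U1
  by_cases hδ : p + q - 1 ≤ 0
  · have : 0 ≤ m^2*(m-1) := by
      apply mul_nonneg (by positivity) (by linarith)
    nlinarith
  push Not at hδ
  obtain ⟨X, hX1, hXm, hXp, hXD, hXh⟩ : ∃ X : ℝ, 1 ≤ X ∧ X ≤ m ∧ p*m ≤ X ∧ X ≤ D ∧
      X*(X-1) ≤ bfh D D1 := by
    have hpos : 0 < p := by linarith [hq.2.1]
    by_cases h : p*m ≤ 1
    · exact ⟨1, le_rfl, by linarith, h, bfLoc_pos hp hm hpos, by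
        have := bfh_nonneg D D1; linarith⟩
    · have a1 := bfh_ge D D1 hp.2.2.1 _ (bfLoc_half hp hm)
      have := hp.2.1
      exact ⟨p*m, by linarith, by nlinarith, le_rfl, a1.1, a1.2 (by linarith)⟩
  obtain ⟨Y, hY1, hYm, hYp, hYD, hYh⟩ : ∃ X : ℝ, 1 ≤ X ∧ X ≤ m ∧ q*m ≤ X ∧ X ≤ U ∧
      X*(X-1) ≤ bfh U U1 := by
    have hpos : 0 < q := by linarith [hp.2.1]
    by_cases h : q*m ≤ 1
    · exact ⟨1, le_rfl, by linarith, h, bfLoc_pos hq hm hpos, by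
        have := bfh_nonneg U U1; linarith⟩
    · have a1 := bfh_ge U U1 hq.2.2.1 _ (bfLoc_half hq hm)
      have := hq.2.1
      exact ⟨q*m, by linarith, by nlinarith, le_rfl, a1.1, a1.2 (by linarith)⟩
  have key := bftau_ge D D1 U U1 X Y (by linarith) (by linarith) hXD hXh hYD hYh
  refine le_trans ?_ key
  have h1 : m^2*(m-1)*(p+q-1) ≤ m*(m-1)*(X+Y-m) := by
    have : m*(p+q-1) ≤ X+Y-m := by linarith
    nlinarith [mul_le_mul_of_nonneg_left this (mul_nonneg (by linarith : 0 ≤ m) (by linarith : 0 ≤ m-1))]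
  refine h1.trans ?_
  have hs : 0 < X + Y - m := by nlinarith
  by_cases hs1 : m + 1 ≤ X + Y
  · have e1 : m*(X+Y-m) ≤ X*Y := by nlinarith
    have e2 : m - 1 ≤ X+Y-2 := by linarith
    have := mul_le_mul e1 e2 (by linarith) (by nlinarith)
    nlinarith
  · push Not at hs1
    have e1 : X+Y-1 ≤ X*Y := by nlinarith
    have e2 : (X+Y-1)*(X+Y-2) ≤ X*Y*(X+Y-2) := mul_le_mul_of_nonneg_right e1 (by linarith)
    refine le_trans ?_ e2
    -- s = m + t, 0<t<1
    set t := X+Y-m with ht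
    have : X+Y = m+t := by rw [ht]; ring
    rw [this]
    have e4 : 0 ≤ (m-1)*(m-2)-t := by nlinarith
    have e5 := mul_nonneg (by linarith : (0:ℝ) ≤ 1-t) e4
    linarith [show (m + t - 1) * (m + t - 2) - m * (m - 1) * t = (1-t)*((m-1)*(m-2)-t) by ring]

theorem bf_quart {d D : ℝ} (hd : 100000 ≤ d) (hD2 : d^2/40 ≤ D) :
    (2*d)*d*(2*d) ≤ D*(D-1)/2 := by
  have h0 : 2500*d ≤ d^2/40 := by nlinarith
  have h1 : d^2/80 ≤ D - 1 := by nlinarith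
  have h2 : (d^2/40)*(d^2/80) ≤ D*(D-1) := by
    apply mul_le_mul hD2 h1 (by positivity) (by linarith)
  have h3 : d^2*(8*d) ≤ d^2*(d^2/3200) := by
    apply mul_le_mul_of_nonneg_left _ (by positivity)
    nlinarith
  linarith

set_option maxHeartbeats 2000000 in
theorem bf_special {p q d u ν γ : ℝ} {D D1 U U1 : ℕ} (hp : bfLoc p d D D1) (hq : bfLoc q u U U1)
    (hd : 100000 ≤ d) (hdu : d ≤ u) (hud : u ≤ d + 3) (hν : 0 ≤ ν) (hν5 : ν ≤ 5)
    (hγ0 : 0 ≤ γ) (hγ1 : (ν-1)*u ≤ 2*γ) (hγ2 : (u-d+ν)^2*u ≤ 32*γ) :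
    (u+ν-2)*d*u*(p+q-1) ≤ bftau D D1 U U1 + 2*γ*D1 := by
  have t0 := bftau_nonneg D D1 U U1
  have g0 : 0 ≤ 2*γ*D1 := by positivity
  have c0 : 0 ≤ u+ν-2 := by linarith
  have cdu0 : 0 ≤ (u+ν-2)*d*u := by
    apply mul_nonneg (mul_nonneg c0 (by linarith)) (by linarith)
  by_cases hδ : p + q - 1 ≤ 0
  · nlinarith
  push Not at hδ
  have p0 : 0 < p := by linarith [hq.2.1]
  have q0 : 0 < q := by linarith [hp.2.1]
  by_cases hD4 : 4 ≤ D1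
  · have h4 : (4:ℝ) ≤ D1 := by exact_mod_cast hD4
    have h := bf_delta hp hq (by linarith) hdu hδ.le
    have g8 : 8*γ ≤ 2*γ*D1 := by nlinarith
    have : (u+ν-2)*d*u*(p+q-1) ≤ d*u*(p+q-1)*(d*(1+(p+q-1))-2) + (u-d+ν)^2*u/4 := by
      have := mul_nonneg (by linarith : 0 ≤ u) (sq_nonneg ((u-d+ν)/2 - d*(p+q-1)))
      nlinarith
    linarith
  have hD3 : D1 ≤ 3 := by omega
  have hD3' : (D1:ℝ) ≤ 3 := by exact_mod_cast hD3
  have hy := bfh_ge U U1 hq.2.2.1 _ (bfLoc_half hq (by linarith))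
  have hy2 := hy.2 (by nlinarith)
  by_cases hDD : D = D1
  · -- case (i)
    subst hDD
    obtain ⟨_, p1, _, hpd⟩ := hp
    have hpd' : p*d ≤ D := by simpa using hpd
    have hD0 : (0:ℝ) ≤ D := by positivity
    have hD1 : (1:ℝ) ≤ D := by
      have : 0 < D := by
        by_contra h
        have : D = 0 := by omega
        rw [this] at hpd'
        norm_num at hpd'
        nlinarith
      exact_mod_cast this
    have ht : (D:ℝ)*(q*u)*(q*u+D-2) ≤ bftau D D U U1 := by
      have : bfh D D = (D:ℝ)*((D:ℝ)-1) := by unfold bfh; ring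
      have := bftau_ge D D U U1 D (q*u) hD0 (by nlinarith) le_rfl (by rw [this]) hy.1 hy2
      linarith
    set k : ℝ := (D:ℝ) with hk
    have e0 : 0 ≤ 1 - q := by linarith [hq.2.1]
    set e := 1 - q with he
    have hqe : q = 1 - e := by rw [he]; ring
    have s1 : (u+ν-2)*d*u*(p+q-1) ≤ (u+ν-2)*u*(k-d*e) := by
      have : d*(p+q-1) ≤ k - d*e := by rw [hqe]; linarith
      have := mul_le_mul_of_nonneg_left this (mul_nonneg c0 (by linarith : 0 ≤ u))
      linarith
    refine s1.trans (le_trans ?_ (add_le_add_left ht _))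
    rw [hqe]
    have r1 : 0 ≤ k*(u*(k-ν)+2*γ) := by
      apply mul_nonneg hD0
      nlinarith
    have r2 : k*(2*u+k-2) ≤ (u+ν-2)*d := by
      have : k*(2*u+k-2) ≤ 3*(2*u+1) := by nlinarith
      nlinarith
    have r3 : 0 ≤ e*u*((u+ν-2)*d - k*(2*u+k-2)) := by
      apply mul_nonneg (mul_nonneg e0 (by linarith)) (by linarith)
    have r4 : 0 ≤ k*u*(u*e^2) := by
      have : 0 ≤ u := by linarith
      positivity
    nlinarith
  · -- case (ii)
    have hDlt : D1 + 1 ≤ D := by have := hp.2.2.1; omega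
    have hDlt' : (D1:ℝ) + 1 ≤ D := by exact_mod_cast hDlt
    have hU1 := bfLoc_pos hq (by linarith) q0
    obtain ⟨_, p1, _, hpd⟩ := hp
    have q1 := hq.2.1
    by_cases hp10 : p ≤ 1/10
    · have hε : 2/(d-1) ≤ 1/100 := by
        rw [div_le_div_iff₀ (by linarith) (by norm_num)]; linarith
      have hD13 : 1.3*(p*d) ≤ D := by
        have : 2/(d-1)*((D:ℝ)-D1) ≤ 1/100*((D:ℝ)-D1) :=
          mul_le_mul_of_nonneg_right hε (by linarith)
        linarith
      have hq9 : 9/10 ≤ q := by linarith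
      have ht : (D:ℝ)*((q*u)*(q*u-1)) ≤ bftau D D1 U U1 := by
        unfold bftau
        have := bfh_nonneg D D1
        have h1 : 0 ≤ (U:ℝ)*bfh D D1 := by positivity
        have h2 := mul_le_mul_of_nonneg_left hy2 (by positivity : (0:ℝ) ≤ D)
        linarith
      have hqu0 : 9/10*u ≤ q*u := mul_le_mul_of_nonneg_right hq9 (by linarith)
      have hqu1 : u+ν-2 ≤ 1.3*(q*u-1) := by linarith
      have hpq : p+q-1 ≤ p*q := by nlinarith
      have s1 : (u+ν-2)*d*u*(p+q-1) ≤ (u+ν-2)*d*u*(p*q) := mul_le_mul_of_nonneg_left hpq cdu0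
      have s2 : (u+ν-2)*(p*d*(q*u)) ≤ (1.3*(q*u-1))*(p*d*(q*u)) := by
        apply mul_le_mul_of_nonneg_right hqu1
        have : 0 ≤ d := by linarith
        have : 0 ≤ u := by linarith
        positivity
      have s3 : 1.3*(p*d)*((q*u)*(q*u-1)) ≤ (D:ℝ)*((q*u)*(q*u-1)) := by
        apply mul_le_mul_of_nonneg_right hD13
        apply mul_nonneg <;> linarith
      linarith
    · push Not at hp10
      have hD2 : d^2/40 ≤ D := by
        have h0 : 1/10*d ≤ p*d := mul_le_mul_of_nonneg_right hp10.le (by linarith)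
        have h1 : d/10 - 3 ≤ 2/(d-1)*((D:ℝ)-D1) := by linarith
        have h2 : 2/(d-1)*((D:ℝ)-D1) = 2*((D:ℝ)-D1)/(d-1) := by ring
        rw [h2, le_div_iff₀ (by linarith)] at h1
        have : (0:ℝ) ≤ D1 := by positivity
        nlinarith
      have ht : (D:ℝ)*((D:ℝ)-1)/2 ≤ bftau D D1 U U1 := by
        unfold bftau
        have h1 : (D:ℝ)*((D:ℝ)-1)/2 ≤ bfh D D1 := by
          unfold bfh
          have := bf_hnn D1
          linarith
        have := mul_le_mul_of_nonneg_right hU1 (bfh_nonneg D D1)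
        have := bfh_nonneg U U1
        have : 0 ≤ (D:ℝ)*bfh U U1 := by positivity
        linarith
      have s1 : (u+ν-2)*d*u*(p+q-1) ≤ (u+ν-2)*d*u := by
        apply mul_le_of_le_one_right cdu0; linarith
      have s2 : (u+ν-2)*d*u ≤ (2*d)*d*(2*d) := by
        have : 0 ≤ d := by linarith
        have : 0 ≤ u := by linarith
        gcongr <;> linarith
      have s3 := bf_quart hd hD2
      linarith

theorem bf_far {p q d u w f σ gv η m j : ℝ} {D D1 U U1 : ℕ} (hp : bfLoc p d D D1)
    (hq : bfLoc q u U U1) (hd : 5 ≤ d) (hdu : d ≤ u) (hf : 0 ≤ f)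
    (hm : 1280 ≤ m) (hj : 1 ≤ j) (hjm : 304*j ≤ m) (hσ : σ = j*(j+1)/m)
    (hw : 1 + σ ≤ w) (hη : η = 19*j/m) (hgv1 : gv ≤ 3/4*σ) (hgv2 : gv ≤ 10/m)
    (ha : (2*f)*(1 - 8*j/m) ≤ d*u*d) (hb : 2*(d*u) ≤ 2/m*(2*f)) :
    f*(1 - w*(2-p-q)) + gv*f ≤ bftau D D1 U U1 / 2 := by
  have t0 := bftau_nonneg D D1 U U1
  have hm0 : 0 < m := by linarith
  have σ0 : 0 ≤ σ := by rw [hσ]; positivity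
  obtain ⟨δ, hδ⟩ : ∃ δ, δ = p+q-1 := ⟨_, rfl⟩
  have δ1 : δ ≤ 1 := by linarith [hp.2.1, hq.2.1]
  have hg : 1 - w*(2-p-q) ≤ δ - σ*(1-δ) := by
    have : 2-p-q = 1-δ := by rw [hδ]; ring
    rw [this]
    nlinarith
  have hfg := mul_le_mul_of_nonneg_left hg hf
  by_cases h0 : δ ≤ 0
  · have : f*(δ - σ*(1-δ) + gv) ≤ 0 := by
      apply mul_nonpos_of_nonneg_of_nonpos hf
      nlinarith
    nlinarith
  push Not at h0
  have ht := bf_delta hp hq hd hdu (by rw [← hδ]; exact h0.le)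
  rw [← hδ] at ht
  have hk : f*(δ*(1+δ-η)) ≤ bftau D D1 U U1 / 2 := by
    have e1 : d*u*(d*(1+δ)-2) ≥ (2*f)*(1+δ-η) := by
      have h1 := mul_le_mul_of_nonneg_right ha (by linarith : 0 ≤ 1+δ)
      have h2 : (2*f)*(1+δ-η) ≤ (2*f)*(1-8*j/m)*(1+δ) - 2/m*(2*f) := by
        have : 1+δ-η ≤ (1-8*j/m)*(1+δ) - 2/m := by
          rw [hη]
          have h3 : 19*j/m = 19*(j/m) := by ring
          have h4 : 8*j/m = 8*(j/m) := by ring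
          have h5 : 2/m ≤ 2*(j/m) := by
            rw [← mul_div_assoc]; gcongr; linarith
          have h6 : 0 ≤ j/m := by positivity
          rw [h3, h4]
          nlinarith
        have := mul_le_mul_of_nonneg_left this (by linarith : 0 ≤ 2*f)
        linarith
      nlinarith
    have := mul_le_mul_of_nonneg_left e1 h0.le
    nlinarith
  refine le_trans ?_ hk
  suffices h : δ - σ*(1-δ) + gv ≤ δ*(1+δ-η) by
    have := mul_le_mul_of_nonneg_left h hf
    linarith
  have hη0 : η ≤ 1/16 := by
    rw [hη, div_le_div_iff₀ hm0 (by norm_num)]; linarith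
  by_cases h8 : δ ≤ 1/8
  · have : η^2/4 ≤ σ/8 := by
      rw [hη, hσ, div_pow, div_div, div_div, div_le_div_iff₀ (by positivity) (by positivity)]
      have : (19*j)^2*8 ≤ (j*(j+1))*(m*4) := by nlinarith
      have := mul_le_mul_of_nonneg_right this hm0.le
      nlinarith
    nlinarith [sq_nonneg (δ - η/2)]
  · push Not at h8
    have : 10/m ≤ 1/128 := by
      rw [div_le_div_iff₀ hm0 (by norm_num)]; linarith
    nlinarith [mul_nonneg σ0 (by linarith : 0 ≤ 1-δ)]

theorem bfLoc_P {n : ℕ} {F : Finset (Finset (Fin n))} (hF : bfMid F) (B : Finset (Fin n))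
    (hB : 2 ≤ B.card) :
    bfLoc (bfP F B) (B.card:ℝ) (bfD F B).card (bfD1 F B).card := by
  refine ⟨bfP_nonneg _ _, bfP_le_one _ _, Finset.card_le_card (bfD1_sub F B), ?_⟩
  have h := bfP_local hF B
  have hB' : (2:ℝ) ≤ B.card := by exact_mod_cast hB
  have h1 := mul_le_mul_of_nonneg_right h (by linarith : (0:ℝ) ≤ B.card)
  refine h1.trans (le_of_eq ?_)
  rw [Nat.cast_choose_two]
  have : (B.card:ℝ) - 1 ≠ 0 := by linarith
  have : (B.card:ℝ) ≠ 0 := by linarith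
  field_simp

theorem bfLoc_Q {n : ℕ} {F : Finset (Finset (Fin n))} (hF : bfMid F) (B : Finset (Fin n))
    (hB : B.card + 2 ≤ n) :
    bfLoc (bfQ F B) ((n:ℝ) - B.card) (bfU F B).card (bfU1 F B).card := by
  have h0 := bf_card_compl B
  have h := bfLoc_P (bfMid_C hF) Bᶜ (by omega)
  rw [bfD_C, bfD1_C, bfC_card, bfC_card] at h
  have h4 : (Bᶜ.card:ℝ) + B.card = (n:ℝ) := by exact_mod_cast h0
  have : (Bᶜ.card:ℝ) = (n:ℝ) - B.card := by linarith
  rw [this] at h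
  exact h

theorem bfU1_card_le {n : ℕ} (F : Finset (Finset (Fin n))) (A : Finset (Fin n)) :
    ((bfU1 F A).card:ℝ) ≤ (n:ℝ) - A.card := by
  have h0 := bf_card_compl A
  have : bfU1 F A ⊆ Aᶜ.image (fun x => insert x A) := by
    intro B hB
    simp only [bfU1, Finset.mem_filter] at hB
    obtain ⟨_, h1, h2⟩ := hB
    obtain ⟨x, hx, hxA⟩ := Finset.exists_of_ssubset h1
    rw [Finset.mem_image]
    refine ⟨x, by simpa using hxA, ?_⟩
    apply Finset.eq_of_subset_of_card_le
    · exact Finset.insert_subset hx h1.1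
    · rw [Finset.card_insert_of_notMem hxA]; omega
  have := (Finset.card_le_card this).trans Finset.card_image_le
  have h3 : ((bfU1 F A).card:ℝ) ≤ Aᶜ.card := by exact_mod_cast this
  have h4 : (n:ℝ) = Aᶜ.card + A.card := by exact_mod_cast h0.symm
  linarith

noncomputable def bfg {n : ℕ} (F : Finset (Finset (Fin n))) (ℓ : ℕ) (B : Finset (Fin n)) : ℝ :=
  1 - (n.choose ℓ : ℝ)/(n.choose B.card : ℝ) * (2 - bfP F B - bfQ F B)

theorem bf_low {n : ℕ} (F : Finset (Finset (Fin n))) (a ℓ : ℕ) (ha : a < n)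
    (hlow : ∑ k ∈ Finset.range a, n.choose k ≤ n.choose ℓ) :
    ∑ B ∈ F.filter (fun B => B.card < a), bfg F ℓ B ≤ 0 := by
  set Lw := F.filter (fun B => B.card < a) with hLw
  set s := bfP Lw Finset.univ with hs
  have hpc : ∀ B ∈ Lw, bfP F B = bfP Lw B := by
    intro B hB
    apply bfP_congr _ B rfl
    intro A hA
    have := Finset.card_lt_card hA
    simp only [hLw, Finset.mem_filter] at hB ⊢
    constructor
    · intro h; exact ⟨h, by omega⟩
    · intro h; exact h.1
  have hs1 : s = ∑ B ∈ Lw, (1 - bfP F B)/(n.choose B.card:ℝ) := by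
    rw [hs, bfP_rep Lw n Finset.univ (by simp)]
    have : Lw.filter (fun B => B ⊂ Finset.univ) = Lw := by
      rw [Finset.filter_eq_self]
      intro B hB
      simp only [hLw, Finset.mem_filter] at hB
      rw [Finset.ssubset_univ_iff]
      rintro rfl
      simp at hB
      omega
    rw [this]
    refine Finset.sum_congr rfl fun B hB => ?_
    rw [hpc B hB]; simp
  have s0 : 0 ≤ s := bfP_nonneg _ _
  have hk : ∀ k ∈ Finset.range a, ((Lw.filter (fun B => B.card = k)).card:ℝ) ≤ s * n.choose k := by
    intro k hk
    rw [Finset.mem_range] at hk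
    have h1 := bfP_mono (Finset.filter_subset (fun B => B.card = k) Lw) n Finset.univ (by simp)
    rw [bfP_rep _ n Finset.univ (by simp)] at h1
    have e1 : (Lw.filter (fun B => B.card = k)).filter (fun B => B ⊂ Finset.univ)
        = Lw.filter (fun B => B.card = k) := by
      rw [Finset.filter_eq_self]
      intro B hB
      simp only [Finset.mem_filter] at hB
      rw [Finset.ssubset_univ_iff]
      rintro rfl
      simp at hB
      omega
    rw [e1] at h1
    have e2 : ∀ B ∈ Lw.filter (fun B => B.card = k),
        (1 - bfP (Lw.filter (fun B => B.card = k)) B)/((Finset.univ : Finset (Fin n)).card.choose B.card:ℝ) = 1/(n.choose k:ℝ) := by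
      intro B hB
      have hp : bfP (Lw.filter (fun B => B.card = k)) B = 0 := by
        apply le_antisymm _ (bfP_nonneg _ _)
        refine (bfP_le_sum _ _).trans (le_of_eq ?_)
        apply Finset.sum_eq_zero
        intro A hA
        simp only [Finset.mem_filter] at hA hB
        have := Finset.card_lt_card hA.2
        omega
      rw [hp]
      simp only [Finset.mem_filter] at hB
      rw [hB.2]; simp
    rw [Finset.sum_congr rfl e2, Finset.sum_const, nsmul_eq_mul, mul_one_div] at h1
    have hc : (0:ℝ) < n.choose k := by exact_mod_cast Nat.choose_pos (by omega)
    rwa [div_le_iff₀ hc] at h1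
  have hcard : (Lw.card:ℝ) ≤ s * n.choose ℓ := by
    have h1 : Lw.card = ∑ k ∈ Finset.range a, (Lw.filter (fun B => B.card = k)).card := by
      apply Finset.card_eq_sum_card_fiberwise
      intro B hB
      simp only [hLw, Finset.coe_filter, Set.mem_ofPred_eq] at hB
      simp only [Finset.coe_range, Set.mem_Iio]
      exact hB.2
    rw [h1]
    push_cast
    calc _ ≤ ∑ k ∈ Finset.range a, s * (n.choose k:ℝ) := Finset.sum_le_sum hk
      _ = s * ((∑ k ∈ Finset.range a, n.choose k : ℕ):ℝ) := by rw [← Finset.mul_sum]; push_cast; rfl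
      _ ≤ _ := by
        apply mul_le_mul_of_nonneg_left _ s0
        exact_mod_cast hlow
  have hg : ∀ B ∈ Lw, bfg F ℓ B ≤ 1 - (n.choose ℓ:ℝ) * ((1 - bfP F B)/(n.choose B.card:ℝ)) := by
    intro B _
    unfold bfg
    have hq := bfQ_le_one F B
    have h1 : 0 ≤ (n.choose ℓ : ℝ)/(n.choose B.card : ℝ) := by positivity
    have h2 : (n.choose ℓ:ℝ) * ((1 - bfP F B)/(n.choose B.card:ℝ)) =
      (n.choose ℓ : ℝ)/(n.choose B.card : ℝ) * (1 - bfP F B) := by ring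
    rw [h2]
    nlinarith
  refine (Finset.sum_le_sum hg).trans ?_
  rw [Finset.sum_sub_distrib, ← Finset.mul_sum, ← hs1]
  simp
  linarith

theorem bf_lower {n : ℕ} (F : Finset (Finset (Fin n))) (ℓ J : ℕ) (hℓ : ℓ < n) (f : ℝ)
    (hf : 0 ≤ f) (γ : ℕ → ℝ) (hγ0 : ∀ a, 0 ≤ γ a) (hγ : ∀ a, γ a ≠ 0 → a ≤ ℓ ∧ ℓ ≤ a + J)
    (hlow : ∑ k ∈ Finset.range (ℓ - J), n.choose k ≤ n.choose ℓ)
    (pw : ∀ B ∈ F, B.card ≤ ℓ → ℓ ≤ B.card + J →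
      f * bfg F ℓ B + γ B.card * ((n:ℝ) - B.card) ≤
        (bfT F B : ℝ)/2 + γ (B.card - 1) * (bfD1 F B).card) :
    ∑ B ∈ F.filter (fun B => B.card ≤ ℓ), f * bfg F ℓ B ≤
      ∑ B ∈ F.filter (fun B => B.card ≤ ℓ), (bfT F B:ℝ)/2 := by
  have h1 := bf_low F (ℓ - J) ℓ (by omega) hlow
  set Lw := F.filter (fun B => B.card < ℓ - J) with hLw
  set Md := F.filter (fun B => B.card ≤ ℓ ∧ ℓ ≤ B.card + J) with hMd
  have hun : F.filter (fun B => B.card ≤ ℓ) = Lw ∪ Md := by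
    ext B
    simp only [hLw, hMd, Finset.mem_union, Finset.mem_filter]
    constructor
    · rintro ⟨h, h'⟩
      by_cases hh : B.card < ℓ - J
      · exact Or.inl ⟨h, hh⟩
      · exact Or.inr ⟨h, h', by omega⟩
    · rintro (⟨h, h'⟩ | ⟨h, h', _⟩)
      · exact ⟨h, by omega⟩
      · exact ⟨h, h'⟩
  have hdis : Disjoint Lw Md := by
    rw [Finset.disjoint_left]
    intro B h1 h2
    simp only [hLw, hMd, Finset.mem_filter] at h1 h2
    omega
  rw [hun, Finset.sum_union hdis, Finset.sum_union hdis]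
  have hA : ∑ B ∈ Lw, f * bfg F ℓ B ≤ 0 := by
    rw [← Finset.mul_sum]
    exact mul_nonpos_of_nonneg_of_nonpos hf h1
  have hA' : 0 ≤ ∑ B ∈ Lw, (bfT F B:ℝ)/2 := Finset.sum_nonneg fun B _ => by positivity
  have hM : ∑ B ∈ Md, (f * bfg F ℓ B + γ B.card * ((n:ℝ) - B.card)) ≤
      ∑ B ∈ Md, ((bfT F B : ℝ)/2 + γ (B.card - 1) * (bfD1 F B).card) := by
    refine Finset.sum_le_sum fun B hB => ?_
    simp only [hMd, Finset.mem_filter] at hB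
    exact pw B hB.1 hB.2.1 hB.2.2
  rw [Finset.sum_add_distrib, Finset.sum_add_distrib] at hM
  have hD : ∑ B ∈ Md, γ (B.card - 1) * (bfD1 F B).card ≤ ∑ B ∈ Md, γ B.card * ((n:ℝ) - B.card) := by
    have e1 : ∀ B ∈ Md, γ (B.card - 1) * ((bfD1 F B).card:ℝ) =
        ∑ A ∈ F, if (A ⊂ B ∧ A.card + 1 = B.card) then γ A.card else 0 := by
      intro B _
      rw [← Finset.sum_filter]
      have : ∀ A ∈ F.filter (fun A => A ⊂ B ∧ A.card + 1 = B.card), γ A.card = γ (B.card - 1) := by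
        intro A hA
        simp only [Finset.mem_filter] at hA
        congr 1; omega
      rw [Finset.sum_congr rfl this, Finset.sum_const, nsmul_eq_mul, mul_comm]
      rfl
    rw [Finset.sum_congr rfl e1, Finset.sum_comm]
    have e2 : ∀ A ∈ F, (∑ B ∈ Md, if (A ⊂ B ∧ A.card + 1 = B.card) then γ A.card else 0) ≤
        γ A.card * ((n:ℝ) - A.card) := by
      intro A _
      rw [← Finset.sum_filter, Finset.sum_const, nsmul_eq_mul, mul_comm]
      apply mul_le_mul_of_nonneg_left _ (hγ0 _)
      refine le_trans ?_ (bfU1_card_le F A)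
      have : Md.filter (fun B => A ⊂ B ∧ A.card + 1 = B.card) ⊆ bfU1 F A :=
        Finset.filter_subset_filter _ (Finset.filter_subset _ _)
      exact_mod_cast Finset.card_le_card this
    refine (Finset.sum_le_sum e2).trans (le_of_eq ?_)
    symm
    apply Finset.sum_subset (Finset.filter_subset _ _)
    intro A hA hAM
    have : γ A.card = 0 := by
      by_contra hne
      exact hAM (Finset.mem_filter.2 ⟨hA, hγ _ hne⟩)
    rw [this]; simp
  linarith

theorem bf_wt (n m ℓ : ℕ) (hn : n = ℓ + m + 1) (h1 : m ≤ ℓ + 1) (h2 : ℓ ≤ m) (hm : 1 ≤ m) :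
    ∀ j : ℕ, j ≤ ℓ → (1 + (j:ℝ)*(j+1)/m) * (n.choose (ℓ - j):ℝ) ≤ (n.choose ℓ:ℝ) := by
  intro j
  have hm0 : (0:ℝ) < m := by exact_mod_cast hm
  induction j with
  | zero => intro _; simp
  | succ j ih =>
    intro hj
    refine le_trans ?_ (ih (by omega))
    have e := Nat.choose_succ_right_eq n (ℓ - (j+1))
    have e1 : ℓ - (j+1) + 1 = ℓ - j := by omega
    rw [e1] at e
    have e2 : n - (ℓ - (j+1)) = m + 1 + (j + 1) := by omega
    rw [e2] at e
    have e' : (n.choose (ℓ-j):ℝ) * ((ℓ:ℝ) - j) = (n.choose (ℓ-(j+1)):ℝ) * (m+1+(j+1)) := by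
      have : ((n.choose (ℓ-j) * (ℓ-j) : ℕ):ℝ) = ((n.choose (ℓ-(j+1)) * (m+1+(j+1)):ℕ):ℝ) := by
        rw [e]
      push_cast [Nat.cast_sub (show j ≤ ℓ by omega)] at this
      exact this
    set X := (n.choose (ℓ-j):ℝ)
    set Y := (n.choose (ℓ-(j+1)):ℝ)
    have hY0 : 0 ≤ Y := by positivity
    have hX0 : 0 ≤ X := by positivity
    have hj' : ((j:ℝ)+1) ≤ ℓ := by exact_mod_cast hj
    have h2' : (ℓ:ℝ) ≤ m := by exact_mod_cast h2
    -- X ≥ Y (1+2k/m)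
    have hXY : Y * (1 + 2*((j:ℝ)+1)/m) ≤ X := by
      have a1 : Y * (m+1+(j+1)) ≤ X * ((m:ℝ) - j) := by
        rw [← e']; apply mul_le_mul_of_nonneg_left _ hX0; linarith
      have hmj : (0:ℝ) < (m:ℝ) - j := by linarith
      have a2 : (1 + 2*((j:ℝ)+1)/m) * ((m:ℝ)-j) ≤ m+1+(j+1) := by
        rw [← sub_nonneg]
        have : (m:ℝ)+1+(j+1) - (1 + 2*((j:ℝ)+1)/m) * ((m:ℝ)-j) = 2*((j:ℝ)+1)*j/m := by
          field_simp; ring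
        rw [this]; positivity
      have a3 := mul_le_mul_of_nonneg_left a2 hY0
      have a4 : Y * (1 + 2*((j:ℝ)+1)/m) * ((m:ℝ)-j) ≤ X * ((m:ℝ)-j) := by linarith
      exact le_of_mul_le_mul_right a4 hmj
    have b1 : (1 + ((j:ℝ)+1)*((j:ℝ)+1+1)/m) ≤ (1+(j:ℝ)*(j+1)/m)*(1 + 2*((j:ℝ)+1)/m) := by
      have : (1+(j:ℝ)*(j+1)/m)*(1 + 2*((j:ℝ)+1)/m) - (1 + ((j:ℝ)+1)*((j:ℝ)+1+1)/m)
        = ((j:ℝ)*(j+1)/m)*(2*((j:ℝ)+1)/m) := by field_simp; ring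
      have h0 : 0 ≤ ((j:ℝ)*(j+1)/m)*(2*((j:ℝ)+1)/m) := by positivity
      linarith
    push_cast
    calc _ ≤ (1+(j:ℝ)*(j+1)/m)*(1 + 2*((j:ℝ)+1)/m) * Y := mul_le_mul_of_nonneg_right b1 hY0
      _ = (1+(j:ℝ)*(j+1)/m)*(Y*(1 + 2*((j:ℝ)+1)/m)) := by ring
      _ ≤ _ := mul_le_mul_of_nonneg_left hXY (by positivity)

theorem bf_binsum (n K a1 : ℕ) (h : ∀ k < a1, (K+1) * (k+1) ≤ K * (n - k)) :
    ∀ a ≤ a1, ∑ k ∈ Finset.range a, n.choose k ≤ K * n.choose a := by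
  have h' : ∀ k < a1, (K+1) * n.choose k ≤ K * n.choose (k+1) := by
    intro k hk
    have e := Nat.choose_succ_right_eq n k
    have := h k hk
    have h3 : (K+1) * n.choose k * (k+1) ≤ K * n.choose (k+1) * (k+1) := by
      calc _ = ((K+1)*(k+1)) * n.choose k := by ring
        _ ≤ (K*(n-k)) * n.choose k := Nat.mul_le_mul_right _ this
        _ = K * (n.choose k * (n-k)) := by ring
        _ = _ := by rw [← e]; ring
    exact Nat.le_of_mul_le_mul_right h3 (by omega)
  intro a
  induction a with
  | zero => intro _; simp
  | succ a ih =>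
    intro ha
    rw [Finset.sum_range_succ]
    have := ih (by omega)
    have := h' a (by omega)
    nlinarith

theorem bf_bingrow (n K a1 a : ℕ) (hK : 0 < K) (h : ∀ k < a1, (K+1) * (k+1) ≤ K * (n - k)) :
    ∀ i, a + i ≤ a1 → (K+i) * n.choose a ≤ K * n.choose (a+i) := by
  have h' : ∀ k < a1, (K+1) * n.choose k ≤ K * n.choose (k+1) := by
    intro k hk
    have e := Nat.choose_succ_right_eq n k
    have := h k hk
    have h3 : (K+1) * n.choose k * (k+1) ≤ K * n.choose (k+1) * (k+1) := by
      calc _ = ((K+1)*(k+1)) * n.choose k := by ring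
        _ ≤ (K*(n-k)) * n.choose k := Nat.mul_le_mul_right _ this
        _ = K * (n.choose k * (n-k)) := by ring
        _ = _ := by rw [← e]; ring
    exact Nat.le_of_mul_le_mul_right h3 (by omega)
  intro i
  induction i with
  | zero => intro _; simp
  | succ i ih =>
    intro ha
    have h1 := ih (by omega)
    have h2 := h' (a+i) (by omega)
    rw [← add_assoc a i 1]
    have h3 : K * ((K+(i+1)) * n.choose a) ≤ K * (K * n.choose (a+i+1)) := by
      calc K * ((K+(i+1)) * n.choose a) ≤ (K+1)*((K+i) * n.choose a) := by
            nlinarith [Nat.zero_le (i * n.choose a)]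
        _ ≤ (K+1)*(K*n.choose (a+i)) := Nat.mul_le_mul_left _ h1
        _ = K*((K+1)*n.choose (a+i)) := by ring
        _ ≤ _ := Nat.mul_le_mul_left _ h2
    exact Nat.le_of_mul_le_mul_left h3 hK

theorem bf_lowsum (n m ℓ J : ℕ) (hn : n = ℓ + m + 1) (h1 : m ≤ ℓ + 1) (h2 : ℓ ≤ m)
    (hm : 1000000000 ≤ m) (hJ : J = m / 304) :
    ∑ k ∈ Finset.range (ℓ - J), n.choose k ≤ n.choose ℓ := by
  have hK : ∀ k < (ℓ - J) + 160000, (400+1) * (k+1) ≤ 400 * (n - k) := by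
    intro k hk
    omega
  have a1 := bf_binsum n 400 _ hK (ℓ - J) (by omega)
  have a2 := bf_bingrow n 400 _ (ℓ - J) (by norm_num) hK 160000 le_rfl
  have a3 := bf_choose_mono n (ℓ - J + 160000) ℓ (by omega) (by omega)
  omega

theorem bf_ha_even {m j : ℝ} (hm : 1280 ≤ m) (hj : 1 ≤ j) (hjm : 304*j ≤ m) :
    (2*((m+1)*m*(m-1)/2))*(1 - 8*j/m) ≤ (m-1-j)*(m+1+j)*(m-1-j) := by
  have hm0 : m ≠ 0 := by linarith
  have e : (2*((m+1)*m*(m-1)/2))*(1 - 8*j/m) = (m+1)*(m-1)*(m-8*j) := by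
    field_simp
  rw [e]
  have h1 : (m+1)*(m-1)*(m-8*j) ≤ (m+1)*(m-1)*(m-4*(j+1)) := by
    apply mul_le_mul_of_nonneg_left (by linarith)
    apply mul_nonneg <;> linarith
  refine h1.trans ?_
  set k := j+1 with hk
  have e2 : (m-1-j)*(m+1+j)*(m-1-j) = (m-k)*(m+k)*(m-k) := by rw [hk]; ring
  rw [e2]
  have hk0 : 2 ≤ k := by linarith
  have hkm : k ≤ m := by linarith
  have h3 : 0 ≤ k*m*(m-k) := by
    apply mul_nonneg (mul_nonneg _ _) <;> linarith
  have h4 : 4*k ≤ k*m*m := by nlinarith [mul_nonneg (by linarith : 0 ≤ k) (by nlinarith : 0 ≤ m*m-4)]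
  have h5 : 0 ≤ k^3 := by positivity
  have h6 : 0 ≤ k*m*m := by nlinarith
  nlinarith

theorem bf_ha_odd {m j : ℝ} (hm : 1280 ≤ m) (hj : 1 ≤ j) (hjm : 304*j ≤ m) :
    (2*((m+2)*(m+1)*m/2))*(1 - 8*j/m) ≤ (m-j)*(m+1+j)*(m-j) := by
  have hm0 : m ≠ 0 := by linarith
  have e : (2*((m+2)*(m+1)*m/2))*(1 - 8*j/m) = (m+2)*(m+1)*(m-8*j) := by
    field_simp
  rw [e]
  have h3 : 0 ≤ j*m*(m-j) := by
    apply mul_nonneg (mul_nonneg _ _) <;> linarith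
  have h4 : 0 ≤ m*m*(j-1) := by
    apply mul_nonneg (mul_nonneg _ _) <;> linarith
  have h5 : 0 ≤ m*(j-1) := by
    apply mul_nonneg <;> linarith
  have h6 : 0 ≤ j^2*(m+1+j) := by positivity
  nlinarith

theorem bf_pw_far {n m ℓ : ℕ} {F : Finset (Finset (Fin n))} (hF : bfMid F)
    (hn : n = ℓ + m + 1) (h1 : m ≤ ℓ + 1) (h2 : ℓ ≤ m) (hm : 1000000000 ≤ m)
    (f gv : ℝ) (hf : f = (m+1)*m*(m-1)/2 ∧ m = ℓ + 1 ∨ f = (m+2)*(m+1)*m/2 ∧ m = ℓ)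
    (B : Finset (Fin n)) (hB : B ∈ F) (j : ℕ) (hj : 1 ≤ j) (hbj : B.card + j = ℓ)
    (hjm : 304 * j ≤ m) (hgv1 : gv ≤ 3/4*((j:ℝ)*(j+1)/m)) (hgv2 : gv ≤ 10/m) :
    f * bfg F ℓ B + gv * f ≤ (bfT F B:ℝ)/2 := by
  rw [bfT_tau]
  unfold bfg
  have hBm := hF B hB
  have hb : (B.card:ℝ) + j = ℓ := by exact_mod_cast hbj
  have hnr : (n:ℝ) = ℓ + m + 1 := by exact_mod_cast hn
  have hmr : (1000000000:ℝ) ≤ m := by exact_mod_cast hm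
  have hjr : (1:ℝ) ≤ j := by exact_mod_cast hj
  have hjmr : 304*(j:ℝ) ≤ m := by exact_mod_cast hjm
  have h1r : (m:ℝ) ≤ ℓ + 1 := by exact_mod_cast h1
  have h2r : (ℓ:ℝ) ≤ m := by exact_mod_cast h2
  have hu : (n:ℝ) - B.card = m + 1 + j := by linarith
  have hm0 : (0:ℝ) < m := by linarith
  have hw := bf_wt n m ℓ hn h1 h2 (by omega) j (by omega)
  have e : ℓ - j = B.card := by omega
  rw [e] at hw
  have hc : (0:ℝ) < n.choose B.card := by exact_mod_cast Nat.choose_pos (by omega)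
  rw [← le_div_iff₀ hc] at hw
  refine bf_far (d := B.card) (u := (n:ℝ) - B.card) (m := m) (j := j) (σ := (j:ℝ)*(j+1)/m)
    (η := 19*j/m) (bfLoc_P hF B hBm.1)
    (bfLoc_Q hF B hBm.2) (by linarith) (by linarith) ?_ (by linarith) hjr hjmr rfl hw rfl
    hgv1 hgv2 ?_ ?_
  · rcases hf with ⟨h, _⟩ | ⟨h, _⟩
    · rw [h]
      have := mul_nonneg (by positivity : (0:ℝ) ≤ (m+1)*m) (by linarith : (0:ℝ) ≤ m-1)
      linarith
    · rw [h]; positivity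
  · rw [hu]
    rcases hf with ⟨h, h'⟩ | ⟨h, h'⟩
    · have : (m:ℝ) = ℓ + 1 := by exact_mod_cast h'
      rw [h, show (B.card:ℝ) = m - 1 - j by linarith]
      exact bf_ha_even (by linarith) hjr hjmr
    · have : (m:ℝ) = ℓ := by exact_mod_cast h'
      rw [h, show (B.card:ℝ) = m - j by linarith]
      exact bf_ha_odd (by linarith) hjr hjmr
  · rw [hu]
    rcases hf with ⟨h, h'⟩ | ⟨h, h'⟩
    · have : (m:ℝ) = ℓ + 1 := by exact_mod_cast h'
      rw [h, show (B.card:ℝ) = m - 1 - j by linarith]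
      have : 2/(m:ℝ)*(2*((m+1)*m*(m-1)/2)) = 2*((m+1)*(m-1)) := by field_simp
      rw [this]
      nlinarith
    · have : (m:ℝ) = ℓ := by exact_mod_cast h'
      rw [h, show (B.card:ℝ) = m - j by linarith]
      have : 2/(m:ℝ)*(2*((m+2)*(m+1)*m/2)) = 2*((m+2)*(m+1)) := by field_simp
      rw [this]
      nlinarith

theorem bf_lower_even {n m ℓ : ℕ} {F : Finset (Finset (Fin n))} (hF : bfMid F)
    (hn : n = ℓ + m + 1) (h1 : m = ℓ + 1) (hm : 1000000000 ≤ m)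
    (f : ℝ) (hf : f = ((m:ℝ)+1)*m*(m-1)/2) :
    ∑ B ∈ F.filter (fun B => B.card ≤ ℓ), f * bfg F ℓ B ≤
      ∑ B ∈ F.filter (fun B => B.card ≤ ℓ), (bfT F B:ℝ)/2 := by
  have hmr : (1000000000:ℝ) ≤ m := by exact_mod_cast hm
  have hm0 : (0:ℝ) < m := by linarith
  have hℓ : (m:ℝ) = ℓ + 1 := by exact_mod_cast h1
  have hnr : (n:ℝ) = ℓ + m + 1 := by exact_mod_cast hn
  have hf0 : 0 < f := by
    have := mul_pos (by positivity : (0:ℝ) < (m+1)*m) (by linarith : (0:ℝ) < m-1)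
    linarith
  refine bf_lower F ℓ (m/304) (by omega) f hf0.le
    (fun a => if a + 1 = ℓ then (m:ℝ)/2 else 0) ?_ ?_ 
    (bf_lowsum n m ℓ _ hn (by omega) (by omega) hm rfl) ?_
  · intro a; split_ifs <;> positivity
  · intro a ha
    have : a + 1 = ℓ := by by_contra h; simp [h] at ha
    omega
  · intro B hB hb1 hb2
    have hBm := hF B hB
    obtain ⟨j, hj⟩ : ∃ j, B.card + j = ℓ := ⟨ℓ - B.card, by omega⟩
    have hjr : (B.card:ℝ) + j = ℓ := by exact_mod_cast hj
    rcases Nat.eq_zero_or_pos j with h0 | h0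
    · subst h0
      have hb : B.card = ℓ := by omega
      rw [if_neg (by omega), if_pos (by omega), bfT_tau]
      unfold bfg
      have hc : (n.choose ℓ:ℝ) ≠ 0 := by
        have := Nat.choose_pos (show ℓ ≤ n by omega)
        positivity
      rw [hb, div_self hc]
      have hP := bfLoc_P hF B hBm.1
      have hQ := bfLoc_Q hF B hBm.2
      rw [show (n:ℝ) - B.card = m + 1 by rw [hb]; linarith] at hQ
      rw [show (B.card:ℝ) = m - 1 by rw [hb]; linarith] at hP
      have := bf_special (ν := 1) (γ := (m:ℝ)/2) hP hQ (by linarith) (by linarith) (by linarith)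
        (by norm_num) (by norm_num) (by positivity) (by linarith) (by ring_nf; linarith)
      rw [hf]
      linarith
    · have hD : 0 ≤ (if B.card - 1 + 1 = ℓ then (m:ℝ)/2 else 0) * ((bfD1 F B).card:ℝ) := by
        split_ifs <;> positivity
      have key : ∃ gv : ℝ, gv ≤ 3/4*((j:ℝ)*(j+1)/m) ∧ gv ≤ 10/m ∧
          (if B.card + 1 = ℓ then (m:ℝ)/2 else 0) * ((n:ℝ) - B.card) = gv * f := by
        by_cases hj1 : j = 1
        · subst hj1
          rw [if_pos (by omega)]
          refine ⟨(m+2)/((m+1)*(m-1)), ?_, ?_, ?_⟩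
          · have : 3/4*(((1:ℕ):ℝ)*(((1:ℕ):ℝ)+1)/(m:ℝ)) = (3/2)/(m:ℝ) := by push_cast; ring
            rw [this, div_le_div_iff₀ (by nlinarith) hm0]
            nlinarith
          · rw [div_le_div_iff₀ (by nlinarith) hm0]
            nlinarith
          · rw [hf]
            have : (m:ℝ) - 1 ≠ 0 := by linarith
            rw [show (n:ℝ) - B.card = m + 2 by push_cast at hjr; linarith]
            field_simp
        · refine ⟨0, by positivity, by positivity, ?_⟩
          rw [if_neg (by omega)]; ring
      obtain ⟨gv, g1, g2, g3⟩ := key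
      have := bf_pw_far hF hn (by omega) (by omega) hm f gv (Or.inl ⟨hf, h1⟩) B hB j h0 hj
        (by omega) g1 g2
      rw [g3]
      linarith

theorem bf_lower_odd {n m ℓ : ℕ} {F : Finset (Finset (Fin n))} (hF : bfMid F)
    (hn : n = ℓ + m + 1) (h1 : m = ℓ) (hm : 1000000000 ≤ m)
    (f : ℝ) (hf : f = ((m:ℝ)+2)*(m+1)*m/2) :
    ∑ B ∈ F.filter (fun B => B.card ≤ ℓ), f * bfg F ℓ B ≤
      ∑ B ∈ F.filter (fun B => B.card ≤ ℓ), (bfT F B:ℝ)/2 := by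
  have hmr : (1000000000:ℝ) ≤ m := by exact_mod_cast hm
  have hm0 : (0:ℝ) < m := by linarith
  have hℓ : (m:ℝ) = ℓ := by exact_mod_cast h1
  have hnr : (n:ℝ) = ℓ + m + 1 := by exact_mod_cast hn
  have hf0 : 0 < f := by rw [hf]; positivity
  refine bf_lower F ℓ (m/304) (by omega) f hf0.le
    (fun a => if a + 1 = ℓ then (m:ℝ)+1 else if a + 2 = ℓ then 2*(m:ℝ) else 0) ?_ ?_ 
    (bf_lowsum n m ℓ _ hn (by omega) (by omega) hm rfl) ?_
  · intro a; split_ifs <;> positivity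
  · intro a ha
    have : a + 1 = ℓ ∨ a + 2 = ℓ := by by_contra! h; simp [h] at ha
    omega
  · intro B hB hb1 hb2
    have hBm := hF B hB
    obtain ⟨j, hj⟩ : ∃ j, B.card + j = ℓ := ⟨ℓ - B.card, by omega⟩
    have hjr : (B.card:ℝ) + j = ℓ := by exact_mod_cast hj
    by_cases h0 : j = 0
    · subst h0
      have hb : B.card = ℓ := by omega
      rw [if_neg (by omega), if_neg (by omega), if_pos (by omega), bfT_tau]
      unfold bfg
      have hc : (n.choose ℓ:ℝ) ≠ 0 := by
        have := Nat.choose_pos (show ℓ ≤ n by omega)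
        positivity
      rw [hb, div_self hc]
      have hP := bfLoc_P hF B hBm.1
      have hQ := bfLoc_Q hF B hBm.2
      rw [show (n:ℝ) - B.card = m + 1 by rw [hb]; linarith] at hQ
      rw [show (B.card:ℝ) = m by rw [hb]; linarith] at hP
      have := bf_special (ν := 3) (γ := (m:ℝ)+1) hP hQ (by linarith) (by linarith) (by linarith)
        (by norm_num) (by norm_num) (by positivity) (by linarith) (by ring_nf; linarith)
      rw [hf]
      linarith
    by_cases h0' : j = 1
    · subst h0'
      push_cast at hjr
      rw [if_pos (by omega), if_neg (by omega), if_pos (by omega), bfT_tau]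
      unfold bfg
      have hc : (0:ℝ) < n.choose B.card := by
        exact_mod_cast Nat.choose_pos (show B.card ≤ n by omega)
      have hw : (n.choose ℓ:ℝ)/(n.choose B.card:ℝ) = (m+2)/m := by
        have e := Nat.choose_succ_right_eq n B.card
        rw [hj, show n - B.card = m + 2 by omega, ← h1] at e
        have e' : (n.choose m:ℝ)*m = (n.choose B.card:ℝ)*(m+2) := by exact_mod_cast e
        rw [← h1, div_eq_div_iff hc.ne' hm0.ne']
        linarith
      rw [hw]
      have hP := bfLoc_P hF B hBm.1
      have hQ := bfLoc_Q hF B hBm.2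
      have hu : (n:ℝ) - B.card = m + 2 := by linarith
      rw [hu] at hQ ⊢
      rw [show (B.card:ℝ) = m - 1 by linarith] at hP
      have hm1 : (0:ℝ) < m - 1 := by linarith
      have h6 : (0:ℝ) ≤ 6/((m:ℝ)-1) := by positivity
      have h6' : 6/((m:ℝ)-1) ≤ 1/10 := by
        rw [div_le_div_iff₀ hm1 (by norm_num)]; linarith
      have := bf_special (ν := 4 + 6/((m:ℝ)-1)) (γ := 2*(m:ℝ)) hP hQ (by linarith) (by linarith)
        (by linarith) (by linarith) (by linarith) (by positivity) (by nlinarith) (by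
          have a1 : ((m:ℝ)+2-(m-1)+(4+6/((m:ℝ)-1)))^2 ≤ 60 := by
            have : (m:ℝ)+2-(m-1)+(4+6/((m:ℝ)-1)) = 7 + 6/((m:ℝ)-1) := by ring
            rw [this]; nlinarith
          nlinarith)
      have e3 : ((m:ℝ)+2+(4+6/((m:ℝ)-1))-2)*(m-1)*(m+2) = (m+1)*(m+2)*(m+2) := by
        field_simp; ring
      rw [e3] at this
      have e4 : f * (1 - (m+2)/m*(2 - bfP F B - bfQ F B)) + ((m:ℝ)+1)*(m+2) =
          ((m+1)*(m+2)*(m+2)*(bfP F B + bfQ F B - 1))/2 := by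
        rw [hf]; field_simp; ring
      rw [e4]
      linarith
    · have hD : 0 ≤ (if B.card - 1 + 1 = ℓ then (m:ℝ)+1 else if B.card - 1 + 2 = ℓ then 2*(m:ℝ) else 0)
          * ((bfD1 F B).card:ℝ) := by
        split_ifs <;> positivity
      have key : ∃ gv : ℝ, gv ≤ 3/4*((j:ℝ)*(j+1)/m) ∧ gv ≤ 10/m ∧
          (if B.card + 1 = ℓ then (m:ℝ)+1 else if B.card + 2 = ℓ then 2*(m:ℝ) else 0)
            * ((n:ℝ) - B.card) = gv * f := by
        by_cases hj1 : j = 2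
        · subst hj1
          rw [if_neg (by omega), if_pos (by omega)]
          refine ⟨4*(m+3)/((m+2)*(m+1)), ?_, ?_, ?_⟩
          · have : 3/4*(((2:ℕ):ℝ)*(((2:ℕ):ℝ)+1)/(m:ℝ)) = (9/2)/(m:ℝ) := by push_cast; ring
            rw [this, div_le_div_iff₀ (by positivity) hm0]
            nlinarith
          · rw [div_le_div_iff₀ (by positivity) hm0]
            nlinarith
          · rw [hf]
            rw [show (n:ℝ) - B.card = m + 3 by push_cast at hjr; linarith]
            field_simp
            ring
        · refine ⟨0, by positivity, by positivity, ?_⟩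
          rw [if_neg (by omega), if_neg (by omega)]; ring
      obtain ⟨gv, g1, g2, g3⟩ := key
      have := bf_pw_far hF hn (by omega) (by omega) hm f gv (Or.inr ⟨hf, h1⟩) B hB j (by omega) hj
        (by omega) g1 g2
      rw [g3]
      linarith

theorem bfg_C {n ℓ : ℕ} (F : Finset (Finset (Fin n))) (B : Finset (Fin n)) :
    bfg (bfC F) ℓ Bᶜ = bfg F ℓ B := by
  unfold bfg
  have h := bf_card_compl B
  have e : n.choose Bᶜ.card = n.choose B.card := by
    rw [← Nat.choose_symm (show B.card ≤ n by omega)]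
    congr 1; omega
  rw [e, bfQ_C]
  have : bfP (bfC F) Bᶜ = bfQ F B := rfl
  rw [this]; ring

theorem bf_upper {n ℓ : ℕ} {F : Finset (Finset (Fin n))} {f : ℝ}
    (h : ∑ B ∈ (bfC F).filter (fun B => B.card ≤ ℓ), f * bfg (bfC F) ℓ B ≤
      ∑ B ∈ (bfC F).filter (fun B => B.card ≤ ℓ), (bfT (bfC F) B:ℝ)/2) :
    ∑ B ∈ F.filter (fun B => n ≤ B.card + ℓ), f * bfg F ℓ B ≤
      ∑ B ∈ F.filter (fun B => n ≤ B.card + ℓ), (bfT F B:ℝ)/2 := by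
  have e : (bfC F).filter (fun B => B.card ≤ ℓ) = bfC (F.filter (fun B => n ≤ B.card + ℓ)) := by
    ext B
    have := bf_card_compl B
    simp only [mem_bfC, Finset.mem_filter]
    constructor
    · rintro ⟨h1, h2⟩; exact ⟨h1, by omega⟩
    · rintro ⟨h1, h2⟩; exact ⟨h1, by omega⟩
  rw [e, bfC_sum, bfC_sum] at h
  simpa only [bfg_C, bfT_C] using h

theorem bf_lym2 {n ℓ : ℕ} (F : Finset (Finset (Fin n))) :
    ∑ B ∈ F, (n.choose ℓ : ℝ)/(n.choose B.card : ℝ) * (2 - bfP F B - bfQ F B) ≤ 2*n.choose ℓ := by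
  have h1 := bfP_lym F
  have h2 := bfQ_lym F
  have : ∑ B ∈ F, (n.choose ℓ : ℝ)/(n.choose B.card : ℝ) * (2 - bfP F B - bfQ F B) =
      (n.choose ℓ:ℝ) * (∑ B ∈ F, (1 - bfP F B)/(n.choose B.card:ℝ) + ∑ B ∈ F, (1 - bfQ F B)/(n.choose B.card:ℝ)) := by
    rw [← Finset.sum_add_distrib, Finset.mul_sum]
    refine Finset.sum_congr rfl fun B _ => ?_
    ring
  rw [this]
  have h0 : (0:ℝ) ≤ n.choose ℓ := by positivity
  nlinarith

theorem bf_main_odd {n m E : ℕ} {F : Finset (Finset (Fin n))} (hF : bfMid F)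
    (hn : n = 2*m+1) (hm : 1000000000 ≤ m) (hE : F.card = Sigma2 n + E) :
    E * fB n ≤ numButterflies F := by
  obtain ⟨f, hf⟩ : ∃ f : ℝ, f = ((m:ℝ)+2)*(m+1)*m/2 := ⟨_, rfl⟩
  have hfB : (fB n : ℝ) = f := by
    unfold fB
    have : (n+1)/2 = m+1 := by omega
    rw [this]
    push_cast [Nat.cast_choose_two]
    rw [hf]; ring
  have a1 := bf_lower_odd hF (by omega : n = m + m + 1) rfl hm f hf
  have a2 := bf_upper (bf_lower_odd (bfMid_C hF) (by omega : n = m + m + 1) rfl hm f hf)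
  have hsplit : ∀ g : Finset (Fin n) → ℝ, ∑ B ∈ F, g B =
      ∑ B ∈ F.filter (fun B => B.card ≤ m), g B + ∑ B ∈ F.filter (fun B => n ≤ B.card + m), g B := by
    intro g
    rw [← Finset.sum_filter_add_sum_filter_not F (fun B => B.card ≤ m)]
    congr 2
    ext B
    simp only [Finset.mem_filter]
    constructor
    · rintro ⟨h1, h2⟩; exact ⟨h1, by omega⟩
    · rintro ⟨h1, h2⟩; exact ⟨h1, by omega⟩
  have hS : Sigma2 n = 2 * n.choose m := by
    unfold Sigma2
    have h1 : n/2 = m := by omega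
    have h2 : n.choose (m+1) = n.choose m := by
      rw [← Nat.choose_symm (show m ≤ n by omega)]
      congr 1; omega
    rw [h1, h2]; ring
  have hEg : (E:ℝ) ≤ ∑ B ∈ F, bfg F m B := by
    unfold bfg
    rw [Finset.sum_sub_distrib]
    have h := bf_lym2 (ℓ := m) F
    have : (F.card:ℝ) = 2 * n.choose m + E := by rw [hE, hS]; push_cast; ring
    simp only [Finset.sum_const, nsmul_eq_mul, mul_one]
    linarith
  have hT : (∑ B ∈ F, (bfT F B:ℝ)) ≤ 2 * (numButterflies F:ℝ) := by exact_mod_cast bfT_sum F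
  have hf0 : 0 ≤ f := by rw [hf]; positivity
  have h1 := hsplit (fun B => f * bfg F m B)
  have h2 := hsplit (fun B => (bfT F B:ℝ)/2)
  rw [← Finset.mul_sum] at h1
  rw [← Finset.sum_div] at h2
  have h3 := mul_le_mul_of_nonneg_left hEg hf0
  have : ((E * fB n : ℕ):ℝ) ≤ (numButterflies F:ℝ) := by
    push_cast
    rw [hfB]
    linarith
  exact_mod_cast this

theorem bf_main_even {n m E : ℕ} {F : Finset (Finset (Fin n))} (hF : bfMid F)
    (hn : n = 2*m) (hm : 1000000000 ≤ m) (hE : F.card = Sigma2 n + E) :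
    E * fB n ≤ numButterflies F := by
  obtain ⟨ℓ, hℓ⟩ : ∃ ℓ, m = ℓ + 1 := ⟨m - 1, by omega⟩
  obtain ⟨f, hf⟩ : ∃ f : ℝ, f = ((m:ℝ)+1)*m*(m-1)/2 := ⟨_, rfl⟩
  have hmr : (1000000000:ℝ) ≤ m := by exact_mod_cast hm
  have hm0 : (0:ℝ) < m := by linarith
  have hnr : (n:ℝ) = 2*m := by exact_mod_cast hn
  have hfB : (fB n : ℝ) = f := by
    unfold fB
    have : (n+1)/2 = m := by omega
    rw [this]
    push_cast [Nat.cast_choose_two]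
    rw [hf]; ring
  have a1 := bf_lower_even hF (by omega : n = ℓ + m + 1) hℓ hm f hf
  have a2 := bf_upper (bf_lower_even (bfMid_C hF) (by omega : n = ℓ + m + 1) hℓ hm f hf)
  have hsplit : ∀ g : Finset (Fin n) → ℝ, ∑ B ∈ F, g B =
      ∑ B ∈ F.filter (fun B => B.card ≤ ℓ), g B + ∑ B ∈ F.filter (fun B => n ≤ B.card + ℓ), g B
      + ∑ B ∈ F.filter (fun B => B.card = m), g B := by
    intro g
    rw [← Finset.sum_filter_add_sum_filter_not F (fun B => B.card ≤ ℓ),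
      ← Finset.sum_filter_add_sum_filter_not (F.filter (fun B => ¬ B.card ≤ ℓ)) (fun B => n ≤ B.card + ℓ),
      Finset.filter_filter, Finset.filter_filter, add_assoc]
    congr 3
    · ext B
      simp only [Finset.mem_filter]
      constructor
      · rintro ⟨h1, h2⟩; exact ⟨h1, by omega⟩
      · rintro ⟨h1, h2⟩; exact ⟨h1, by omega⟩
    · ext B
      simp only [Finset.mem_filter]
      constructor
      · rintro ⟨h1, h2⟩; exact ⟨h1, by omega⟩
      · rintro ⟨h1, h2⟩; exact ⟨h1, by omega⟩
  set Fm := F.filter (fun B => B.card = m) with hFm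
  have hN' : n.choose (m+1) = n.choose ℓ := by
    rw [← Nat.choose_symm (show ℓ ≤ n by omega)]
    congr 1; omega
  have hNN : (n.choose ℓ:ℝ) * (m+1) = (n.choose m:ℝ)*m := by
    have e := Nat.choose_succ_right_eq n m
    rw [hN', show n - m = m by omega] at e
    exact_mod_cast e
  have hN0 : (0:ℝ) < n.choose m := by exact_mod_cast Nat.choose_pos (by omega)
  have hw : (n.choose ℓ:ℝ)/(n.choose m:ℝ) = m/(m+1) := by
    rw [div_eq_div_iff hN0.ne' (by positivity), hNN, mul_comm]
  have hS : (F.card:ℝ) = n.choose m + n.choose ℓ + E := by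
    rw [hE]
    unfold Sigma2
    rw [show n/2 = m by omega, hN']
    push_cast; ring
  have hFmc : (Fm.card:ℝ) ≤ n.choose m := by
    have : Fm ⊆ (Finset.univ : Finset (Fin n)).powersetCard m := by
      intro B hB
      rw [Finset.mem_powersetCard]
      exact ⟨Finset.subset_univ _, (Finset.mem_filter.1 hB).2⟩
    have := Finset.card_le_card this
    rw [Finset.card_powersetCard, Finset.card_fin] at this
    exact_mod_cast this
  set w : ℝ := m/(m+1) with hwd
  have hw1 : 0 ≤ 1 - w := by
    have : 1 - w = 1/((m:ℝ)+1) := by rw [hwd]; field_simp; ring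
    rw [this]; positivity
  have hNw : (n.choose ℓ:ℝ) = w * n.choose m := by
    rw [← hw]; field_simp
  have hgm : ∀ B ∈ Fm, bfg F ℓ B = (1 - w) + w*(bfP F B + bfQ F B - 1) := by
    intro B hB
    unfold bfg
    rw [(Finset.mem_filter.1 hB).2, hw]; ring
  have hEg : (E:ℝ) ≤ ∑ B ∈ F, bfg F ℓ B - (1-w)*Fm.card := by
    unfold bfg
    rw [Finset.sum_sub_distrib]
    have h := bf_lym2 (ℓ := ℓ) F
    simp only [Finset.sum_const, nsmul_eq_mul, mul_one]
    have := mul_le_mul_of_nonneg_left hFmc hw1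
    linarith
  have hT : (∑ B ∈ F, (bfT F B:ℝ)) ≤ 2 * (numButterflies F:ℝ) := by exact_mod_cast bfT_sum F
  have hf0 : 0 ≤ f := by
    have := mul_nonneg (by positivity : (0:ℝ) ≤ (m+1)*m) (by linarith : (0:ℝ) ≤ m-1)
    linarith
  have a3 : ∑ B ∈ Fm, f * bfg F ℓ B ≤ ∑ B ∈ Fm, ((bfT F B:ℝ)/2 + f*(1-w)) := by
    refine Finset.sum_le_sum fun B hB => ?_
    rw [hgm B hB, bfT_tau]
    have hB' := Finset.mem_filter.1 hB
    have hBm := hF B hB'.1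
    have hP := bfLoc_P hF B hBm.1
    have hQ := bfLoc_Q hF B hBm.2
    rw [hB'.2] at hP hQ
    rw [show (n:ℝ) - m = m by linarith] at hQ
    have := bf_levelm hP hQ (by linarith)
    have e : f*w = (m:ℝ)^2*(m-1)/2 := by rw [hf, hwd]; field_simp
    have e2 : f * (1 - w + w * (bfP F B + bfQ F B - 1)) = f*(1-w) + f*w*(bfP F B + bfQ F B - 1) := by
      ring
    rw [e2, e]
    linarith
  rw [Finset.sum_add_distrib, Finset.sum_const, nsmul_eq_mul] at a3
  have h1 := hsplit (fun B => f * bfg F ℓ B)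
  have h2 := hsplit (fun B => (bfT F B:ℝ)/2)
  rw [← Finset.mul_sum] at h1
  rw [← Finset.sum_div] at h2
  have h3 := mul_le_mul_of_nonneg_left hEg hf0
  have : ((E * fB n : ℕ):ℝ) ≤ (numButterflies F:ℝ) := by
    push_cast
    rw [hfB]
    linarith
  exact_mod_cast this

theorem bf_small {n : ℕ} (hn : 1 ≤ n) (G : Finset (Finset (Fin n))) :
    (G.filter (fun B => B.card < 5)).card ≤ 5 * n^4 := by
  have h1 : (G.filter (fun B => B.card < 5)).card = ∑ k ∈ Finset.range 5,
      ((G.filter (fun B => B.card < 5)).filter (fun B => B.card = k)).card := by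
    apply Finset.card_eq_sum_card_fiberwise
    intro B hB
    simp only [Finset.coe_filter, Set.mem_ofPred_eq] at hB
    simp only [Finset.coe_range, Set.mem_Iio]
    exact hB.2
  rw [h1]
  have h2 : ∀ k ∈ Finset.range 5,
      ((G.filter (fun B => B.card < 5)).filter (fun B => B.card = k)).card ≤ n^4 := by
    intro k hk
    rw [Finset.mem_range] at hk
    have : (G.filter (fun B => B.card < 5)).filter (fun B => B.card = k) ⊆
        (Finset.univ : Finset (Fin n)).powersetCard k := by
      intro B hB
      rw [Finset.mem_powersetCard]
      exact ⟨Finset.subset_univ _, (Finset.mem_filter.1 hB).2⟩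
    have := Finset.card_le_card this
    rw [Finset.card_powersetCard, Finset.card_fin] at this
    refine this.trans ((Nat.choose_le_pow n k).trans ?_)
    exact Nat.pow_le_pow_right hn (by omega)
  refine (Finset.sum_le_card_nsmul _ _ _ h2).trans ?_
  simp

theorem bf_lambda {n : ℕ} (hn : 1 ≤ n) (G : Finset (Finset (Fin n))) (V : Finset (Fin n))
    (hV : ∀ B ∈ G, B ⊆ V) (hG : ∀ B ∈ G, (bfD G B).card ≤ 1) :
    (G.card:ℝ) ≤ 5/4 * (V.card.choose (V.card/2):ℝ) + 5*(n:ℝ)^4 := by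
  have hs := bf_small hn G
  have hsp := Finset.card_filter_add_card_filter_not (s := G) (fun B => B.card < 5)
  set G' := G.filter (fun B => ¬ B.card < 5) with hG'
  have h := bfP_univ G' V
  have e : G'.filter (fun B => B ⊆ V) = G' := by
    rw [Finset.filter_eq_self]
    intro B hB
    exact hV B (Finset.mem_filter.1 hB).1
  rw [e] at h
  have hc0 : (0:ℝ) < (V.card.choose (V.card/2):ℝ) := by
    exact_mod_cast Nat.choose_pos (by omega)
  have hp : ∀ B ∈ G', (4/5)/(V.card.choose (V.card/2):ℝ) ≤ (1 - bfP G' B)/(V.card.choose B.card:ℝ) := by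
    intro B hB
    have hB' := Finset.mem_filter.1 hB
    have hb5 : (5:ℝ) ≤ B.card := by exact_mod_cast (not_lt.1 hB'.2)
    have hpB : bfP G' B ≤ 1/5 := by
      refine (bfP_le_sum G' B).trans ?_
      have hcard : (G'.filter (fun A => A ⊂ B)).card ≤ 1 := by
        refine le_trans (Finset.card_le_card ?_) (hG B hB'.1)
        exact Finset.filter_subset_filter _ (Finset.filter_subset _ _)
      have hcard' : ((G'.filter (fun A => A ⊂ B)).card:ℝ) ≤ 1 := by exact_mod_cast hcard
      have := Finset.sum_le_card_nsmul (G'.filter (fun A => A ⊂ B))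
        (fun A => 1/(B.card.choose A.card:ℝ)) (1/5) (by
          intro A hA
          have hA' := Finset.mem_filter.1 hA
          have h1 := Finset.card_lt_card hA'.2
          have h2 := (Finset.mem_filter.1 hA'.1).2
          have h3 := bf_choose_unimodal B.card 1 A.card (by omega) (by omega)
          rw [Nat.choose_one_right] at h3
          have h3' : (B.card:ℝ) ≤ B.card.choose A.card := by exact_mod_cast h3
          apply one_div_le_one_div_of_le (by norm_num)
          linarith)
      rw [nsmul_eq_mul] at this
      linarith
    have hcB : (V.card.choose B.card:ℝ) ≤ V.card.choose (V.card/2) := by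
      exact_mod_cast Nat.choose_le_middle _ _
    have hcB0 : (0:ℝ) < V.card.choose B.card := by
      exact_mod_cast Nat.choose_pos (Finset.card_le_card (hV B hB'.1))
    apply div_le_div₀ _ _ hcB0 hcB <;> linarith
  have h2 := (Finset.card_nsmul_le_sum _ _ _ hp).trans h
  rw [nsmul_eq_mul, ← mul_div_assoc, div_le_one hc0] at h2
  have h3 : (G.card:ℝ) ≤ 5*(n:ℝ)^4 + G'.card := by
    have : G.card ≤ 5*n^4 + G'.card := by omega
    exact_mod_cast this
  linarith

theorem bf_lambda_x {n : ℕ} (hn : 1 ≤ n) (H : Finset (Finset (Fin n))) (x : Fin n)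
    (hx : ∀ B ∈ H, x ∈ B) (hH : ∀ B ∈ H, (bfD H B).card ≤ 1) :
    (H.card:ℝ) ≤ 5/4 * ((n-1).choose ((n-1)/2):ℝ) + 5*(n:ℝ)^4 := by
  have hinj : Set.InjOn (fun B : Finset (Fin n) => B.erase x) (H : Set (Finset (Fin n))) := by
    intro A hA B hB h
    have h' : A.erase x = B.erase x := h
    rw [← Finset.insert_erase (hx A hA), ← Finset.insert_erase (hx B hB), h']
  have hc := Finset.card_image_of_injOn hinj
  have h := bf_lambda hn (H.image (fun B => B.erase x)) (Finset.univ.erase x) (by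
    intro B hB
    rw [Finset.mem_image] at hB
    obtain ⟨A, _, rfl⟩ := hB
    exact Finset.erase_subset_erase _ (Finset.subset_univ _)) (by
    intro B hB
    rw [Finset.mem_image] at hB
    obtain ⟨A, hA, rfl⟩ := hB
    refine le_trans (le_trans (Finset.card_le_card ?_)
      (Finset.card_image_le (s := bfD H A) (f := fun B => B.erase x))) (hH A hA)
    intro C hC
    simp only [bfD, Finset.mem_filter, Finset.mem_image] at hC ⊢
    obtain ⟨⟨C', hC', rfl⟩, h2⟩ := hC
    refine ⟨C', ⟨hC', ?_⟩, rfl⟩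
    refine ⟨?_, ?_⟩
    · rw [← Finset.insert_erase (hx C' hC'), ← Finset.insert_erase (hx A hA)]
      exact Finset.insert_subset_insert _ h2.1
    · intro h3
      exact h2.2 (Finset.erase_subset_erase _ h3))
  rw [hc] at h
  simpa using h

theorem bf_excl {n : ℕ} (hn : 1 ≤ n) (F : Finset (Finset (Fin n))) (C : Finset (Fin n))
    (hC : C ∈ F) (hcard : n ≤ C.card + 1) :
    (F.card:ℝ) ≤ (∑ B ∈ F, bfT F B : ℕ) + 1 + 3*(5/4 * ((n-1).choose ((n-1)/2):ℝ) + 5*(n:ℝ)^4) := by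
  have : Nonempty (Fin n) := ⟨⟨0, hn⟩⟩
  have hCc := bf_card_compl C
  obtain ⟨x, hx⟩ := (Finset.card_le_one_iff_subset_singleton (s := Cᶜ)).1 (by omega)
  set bad := F.filter (fun B => 1 ≤ bfT F B) with hbad
  have hbadc : bad.card ≤ ∑ B ∈ F, bfT F B := by
    rw [Finset.card_eq_sum_ones]
    refine (Finset.sum_le_sum (fun B hB => (Finset.mem_filter.1 hB).2)).trans ?_
    exact Finset.sum_le_sum_of_subset (Finset.filter_subset _ _)
  set G1 := F.filter (fun B => x ∉ B ∧ (bfD F B).card ≤ 1) with hG1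
  set G2 := F.filter (fun B => x ∈ B ∧ (bfD F B).card ≤ 1) with hG2
  set G3 := F.filter (fun B => x ∈ B ∧ bfU F B = ∅) with hG3
  have hcov : F ⊆ bad ∪ {C} ∪ G1 ∪ G2 ∪ G3 := by
    intro B hB
    simp only [Finset.mem_union, Finset.mem_singleton, hbad, hG1, hG2, hG3, Finset.mem_filter, hB,
      true_and]
    by_contra hcon
    push Not at hcon
    obtain ⟨⟨⟨⟨c1, c2⟩, c3⟩, c4⟩, c5⟩ := hcon
    have hU : (bfU F B).Nonempty := by
      by_cases hxB : x ∈ B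
      · exact c5 hxB
      · refine ⟨C, ?_⟩
        simp only [bfU, Finset.mem_filter]
        refine ⟨hC, Finset.ssubset_iff_subset_ne.2 ⟨?_, c2⟩⟩
        intro y hy
        by_contra hyC
        have := hx (Finset.mem_compl.2 hyC)
        rw [Finset.mem_singleton] at this
        exact hxB (this ▸ hy)
    have hD : 1 < (bfD F B).card := by
      by_cases hxB : x ∈ B
      · exact c4 hxB
      · exact c3 hxB
    have hU' := Finset.card_pos.2 hU
    have h2 : 0 < (bfD F B).card.choose 2 := Nat.choose_pos hD
    have : 0 < bfT F B := by
      unfold bfT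
      have : 0 < (bfU F B).card * ((bfD F B).card.choose 2 + (bfD1 F B).card.choose 2) := by
        apply Nat.mul_pos hU'; omega
      omega
    omega
  have b1 : (G1.card:ℝ) ≤ 5/4 * ((n-1).choose ((n-1)/2):ℝ) + 5*(n:ℝ)^4 := by
    have h := bf_lambda hn G1 (Finset.univ.erase x) (by
      intro B hB y hy
      have := (Finset.mem_filter.1 hB).2.1
      rw [Finset.mem_erase]
      refine ⟨?_, Finset.mem_univ _⟩
      rintro rfl
      exact this hy) (by
      intro B hB
      refine le_trans (Finset.card_le_card ?_) (Finset.mem_filter.1 hB).2.2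
      exact Finset.filter_subset_filter _ (Finset.filter_subset _ _))
    simpa using h
  have b2 := bf_lambda_x hn G2 x (fun B hB => (Finset.mem_filter.1 hB).2.1) (by
      intro B hB
      refine le_trans (Finset.card_le_card ?_) (Finset.mem_filter.1 hB).2.2
      exact Finset.filter_subset_filter _ (Finset.filter_subset _ _))
  have b3 := bf_lambda_x hn G3 x (fun B hB => (Finset.mem_filter.1 hB).2.1) (by
      intro B hB
      have : bfD G3 B = ∅ := by
        rw [Finset.eq_empty_iff_forall_notMem]
        intro A hA
        simp only [bfD, Finset.mem_filter] at hA
        have h1 := (Finset.mem_filter.1 hA.1).2.2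
        have h2 : B ∈ bfU F A := Finset.mem_filter.2 ⟨(Finset.mem_filter.1 hB).1, hA.2⟩
        rw [h1] at h2
        simp at h2
      rw [this]; simp)
  have hle := Finset.card_le_card hcov
  have u1 := Finset.card_union_le (bad ∪ {C} ∪ G1 ∪ G2) G3
  have u2 := Finset.card_union_le (bad ∪ {C} ∪ G1) G2
  have u3 := Finset.card_union_le (bad ∪ {C}) G1
  have u4 := Finset.card_union_le bad {C}
  rw [Finset.card_singleton] at u4
  have hfin : F.card ≤ (∑ B ∈ F, bfT F B) + 1 + G1.card + G2.card + G3.card := by omega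
  have hfin' : (F.card:ℝ) ≤ (∑ B ∈ F, bfT F B : ℕ) + 1 + G1.card + G2.card + G3.card := by
    exact_mod_cast hfin
  linarith

theorem bf_sigma_big (n : ℕ) (hn : 2000000002 ≤ n) :
    39/10 * ((n-1).choose ((n-1)/2):ℝ) ≤ Sigma2 n := by
  unfold Sigma2
  rcases Nat.even_or_odd' n with ⟨m, hm | hm⟩
  · obtain ⟨ℓ, rfl⟩ : ∃ ℓ, m = ℓ + 1 := ⟨m - 1, by omega⟩
    have e1 : (n-1)/2 = ℓ := by omega
    have e2 : n/2 = ℓ+1 := by omega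
    have e3 : n - 1 = 2*ℓ+1 := by omega
    rw [e1, e2, e3]
    have e4 : n.choose (ℓ+1) = 2 * (2*ℓ+1).choose ℓ := by
      rw [show n = (2*ℓ+1)+1 by omega, Nat.choose_succ_succ', Nat.choose_symm_half]; ring
    have e5 := Nat.choose_succ_right_eq n (ℓ+1)
    rw [e4, show n - (ℓ+1) = ℓ+1 by omega] at e5
    have e5' : (n.choose (ℓ+1+1):ℝ)*((ℓ:ℝ)+1+1) = 2*((2*ℓ+1).choose ℓ:ℝ)*(ℓ+1) := by
      exact_mod_cast e5
    have hl : (1000000:ℝ) ≤ ℓ := by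
      have : 1000000 ≤ ℓ := by omega
      exact_mod_cast this
    push_cast [e4]
    set c := ((2*ℓ+1).choose ℓ:ℝ)
    have hc : 0 ≤ c := by positivity
    have : 19/10*c ≤ (n.choose (ℓ+1+1):ℝ) := by
      have : 19/10*c*((ℓ:ℝ)+1+1) ≤ (n.choose (ℓ+1+1):ℝ)*((ℓ:ℝ)+1+1) := by
        rw [e5']; nlinarith
      exact le_of_mul_le_mul_right this (by linarith)
    linarith
  · have e1 : (n-1)/2 = m := by omega
    have e2 : n/2 = m := by omega
    have e3 : n - 1 = 2*m := by omega
    rw [e1, e2, e3]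
    have e4 : n.choose (m+1) = (2*m).choose m + (2*m).choose (m+1) := by
      rw [hm, Nat.choose_succ_succ']
    have e6 : n.choose m = n.choose (m+1) := by
      rw [hm, Nat.choose_symm_half]
    have e5 := Nat.choose_succ_right_eq (2*m) m
    rw [show 2*m - m = m by omega] at e5
    have e5' : ((2*m).choose (m+1):ℝ)*((m:ℝ)+1) = ((2*m).choose m:ℝ)*m := by
      exact_mod_cast e5
    have hl : (1000000:ℝ) ≤ m := by
      have : 1000000 ≤ m := by omega
      exact_mod_cast this
    rw [e6, e4]
    push_cast
    set c := ((2*m).choose m:ℝ)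
    have hc : 0 ≤ c := by positivity
    have : 19/20*c ≤ ((2*m).choose (m+1):ℝ) := by
      have : 19/20*c*((m:ℝ)+1) ≤ ((2*m).choose (m+1):ℝ)*((m:ℝ)+1) := by
        rw [e5']; nlinarith
      exact le_of_mul_le_mul_right this (by linarith)
    linarith

theorem bf_c0_big (n : ℕ) (hn : 2000000002 ≤ n) :
    200*(n:ℝ)^4 ≤ ((n-1).choose ((n-1)/2):ℝ) := by
  have h1 := Nat.pow_le_choose (α := ℝ) 8 (n-1)
  have h2 := bf_choose_mono (n-1) 8 ((n-1)/2) (by omega) le_rfl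
  have h3 : ((n-1+1-8:ℕ):ℝ) = (n:ℝ) - 8 := by
    rw [show n - 1 + 1 - 8 = n - 8 by omega, Nat.cast_sub (by omega)]; simp
  have hnr : (2000000002:ℝ) ≤ n := by exact_mod_cast hn
  have h2' : ((n-1).choose 8:ℝ) ≤ ((n-1).choose ((n-1)/2):ℝ) := by exact_mod_cast h2
  have h1' : ((n:ℝ)-8)^8 ≤ 40320*((n-1).choose 8:ℝ) := by
    rw [h3] at h1
    have hfac : ((8).factorial:ℝ) = 40320 := by norm_num [Nat.factorial]
    rw [div_le_iff₀ (by positivity), hfac] at h1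
    linarith
  have h4 : ((n:ℝ)/2)^8 ≤ ((n:ℝ)-8)^8 := by gcongr; linarith
  have h5 : (10000:ℝ)^4 ≤ (n:ℝ)^4 := by gcongr; linarith
  have h6 : (n:ℝ)^4*10000^4 ≤ (n:ℝ)^4*(n:ℝ)^4 := by gcongr
  have h7 : ((n:ℝ)/2)^8 = (n:ℝ)^4*(n:ℝ)^4/256 := by ring
  nlinarith

theorem bf_mid_of_few {n : ℕ} (hn : 2000000002 ≤ n) (F : Finset (Finset (Fin n)))
    (hF : Sigma2 n ≤ F.card) (hb : numButterflies F ≤ n^4) : bfMid F := by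
  have key : ∀ G : Finset (Finset (Fin n)), Sigma2 n ≤ G.card → (∑ B ∈ G, bfT G B) ≤ 2*n^4 →
      ∀ C ∈ G, C.card + 2 ≤ n := by
    intro G hG hS C hC
    by_contra hcon
    have h := bf_excl (by omega) G C hC (by omega)
    have h1 := bf_sigma_big n hn
    have h2 := bf_c0_big n hn
    have hG' : (Sigma2 n:ℝ) ≤ G.card := by exact_mod_cast hG
    have hS' : ((∑ B ∈ G, bfT G B : ℕ):ℝ) ≤ 2*(n:ℝ)^4 := by exact_mod_cast hS
    have h4 : (1:ℝ) ≤ (n:ℝ)^4 := by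
      apply one_le_pow₀
      have : 1 ≤ n := by omega
      exact_mod_cast this
    linarith
  have hS := bfT_sum F
  intro B hB
  refine ⟨?_, key F hF (by omega) B hB⟩
  have := key (bfC F) (by rw [bfC_card]; exact hF) (by
    rw [bfC_sum]; simp only [bfT_C]; omega) Bᶜ (by rw [mem_bfC, compl_compl]; exact hB)
  have h := bf_card_compl B
  omega

theorem bf_final {n E : ℕ} (hn : 2000000002 ≤ n) (hE : E ≤ n) (F : Finset (Finset (Fin n)))
    (hF : F.card = Sigma2 n + E) : E * fB n ≤ numButterflies F := by
  by_contra hcon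
  push Not at hcon
  have hfB : fB n ≤ n^3 := by
    unfold fB
    have h1 : (n+1)/2+1 ≤ n := by omega
    have h2 : ((n+1)/2).choose 2 ≤ n^2 :=
      (Nat.choose_le_pow _ 2).trans (Nat.pow_le_pow_left (by omega) 2)
    calc _ ≤ n * n^2 := Nat.mul_le_mul h1 h2
      _ = n^3 := by ring
  have hle : E * fB n ≤ n^4 := by
    calc _ ≤ n * n^3 := Nat.mul_le_mul hE hfB
      _ = n^4 := by ring
  have hmid := bf_mid_of_few hn F (by omega) (by omega)
  rcases Nat.even_or_odd' n with ⟨m, hm | hm⟩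
  · exact absurd (bf_main_even hmid hm (by omega) hF) (by omega)
  · exact absurd (bf_main_odd hmid hm (by omega) hF) (by omega)

/-- Main theorem, part (b): for `1 ≤ E ≤ n/100`, every `F ⊆ 2^[n]` with
`|F| = Σ(n,2) + E` contains at least `E·f(n)` copies of the butterfly. -/
theorem supersat_butterfly_exact :
    ∃ n₀ : ℕ, ∀ n : ℕ, n₀ ≤ n → ∀ E : ℕ, 1 ≤ E → (E : ℝ) ≤ (n : ℝ) / 100 →
      ∀ F : Finset (Finset (Fin n)), F.card = Sigma2 n + E →
      E * fB n ≤ numButterflies F := by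
  refine ⟨2000000002, fun n hn E _ hE F hF => bf_final hn ?_ F hF⟩
  have h : (E:ℝ) ≤ (n:ℝ) := by
    have : (0:ℝ) ≤ n := by positivity
    linarith
  exact_mod_cast h
end

section
/- For every real ε ∈ (0,1) there exists n₀ such that for every n ≥ n₀ and every integer m with 1 ≤ m ≤ 2^(n^(1−ε)) the following holds: if F ⊆ 2^[n] is butterfly-free and |F \ S| ≥ m for every S ∈ Σ*(n,2), then |F| ≤ Σ(n,2) − m/4. -/
def ButterflyFree {n : ℕ} (F : Finset (Finset (Fin n))) : Prop :=
  ∀ S ⊆ F, ¬ IsButterfly S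

def levelFam (n k : ℕ) : Finset (Finset (Fin n)) :=
  Finset.univ.filter (fun S => S.card = k)

def SigmaStar (n : ℕ) : Set (Finset (Finset (Fin n))) :=
  { levelFam n (n / 2) ∪ levelFam n (n / 2 + 1),
    levelFam n ((n + 1) / 2 - 1) ∪ levelFam n ((n + 1) / 2) }


section ButterflyHelpers

open Finset
open scoped FinsetFamily

def edgeCnt {α : Type*} [DecidableEq α] (S : Finset (Finset α)) : ℕ :=
  ∑ x ∈ S, (x.filter (fun i => x.erase i ∈ S)).card

lemma edgeCnt_le {α : Type*} [DecidableEq α] (V : Finset α) :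
    ∀ S : Finset (Finset α), (∀ x ∈ S, x ⊆ V) → 2 ^ edgeCnt S ≤ S.card ^ S.card := by
  induction V using Finset.induction_on with
  | empty =>
    intro S hS
    have h0 : edgeCnt S = 0 := by
      unfold edgeCnt
      refine Finset.sum_eq_zero fun x hx => ?_
      have : x = ∅ := Finset.subset_empty.1 (hS x hx)
      simp [this]
    rw [h0]
    simp only [pow_zero]
    exact Nat.one_le_iff_ne_zero.2 (by
      rcases Nat.eq_zero_or_pos S.card with h | h
      · simp [h]
      · positivity)
  | insert a V ha ih =>
    intro S hS
    set S0 := S.filter (fun x => a ∉ x) with hS0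
    set T := S.filter (fun x => a ∈ x) with hT
    set S1 := T.image (fun x => x.erase a) with hS1
    have hinj : Set.InjOn (fun x : Finset α => x.erase a) T := by
      intro x hx y hy hxy
      have hx' : a ∈ x := (Finset.mem_filter.1 hx).2
      have hy' : a ∈ y := (Finset.mem_filter.1 hy).2
      have := congrArg (insert a) hxy
      simpa [Finset.insert_erase hx', Finset.insert_erase hy'] using this
    have c1 : S1.card = T.card := Finset.card_image_of_injOn hinj
    have cS : S.card = S0.card + S1.card := by
      rw [c1, hS0, hT, add_comm]
      exact (Finset.card_filter_add_card_filter_not (s := S) (fun x => a ∈ x)).symm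
    have e0 := ih S0 (by
      intro x hx i hi
      have h := Finset.mem_filter.1 hx
      rcases Finset.mem_insert.1 (hS x h.1 hi) with h1 | h1
      · exact absurd (h1 ▸ hi) h.2
      · exact h1)
    have e1 := ih S1 (by
      intro x hx i hi
      obtain ⟨y, hy, rfl⟩ := Finset.mem_image.1 hx
      have h := Finset.mem_filter.1 hy
      rcases Finset.mem_insert.1 (hS y h.1 (Finset.mem_of_mem_erase hi)) with h1 | h1
      · exact absurd h1 (Finset.ne_of_mem_erase hi)
      · exact h1)
    have key : edgeCnt S ≤ edgeCnt S0 + edgeCnt S1 + (T.filter (fun x => x.erase a ∈ S0)).card := by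
      have h1 : edgeCnt S = ∑ x ∈ T, (x.filter (fun i => x.erase i ∈ S)).card
          + ∑ x ∈ S0, (x.filter (fun i => x.erase i ∈ S)).card :=
        (Finset.sum_filter_add_sum_filter_not S (fun x => a ∈ x) _).symm
      have h2 : ∑ x ∈ S0, (x.filter (fun i => x.erase i ∈ S)).card ≤ edgeCnt S0 := by
        refine Finset.sum_le_sum fun x hx => Finset.card_le_card ?_
        intro i hi
        have hx' := Finset.mem_filter.1 hx
        have hi' := Finset.mem_filter.1 hi
        refine Finset.mem_filter.2 ⟨hi'.1, Finset.mem_filter.2 ⟨hi'.2, ?_⟩⟩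
        exact fun h => hx'.2 (Finset.mem_of_mem_erase h)
      have h3 : ∑ x ∈ T, (x.filter (fun i => x.erase i ∈ S)).card ≤
          edgeCnt S1 + (T.filter (fun x => x.erase a ∈ S0)).card := by
        unfold edgeCnt
        rw [hS1, Finset.sum_image hinj, Finset.card_filter, ← Finset.sum_add_distrib]
        refine Finset.sum_le_sum fun x hx => ?_
        have hx' := Finset.mem_filter.1 hx
        have : x.filter (fun i => x.erase i ∈ S) ⊆
            ((x.erase a).filter (fun i => (x.erase a).erase i ∈ S1)) ∪
             (if x.erase a ∈ S0 then {a} else ∅) := by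
          intro i hi
          have hi' := Finset.mem_filter.1 hi
          by_cases hia : i = a
          · subst hia
            have : x.erase i ∈ S0 := Finset.mem_filter.2 ⟨hi'.2, by simp⟩
            simp [this]
          · refine Finset.mem_union_left _ (Finset.mem_filter.2 ⟨Finset.mem_erase.2 ⟨hia, hi'.1⟩, ?_⟩)
            refine Finset.mem_image.2 ⟨x.erase i, Finset.mem_filter.2 ⟨hi'.2, ?_⟩, ?_⟩
            · exact Finset.mem_erase.2 ⟨fun h => hia h.symm, hx'.2⟩
            · exact Finset.erase_right_comm
        refine (Finset.card_le_card this).trans ((Finset.card_union_le _ _).trans ?_)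
        gcongr
        split_ifs <;> simp
      omega
    have k1 : (T.filter (fun x => x.erase a ∈ S0)).card ≤ S1.card := by
      rw [c1]; exact Finset.card_filter_le _ _
    have k0 : (T.filter (fun x => x.erase a ∈ S0)).card ≤ S0.card := by
      refine Finset.card_le_card_of_injOn (fun x => x.erase a) ?_ ?_
      · intro x hx; exact (Finset.mem_filter.1 hx).2
      · exact hinj.mono (fun x hx => (Finset.mem_filter.1 hx).1)
    set c := (T.filter (fun x => x.erase a ∈ S0)).card
    have arith : ∀ p q c : ℕ, c ≤ p → p ≤ q → 2 ^ c * (p ^ p * q ^ q) ≤ (p + q) ^ (p + q) := by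
      intro p q c h1 h2
      calc 2 ^ c * (p ^ p * q ^ q) ≤ 2 ^ p * (p ^ p * q ^ q) := by
            gcongr; norm_num
        _ = (2 * p) ^ p * q ^ q := by rw [mul_pow]; ring
        _ ≤ (p + q) ^ p * (p + q) ^ q := by gcongr <;> omega
        _ = _ := by rw [pow_add]
    calc 2 ^ edgeCnt S ≤ 2 ^ (edgeCnt S0 + edgeCnt S1 + c) := Nat.pow_le_pow_right (by norm_num) key
      _ = 2 ^ c * (2 ^ edgeCnt S0 * 2 ^ edgeCnt S1) := by rw [pow_add, pow_add]; ring
      _ ≤ 2 ^ c * (S0.card ^ S0.card * S1.card ^ S1.card) := by gcongr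
      _ ≤ S.card ^ S.card := by
        rw [cS]
        rcases le_total S0.card S1.card with h | h
        · exact arith _ _ _ k0 h
        · rw [mul_comm (S0.card ^ _), add_comm]; exact arith _ _ _ k1 h

lemma expand_small {n t : ℕ} (X : Finset (Finset (Fin n))) (hX : ∀ x ∈ X, x.card = t)
    (h : (6 * X.card) ^ 6 < 2 ^ t) : 5 * X.card ≤ (∂ X).card := by
  by_contra hc
  push Not at hc
  have hpos : 0 < X.card := by omega
  set S := X ∪ ∂ X with hS
  have hSc : S.card ≤ 6 * X.card := by
    have := Finset.card_union_le X (∂ X)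
    rw [hS]; omega
  have hD : t * X.card ≤ edgeCnt S := by
    unfold edgeCnt
    calc t * X.card = ∑ x ∈ X, t := by simp [mul_comm]
      _ ≤ ∑ x ∈ X, (x.filter (fun i => x.erase i ∈ S)).card := by
        refine Finset.sum_le_sum fun x hx => ?_
        rw [Finset.filter_true_of_mem, hX x hx]
        intro i hi
        exact Finset.mem_union_right _ (Finset.erase_mem_shadow hx hi)
      _ ≤ _ := Finset.sum_le_sum_of_subset Finset.subset_union_left
  have h1 := edgeCnt_le Finset.univ S (fun x _ => Finset.subset_univ x)
  have hSp : 0 < S.card := Finset.card_pos.2 ((Finset.card_pos.1 hpos).mono Finset.subset_union_left)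
  have h2 : (2 ^ t) ^ X.card ≤ ((6 * X.card) ^ 6) ^ X.card := by
    calc (2 ^ t) ^ X.card = 2 ^ (t * X.card) := by rw [pow_mul]
      _ ≤ 2 ^ edgeCnt S := Nat.pow_le_pow_right (by norm_num) hD
      _ ≤ S.card ^ S.card := h1
      _ ≤ (6 * X.card) ^ S.card := Nat.pow_le_pow_left hSc _
      _ ≤ (6 * X.card) ^ (6 * X.card) := Nat.pow_le_pow_right (by omega) hSc
      _ = _ := by rw [pow_mul]
  have := lt_of_lt_of_le (Nat.pow_lt_pow_left h hpos.ne') h2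
  exact lt_irrefl _ this

/-- size condition -/
def Cond (n s : ℕ) : Prop := 100 ≤ n ∧ (24 * n * s) ^ 6 < 2 ^ (n / 2)

lemma shadow_ge {n t : ℕ} (X : Finset (Finset (Fin n))) (hX : ∀ x ∈ X, x.card = t)
    (ht : n + 1 ≤ 2 * t) : X.card ≤ (∂ X).card := by
  by_cases htn : n < t
  · have : X = ∅ := by
      refine Finset.eq_empty_of_forall_notMem fun x hx => ?_
      have := Finset.card_le_univ x
      rw [hX x hx] at this
      simp at this; omega
    simp [this]
  have h := Finset.local_lubell_yamamoto_meshalkin_inequality_mul (𝒜 := X) (r := t) (fun x hx => hX x hx)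
  simp only [Fintype.card_fin] at h
  have h2 : (∂ X).card * (n - t + 1) ≤ (∂ X).card * t := Nat.mul_le_mul_left _ (by omega)
  exact Nat.le_of_mul_le_mul_right (h.trans h2) (by omega)

lemma expand {n s t : ℕ} (hc : Cond n s) (X : Finset (Finset (Fin n))) (hX : ∀ x ∈ X, x.card = t)
    (ht : n + 2 ≤ 2 * t) : X.card + 4 * min X.card s ≤ (∂ X).card := by
  by_cases hsmall : X.card ≤ 4 * n * s
  · have : 5 * X.card ≤ (∂ X).card := by
      apply expand_small X hX
      calc (6 * X.card) ^ 6 ≤ (24 * n * s) ^ 6 := Nat.pow_le_pow_left (by nlinarith) _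
        _ < 2 ^ (n / 2) := hc.2
        _ ≤ 2 ^ t := Nat.pow_le_pow_right (by norm_num) (by omega)
    have := min_le_left X.card s
    omega
  · push Not at hsmall
    by_cases htn : n < t
    · have : X = ∅ := by
        refine Finset.eq_empty_of_forall_notMem fun x hx => ?_
        have := Finset.card_le_univ x
        rw [hX x hx] at this
        simp at this; omega
      simp [this] at hsmall
    have h := Finset.local_lubell_yamamoto_meshalkin_inequality_mul (𝒜 := X) (r := t) (fun x hx => hX x hx)
    simp only [Fintype.card_fin] at h
    have h0 := shadow_ge X hX (by omega)
    obtain ⟨d, hd⟩ := Nat.exists_eq_add_of_le h0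
    have h2 : X.card * (n - t + 2) ≤ (∂ X).card * (n - t + 1) :=
      (Nat.mul_le_mul_left _ (by omega)).trans h
    have h3 : X.card ≤ d * n := by
      rw [hd] at h2
      have : d * (n - t + 1) ≤ d * n := Nat.mul_le_mul_left _ (by omega)
      nlinarith
    have h4 : 4 * s ≤ d := by
      have : 4 * s * n < d * n := by nlinarith
      exact (Nat.lt_of_mul_lt_mul_right this).le
    have := min_le_right X.card s
    omega

def ThreeFree {n : ℕ} (F : Finset (Finset (Fin n))) : Prop :=
  ∀ A ∈ F, ∀ B ∈ F, ∀ C ∈ F, A ⊂ B → B ⊂ C → False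

lemma mem_shadow_card {n t : ℕ} {X : Finset (Finset (Fin n))} (hX : ∀ x ∈ X, x.card = t)
    {y : Finset (Fin n)} (hy : y ∈ ∂ X) : y.card + 1 = t ∧ ∃ x ∈ X, y ⊂ x := by
  obtain ⟨x, hx, hyx, hc⟩ := Finset.mem_shadow_iff_exists_mem_card_add_one.1 hy
  refine ⟨by rw [← hc, hX x hx], x, hx, Finset.ssubset_iff_subset_ne.2 ⟨hyx, ?_⟩⟩
  rintro rfl; omega

lemma push_step {n s t : ℕ} (hc : Cond n s) (F : Finset (Finset (Fin n))) (hF : ThreeFree F)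
    (hcard : ∀ x ∈ F, x.card ≤ t + 1) (ht : n + 2 ≤ 2 * (t + 1)) (ht' : n + 1 ≤ 2 * t) :
    ∃ G : Finset (Finset (Fin n)), ThreeFree G ∧ (∀ x ∈ G, x.card ≤ t) ∧
      (∀ x ∈ F, x.card ≤ t → x ∈ G) ∧ (∀ x ∈ G, x ∈ F ∨ t ≤ x.card + 1) ∧
      F.card + 4 * min (F.filter (fun x => x.card = t + 1)).card s ≤ G.card := by
  set X := F.filter (fun x => x.card = t + 1) with hXdef
  set Y := F ∩ ∂ X with hYdef
  have hX : ∀ x ∈ X, x.card = t + 1 := fun x hx => (Finset.mem_filter.1 hx).2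
  have hXF : ∀ x ∈ X, x ∈ F := fun x hx => (Finset.mem_filter.1 hx).1
  have hdX : ∀ y ∈ ∂ X, y.card = t ∧ ∃ x ∈ X, y ⊂ x := fun y hy => by
    have := mem_shadow_card hX hy
    exact ⟨by omega, this.2⟩
  have hY : ∀ y ∈ Y, y.card = t := fun y hy => (hdX y (Finset.mem_inter.1 hy).2).1
  have hdY : ∀ z ∈ ∂ Y, z.card + 1 = t ∧ ∃ y ∈ Y, z ⊂ y := fun z hz => mem_shadow_card hY hz
  have hcd : ∀ {a b : Finset (Fin n)}, a ⊂ b → a.card < b.card := fun h => Finset.card_lt_card h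
  -- nothing of `F` lies in or below an element of the second shadow
  have hbelow : ∀ z ∈ ∂ Y, ∀ w ∈ F, ¬ w ⊆ z := by
    intro z hz w hw hwz
    obtain ⟨_, y, hy, hzy⟩ := hdY z hz
    obtain ⟨hyF, hyX⟩ := Finset.mem_inter.1 hy
    obtain ⟨_, x, hx, hyx⟩ := hdX y hyX
    exact hF w hw y hyF x (hXF x hx) (lt_of_le_of_lt hwz hzy) hyx
  refine ⟨(F \ X) ∪ (∂ X ∪ ∂ Y), ?_, ?_, ?_, ?_, ?_⟩
  · have hmem : ∀ x, x ∈ (F \ X) ∪ (∂ X ∪ ∂ Y) → (x ∈ F ∧ x.card ≤ t) ∨ x ∈ ∂ X ∨ x ∈ ∂ Y := by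
      intro x hx
      rcases Finset.mem_union.1 hx with h | h
      · left
        obtain ⟨h1, h2⟩ := Finset.mem_sdiff.1 h
        refine ⟨h1, ?_⟩
        have := hcard x h1
        by_contra hlt
        exact h2 (Finset.mem_filter.2 ⟨h1, by omega⟩)
      · exact Or.inr (Finset.mem_union.1 h)
    have hle : ∀ x, x ∈ (F \ X) ∪ (∂ X ∪ ∂ Y) → x.card ≤ t := by
      intro x hx
      rcases hmem x hx with h | h | h
      · exact h.2
      · exact (hdX x h).1.le
      · have := (hdY x h).1; omega
    intro A hA B hB C hC hAB hBC
    have cA := hcd hAB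
    have cB := hcd hBC
    have cC := hle C hC
    have hAF : A ∈ F := by
      rcases hmem A hA with h | h | h
      · exact h.1
      · have := (hdX A h).1; omega
      · have := (hdY A h).1; omega
    have hBF : B ∈ F := by
      rcases hmem B hB with h | h | h
      · exact h.1
      · have := (hdX B h).1; omega
      · exact absurd hAB.1 (hbelow B h A hAF)
    rcases hmem C hC with h | h | h
    · exact hF A hAF B hBF C h.1 hAB hBC
    · obtain ⟨_, x, hx, hCx⟩ := hdX C h
      exact hF A hAF B hBF x (hXF x hx) hAB (hBC.trans hCx)
    · exact hbelow C h B hBF hBC.1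
  · intro x hx
    rcases Finset.mem_union.1 hx with h | h
    · obtain ⟨h1, h2⟩ := Finset.mem_sdiff.1 h
      have := hcard x h1
      by_contra hlt
      exact h2 (Finset.mem_filter.2 ⟨h1, by omega⟩)
    · rcases Finset.mem_union.1 h with h | h
      · exact (hdX x h).1.le
      · have := (hdY x h).1; omega
  · intro x hx hxt
    refine Finset.mem_union_left _ (Finset.mem_sdiff.2 ⟨hx, fun h => ?_⟩)
    have := hX x h
    omega
  · intro x hx
    rcases Finset.mem_union.1 hx with h | h
    · exact Or.inl (Finset.mem_sdiff.1 h).1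
    · rcases Finset.mem_union.1 h with h | h
      · have := (hdX x h).1; right; omega
      · have := (hdY x h).1; right; omega
  · have e1 := expand hc X hX ht
    have e2 := shadow_ge Y hY ht'
    have d1 : Disjoint ((F \ X) ∪ ∂ X) (∂ Y) := by
      rw [Finset.disjoint_left]
      intro x hx hxY
      rcases Finset.mem_union.1 hx with h | h
      · exact hbelow x hxY x (Finset.mem_sdiff.1 h).1 (Finset.Subset.refl x)
      · have := (hdX x h).1
        have := (hdY x hxY).1
        omega
    have c0 : (F \ X) ∩ ∂ X = Y := by
      ext y
      simp only [hYdef, Finset.mem_inter, Finset.mem_sdiff]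
      constructor
      · rintro ⟨⟨h1, _⟩, h2⟩; exact ⟨h1, h2⟩
      · rintro ⟨h1, h2⟩
        refine ⟨⟨h1, fun h => ?_⟩, h2⟩
        have := hX y h
        have := (hdX y h2).1
        omega
    have c1 := Finset.card_union_add_card_inter (F \ X) (∂ X)
    rw [c0] at c1
    have c2 : (F \ X).card + X.card = F.card :=
      Finset.card_sdiff_add_card_eq_card (Finset.filter_subset _ _)
    rw [← Finset.union_assoc, Finset.card_union_of_disjoint d1]
    omega

lemma push_down {n s u : ℕ} (hc : Cond n s) (hu : n + 1 ≤ 2 * u) : ∀ d : ℕ,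
    ∀ F : Finset (Finset (Fin n)), ThreeFree F → (∀ x ∈ F, x.card ≤ u + d) →
    ∃ G : Finset (Finset (Fin n)), ThreeFree G ∧ (∀ x ∈ G, x.card ≤ u) ∧
      (∀ x ∈ F, x.card ≤ u → x ∈ G) ∧ (∀ x ∈ G, x ∈ F ∨ u ≤ x.card + 1) ∧
      F.card + 4 * min (F.filter (fun x => u < x.card)).card s ≤ G.card := by
  intro d
  induction d with
  | zero =>
    intro F hF hcard
    refine ⟨F, hF, hcard, fun x hx _ => hx, fun x hx => Or.inl hx, ?_⟩
    have : F.filter (fun x => u < x.card) = ∅ := by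
      refine Finset.filter_eq_empty_iff.2 fun x hx => ?_
      have := hcard x hx; omega
    simp [this]
  | succ d ih =>
    intro F hF hcard
    obtain ⟨G, g1, g2, g3, g4, g5⟩ := push_step (t := u + d) hc F hF hcard (by omega) (by omega)
    obtain ⟨H, k1, k2, k3, k4, k5⟩ := ih G g1 g2
    refine ⟨H, k1, k2, ?_, ?_, ?_⟩
    · intro x hx hxu
      exact k3 x (g3 x hx (by omega)) hxu
    · intro x hx
      rcases k4 x hx with h | h
      · rcases g4 x h with h | h
        · exact Or.inl h
        · right; omega
      · exact Or.inr h
    · have : (F.filter (fun x => u < x.card)).card ≤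
          (F.filter (fun x => x.card = u + d + 1)).card + (G.filter (fun x => u < x.card)).card := by
        refine (Finset.card_le_card ?_).trans (Finset.card_union_le _ _)
        intro x hx
        obtain ⟨h1, h2⟩ := Finset.mem_filter.1 hx
        have := hcard x h1
        by_cases h : x.card = u + d + 1
        · exact Finset.mem_union_left _ (Finset.mem_filter.2 ⟨h1, h⟩)
        · exact Finset.mem_union_right _ (Finset.mem_filter.2 ⟨g3 x h1 (by omega), h2⟩)
      omega

lemma threeFree_compls {n : ℕ} {F : Finset (Finset (Fin n))} (hF : ThreeFree F) : ThreeFree Fᶜˢ := by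
  intro A hA B hB C hC hAB hBC
  refine hF Cᶜ (Finset.mem_compls.1 hC) Bᶜ (Finset.mem_compls.1 hB) Aᶜ (Finset.mem_compls.1 hA) ?_ ?_
  · exact Finset.compl_ssubset_compl.2 hBC
  · exact Finset.compl_ssubset_compl.2 hAB

lemma card_filter_compls {n : ℕ} (F : Finset (Finset (Fin n))) (p q : ℕ → Prop) [DecidablePred p]
    [DecidablePred q] (hpq : ∀ j ≤ n, p j ↔ q (n - j)) :
    (Fᶜˢ.filter (fun x => p x.card)).card = (F.filter (fun x => q x.card)).card := by
  have : Fᶜˢ.filter (fun x => p x.card) = (F.filter (fun x => q x.card))ᶜˢ := by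
    ext x
    have hx := Finset.card_le_univ x
    simp only [Fintype.card_fin] at hx
    simp only [Finset.mem_filter, Finset.mem_compls, Finset.card_compl, Fintype.card_fin]
    rw [hpq _ hx]
  rw [this, Finset.card_compls]

lemma push_both {n s u : ℕ} (hc : Cond n s) (hu : n + 1 ≤ 2 * u)
    (F : Finset (Finset (Fin n))) (hF : ThreeFree F) :
    ∃ G : Finset (Finset (Fin n)), ThreeFree G ∧ (∀ x ∈ G, x.card ≤ u ∧ n ≤ x.card + u) ∧
      (∀ x ∈ F, x.card ≤ u → n ≤ x.card + u → x ∈ G) ∧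
      F.card + 4 * min (F.filter (fun x => u < x.card)).card s
        + 4 * min (F.filter (fun x => x.card + u < n)).card s ≤ G.card := by
  obtain ⟨G, g1, g2, g3, g4, g5⟩ := push_down hc hu n F hF (fun x _ => by
    have := Finset.card_le_univ x; simp at this; omega)
  obtain ⟨H, k1, k2, k3, k4, k5⟩ := push_down hc hu n Gᶜˢ (threeFree_compls g1) (fun x _ => by
    have := Finset.card_le_univ x; simp at this; omega)
  have hcc : ∀ x : Finset (Fin n), xᶜ.card + x.card = n := fun x => by
    simp
  refine ⟨Hᶜˢ, threeFree_compls k1, ?_, ?_, ?_⟩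
  · intro x hx
    have hx' := Finset.mem_compls.1 hx
    have h1 := k2 _ hx'
    have h2 := hcc x
    refine ⟨?_, by omega⟩
    rcases k4 _ hx' with h | h
    · have := g2 x (by simpa using h); exact this
    · omega
  · intro x hx h1 h2
    have h3 := hcc x
    exact Finset.mem_compls.2 (k3 _ (by simpa using g3 x hx h1) (by omega))
  · have e1 := card_filter_compls G (fun j => u < j) (fun j => j + u < n) (fun j hj => by omega)
    have e2 : (F.filter (fun x => x.card + u < n)).card ≤ (G.filter (fun x => x.card + u < n)).card := by
      refine Finset.card_le_card fun x hx => ?_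
      obtain ⟨h1, h2⟩ := Finset.mem_filter.1 hx
      exact Finset.mem_filter.2 ⟨g3 x h1 (by omega), h2⟩
    simp only [Finset.card_compls] at k5 e1 ⊢
    rw [e1] at k5
    omega

lemma exists_initSeg_card {n r : ℕ} (c : ℕ) : ∀ j : ℕ, ∀ 𝒞 : Finset (Finset (Fin n)),
    Finset.Colex.IsInitSeg 𝒞 r → 𝒞.card = c + j →
    ∃ 𝒟 : Finset (Finset (Fin n)), Finset.Colex.IsInitSeg 𝒟 r ∧ 𝒟.card = c := by
  intro j
  induction j with
  | zero => intro 𝒞 h1 h2; exact ⟨𝒞, h1, h2⟩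
  | succ j ih =>
    intro 𝒞 h1 h2
    have hne : 𝒞.Nonempty := Finset.card_pos.1 (by omega)
    obtain ⟨M, hM, hmax⟩ := Finset.exists_max_image 𝒞 (fun x => toColex x) hne
    refine ih (𝒞.erase M) ⟨?_, ?_⟩ (by rw [Finset.card_erase_of_mem hM]; omega)
    · intro x hx
      exact h1.1 (Finset.mem_of_mem_erase hx)
    · rintro a b ha ⟨hb1, hb2⟩
      have ha' := Finset.mem_of_mem_erase ha
      refine Finset.mem_erase.2 ⟨?_, h1.2 ha' ⟨hb1, hb2⟩⟩
      rintro rfl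
      exact absurd (hmax a ha') (not_le.2 hb1)

lemma kk_half {n k : ℕ} (hn : n = 2 * k) (hk : 1 ≤ k) (B : Finset (Finset (Fin n)))
    (hB : ∀ x ∈ B, x.card = k) (hle : B.card ≤ (n - 1).choose k) : B.card ≤ (∂ B).card := by
  have hfull : Finset.Colex.IsInitSeg (Finset.powersetCard k (Finset.univ : Finset (Fin n))) k := by
    refine ⟨fun x hx => (Finset.mem_powersetCard.1 hx).2, ?_⟩
    rintro a b _ ⟨_, hb⟩
    exact Finset.mem_powersetCard.2 ⟨Finset.subset_univ _, hb⟩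
  have hBle : B.card ≤ (Finset.powersetCard k (Finset.univ : Finset (Fin n))).card :=
    Finset.card_le_card fun x hx => Finset.mem_powersetCard.2 ⟨Finset.subset_univ _, hB x hx⟩
  obtain ⟨j, hj⟩ := Nat.exists_eq_add_of_le hBle
  obtain ⟨𝒞, hC, hCc⟩ := exists_initSeg_card B.card j _ hfull hj
  have hkk := Finset.kruskal_katona (fun x hx => hB x hx) hCc.le hC
  rw [← hCc]
  refine le_trans ?_ hkk
  let l : Fin n := ⟨n - 1, by omega⟩
  have hl : ∀ T ∈ 𝒞, l ∉ T := by
    intro T hT hlT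
    have hsub : insert T (Finset.powersetCard k (Finset.univ.erase l)) ⊆ 𝒞 := by
      intro S hS
      rcases Finset.mem_insert.1 hS with rfl | hS
      · exact hT
      obtain ⟨h1, h2⟩ := Finset.mem_powersetCard.1 hS
      have hlS : l ∉ S := fun h => by simpa using h1 h
      refine hC.2 hT ⟨?_, h2⟩
      rw [Finset.Colex.toColex_lt_toColex_iff_exists_forall_lt]
      refine ⟨l, hlT, hlS, ?_⟩
      intro b hb _
      have hne : b ≠ l := fun h => hlS (h ▸ hb)
      have : b.val ≠ n - 1 := fun h => hne (Fin.ext h)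
      have := b.isLt
      exact Fin.lt_def.2 (by show b.val < n - 1; omega)
    have := Finset.card_le_card hsub
    rw [Finset.card_insert_of_notMem, Finset.card_powersetCard, Finset.card_erase_of_mem (Finset.mem_univ _)] at this
    · simp at this; omega
    · intro h
      have := (Finset.mem_powersetCard.1 h).1 hlT
      simp at this
  have hs : ∀ x ∈ 𝒞, x.card = k := fun x hx => hC.1 hx
  have h := Finset.card_mul_le_card_mul' (s := ∂ 𝒞) (t := 𝒞) (m := k) (n := k)
    (fun (y x : Finset (Fin n)) => y ⊆ x) ?_ ?_
  · exact Nat.le_of_mul_le_mul_right h hk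
  · intro x hx
    rw [← hs x hx, ← Finset.card_image_of_injOn x.erase_injOn]
    refine Finset.card_le_card ?_
    simp_rw [Finset.image_subset_iff, Finset.mem_bipartiteBelow]
    exact fun a ha => ⟨Finset.erase_mem_shadow hx ha, Finset.erase_subset _ _⟩
  · intro y hy
    obtain ⟨hyc, x0, hx0, hyx0⟩ := mem_shadow_card hs hy
    have hly : l ∉ y := fun h => hl x0 hx0 (hyx0.1 h)
    have hcard : (insert l y)ᶜ.card = k := by
      rw [Finset.card_compl, Finset.card_insert_of_notMem hly]; simp; omega
    rw [← hcard]
    refine (Finset.card_le_card (t := (insert l y)ᶜ.image (fun a => insert a y)) ?_).trans Finset.card_image_le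
    intro x hx
    obtain ⟨hx1, hx2⟩ := (Finset.mem_bipartiteAbove _).1 hx
    obtain ⟨a, ha, rfl⟩ := Finset.exists_eq_insert_iff.2 ⟨hx2, by rw [hyc, hs x hx1]⟩
    refine Finset.mem_image.2 ⟨a, ?_, rfl⟩
    simp only [Finset.mem_compl, Finset.mem_insert, not_or]
    exact ⟨fun h => hl _ hx1 (by simp [h]), ha⟩

lemma card_level {n : ℕ} (F : Finset (Finset (Fin n))) (j : ℕ) :
    (F.filter (fun x => x.card = j)).card ≤ n.choose j := by
  have : (F.filter (fun x => x.card = j)).card ≤ (Finset.powersetCard j (Finset.univ : Finset (Fin n))).card :=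
    Finset.card_le_card fun x hx => Finset.mem_powersetCard.2 ⟨Finset.subset_univ _, (Finset.mem_filter.1 hx).2⟩
  simpa using this

lemma cond_choose {k s : ℕ} (hc : Cond (2 * k) s) : 4 * k * s ≤ (2 * k).choose (k + 1) := by
  obtain ⟨h1, h2⟩ := hc
  have e : 2 * k / 2 = k := by omega
  rw [e] at h2
  have h3 : 4 * k * s < 2 ^ k := by
    refine lt_of_le_of_lt ?_ h2
    calc 4 * k * s ≤ 24 * (2 * k) * s := by nlinarith
      _ ≤ _ := Nat.le_self_pow (by norm_num) _
  have h4 := Nat.four_pow_le_two_mul_self_mul_centralBinom k (by omega)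
  have h6 := Nat.choose_succ_right_eq (2 * k) k
  have e2 : 2 * k - k = k := by omega
  rw [e2] at h6
  rw [Nat.centralBinom] at h4
  -- C(2k,k+1) (k+1) = C(2k,k) k
  have h7 : 2 * (k + 1) ≤ 2 ^ k := by
    have : ∀ j, 4 ≤ j → 2 * (j + 1) ≤ 2 ^ j := by
      intro j hj
      induction j, hj using Nat.le_induction with
      | base => norm_num
      | succ j hj ih => rw [pow_succ]; omega
    exact this k (by omega)
  have h8 : (4:ℕ) ^ k = 2 ^ k * 2 ^ k := by rw [← mul_pow]; norm_num
  have h9 : 2 ^ k * (2 * (k + 1)) ≤ (2 * k).choose (k + 1) * (2 * (k + 1)) := by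
    calc 2 ^ k * (2 * (k + 1)) ≤ 2 ^ k * 2 ^ k := Nat.mul_le_mul_left _ h7
      _ ≤ 2 * k * (2 * k).choose k := by rw [← h8]; exact h4
      _ = _ := by nlinarith
  have := Nat.le_of_mul_le_mul_right h9 (by omega)
  omega

lemma three_level {n k s : ℕ} (hn : n = 2 * k) (hc : Cond n s) (G : Finset (Finset (Fin n)))
    (hG : ThreeFree G) (hcard : ∀ x ∈ G, x.card ≤ k + 1 ∧ k ≤ x.card + 1)
    (hPR : (G.filter (fun x => x.card + 1 = k)).card ≤ (G.filter (fun x => x.card = k + 1)).card) :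
    G.card + 4 * min (G.filter (fun x => x.card + 1 = k)).card s ≤ n.choose k + n.choose (k + 1) := by
  have hk : 50 ≤ k := by have := hc.1; omega
  set P := G.filter (fun x => x.card + 1 = k) with hP
  set R := G.filter (fun x => x.card = k + 1) with hR
  set Q := G.filter (fun x => x.card = k) with hQ
  have hsum : G.card ≤ P.card + Q.card + R.card := by
    refine (Finset.card_le_card (t := (P ∪ Q) ∪ R) ?_).trans
      ((Finset.card_union_le _ _).trans (Nat.add_le_add_right (Finset.card_union_le _ _) _))
    intro x hx
    have := hcard x hx
    simp only [hP, hQ, hR, Finset.mem_union, Finset.mem_filter, hx, true_and]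
    omega
  have hQle : Q.card ≤ n.choose k := card_level G k
  -- choose identities
  have hp1 : n.choose (k + 1) = (n - 1).choose k + (n - 1).choose (k + 1) := by
    obtain ⟨n', rfl⟩ : ∃ n', n = n' + 1 := ⟨n - 1, by omega⟩
    exact Nat.choose_succ_succ _ _
  have hp0 : n.choose k = 2 * (n - 1).choose k := by
    obtain ⟨k', rfl⟩ : ∃ k', k = k' + 1 := ⟨k - 1, by omega⟩
    obtain ⟨n', rfl⟩ : ∃ n', n = n' + 1 := ⟨n - 1, by omega⟩
    rw [Nat.choose_succ_succ]
    have : n'.choose k' = n'.choose (k' + 1) := Nat.choose_symm_of_eq_add (by omega)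
    simp; omega
  have hratio : k * (n - 1).choose (k + 1) + (n-1).choose (k+1) = (k - 1) * (n - 1).choose k := by
    have := Nat.choose_succ_right_eq (n - 1) k
    have e : n - 1 - k = k - 1 := by omega
    rw [e] at this
    nlinarith
  have hbig : 4 * k * s ≤ n.choose (k + 1) := by subst hn; exact cond_choose hc
  have hmin := min_le_right P.card s
  by_cases hcase : P.card + R.card + 4 * s ≤ n.choose (k + 1)
  · omega
  push Not at hcase
  have hRbig : (n - 1).choose (k + 1) < R.card := by
    by_contra hlt
    push Not at hlt
    have h1 : n.choose (k + 1) < 2 * (n - 1).choose (k + 1) + 4 * s := by omega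
    rw [hp1] at h1 hbig
    set a := (n - 1).choose k
    set b := (n - 1).choose (k + 1)
    obtain ⟨k', rfl⟩ : ∃ k', k = k' + 1 := ⟨k - 1, by omega⟩
    simp only [Nat.add_sub_cancel] at hratio
    nlinarith
  -- level k not in the shadow of R
  set B := (Finset.univ : Finset (Finset (Fin n))).filter (fun x => x.card = k ∧ x ∉ ∂ R) with hB
  set W := (Finset.univ : Finset (Finset (Fin n))).filter (fun x => x.card = k + 1 ∧ x ∉ R) with hW
  have hRl : ∀ x ∈ R, x.card = k + 1 := fun x hx => (Finset.mem_filter.1 hx).2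
  have hdRl : ∀ x ∈ ∂ R, x.card = k := fun x hx => by
    have := (mem_shadow_card hRl hx).1; omega
  have hlev : ∀ j, ((Finset.univ : Finset (Finset (Fin n))).filter (fun x => x.card = j)).card = n.choose j := by
    intro j
    have : (Finset.univ : Finset (Finset (Fin n))).filter (fun x => x.card = j) = Finset.powersetCard j Finset.univ := by
      ext x; simp [Finset.mem_powersetCard]
    rw [this]; simp
  have hWc : W.card + R.card = n.choose (k + 1) := by
    rw [← hlev (k + 1), ← Finset.card_union_of_disjoint]
    · congr 1
      ext x
      simp only [hW, Finset.mem_union, Finset.mem_filter, Finset.mem_univ, true_and]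
      constructor
      · rintro (h | h)
        · exact h.1
        · exact hRl x h
      · intro h
        by_cases hx : x ∈ R
        · exact Or.inr hx
        · exact Or.inl ⟨h, hx⟩
    · rw [Finset.disjoint_left]; intro x hx; exact (Finset.mem_filter.1 hx).2.2
  have hBc : B.card + (∂ R).card = n.choose k := by
    rw [← hlev k, ← Finset.card_union_of_disjoint]
    · congr 1
      ext x
      simp only [hB, Finset.mem_union, Finset.mem_filter, Finset.mem_univ, true_and]
      constructor
      · rintro (h | h)
        · exact h.1
        · exact hdRl x h
      · intro h
        by_cases hx : x ∈ ∂ R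
        · exact Or.inr hx
        · exact Or.inl ⟨h, hx⟩
    · rw [Finset.disjoint_left]; intro x hx; exact (Finset.mem_filter.1 hx).2.2
  have hcc : ∀ x : Finset (Fin n), xᶜ.card + x.card = n := fun x => by simp
  have hupB : (∂⁺ B).card ≤ W.card := by
    refine Finset.card_le_card fun x hx => ?_
    obtain ⟨y, hy, hyx, hyc⟩ := Finset.mem_upShadow_iff_exists_mem_card_add_one.1 hx
    obtain ⟨_, hy1, hy2⟩ := Finset.mem_filter.1 hy
    refine Finset.mem_filter.2 ⟨Finset.mem_univ _, by omega, fun hxR => hy2 ?_⟩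
    exact Finset.mem_shadow_iff_exists_mem_card_add_one.2 ⟨x, hxR, hyx, hyc⟩
  have hBW : B.card ≤ W.card := by
    have hBl : ∀ x ∈ Bᶜˢ, x.card = k := by
      intro x hx
      have h1 := (Finset.mem_filter.1 (Finset.mem_compls.1 hx)).2.1
      have := hcc x
      omega
    by_cases hsz : B.card ≤ (n - 1).choose k
    · have := kk_half hn (by omega) Bᶜˢ hBl (by simpa using hsz)
      rw [Finset.shadow_compls, Finset.card_compls, Finset.card_compls] at this
      omega
    · push Not at hsz
      obtain ⟨B', hB', hB'c⟩ := Finset.exists_subset_card_eq hsz.le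
      have := kk_half hn (by omega) B'ᶜˢ (fun x hx => hBl x (Finset.compls_subset_compls.2 hB' hx)) (by simp [hB'c])
      rw [Finset.shadow_compls, Finset.card_compls, Finset.card_compls] at this
      have h2 : (∂⁺ B').card ≤ (∂⁺ B).card := Finset.card_le_card (Finset.upShadow_monotone hB')
      omega
  -- expansion of P upwards
  have hPup : P.card + 4 * min P.card s ≤ (∂⁺ P).card := by
    have hPl : ∀ x ∈ Pᶜˢ, x.card = k + 1 := by
      intro x hx
      have h1 := (Finset.mem_filter.1 (Finset.mem_compls.1 hx)).2
      have := hcc x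
      omega
    have := expand hc Pᶜˢ hPl (by omega)
    rwa [Finset.shadow_compls, Finset.card_compls, Finset.card_compls] at this
  -- Q avoids the intersection
  have hQint : Q.card + (∂⁺ P ∩ ∂ R).card ≤ n.choose k := by
    rw [← hlev k, ← Finset.card_union_of_disjoint]
    · refine Finset.card_le_card fun x hx => Finset.mem_filter.2 ⟨Finset.mem_univ _, ?_⟩
      rcases Finset.mem_union.1 hx with h | h
      · exact (Finset.mem_filter.1 h).2
      · exact hdRl x (Finset.mem_inter.1 h).2
    · rw [Finset.disjoint_left]
      intro x hx hx'
      obtain ⟨h1, h2⟩ := Finset.mem_inter.1 hx'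
      obtain ⟨_, c, hc1, hc2⟩ := mem_shadow_card hRl h2
      obtain ⟨a, ha1, ha2, ha3⟩ := Finset.mem_upShadow_iff_exists_mem_card_add_one.1 h1
      refine hG a (Finset.mem_filter.1 ha1).1 x (Finset.mem_filter.1 hx).1 c (Finset.mem_filter.1 hc1).1 ?_ hc2
      refine Finset.ssubset_iff_subset_ne.2 ⟨ha2, ?_⟩
      rintro rfl; omega
  have hun : (∂⁺ P ∪ ∂ R).card ≤ n.choose k := by
    rw [← hlev k]
    refine Finset.card_le_card fun x hx => Finset.mem_filter.2 ⟨Finset.mem_univ _, ?_⟩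
    rcases Finset.mem_union.1 hx with h | h
    · obtain ⟨a, ha1, ha2, ha3⟩ := Finset.mem_upShadow_iff_exists_mem_card_add_one.1 h
      have := (Finset.mem_filter.1 ha1).2
      omega
    · exact hdRl x h
  have := Finset.card_union_add_card_inter (∂⁺ P) (∂ R)
  omega

lemma mem_levelFam {n j : ℕ} {x : Finset (Fin n)} : x ∈ levelFam n j ↔ x.card = j := by
  simp [levelFam]

theorem two_sperner {n s : ℕ} (hc : Cond n s) (F : Finset (Finset (Fin n))) (hF : ThreeFree F)
    (hS : ∀ S ∈ SigmaStar n, s ≤ (F \ S).card) : F.card + 4 * s ≤ Sigma2 n := by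
  have hn := hc.1
  have hS1 := hS (levelFam n (n / 2) ∪ levelFam n (n / 2 + 1)) (by simp [SigmaStar])
  have hS2 := hS (levelFam n ((n + 1) / 2 - 1) ∪ levelFam n ((n + 1) / 2)) (by simp [SigmaStar])
  obtain ⟨G, g1, g2, g3, g4⟩ := push_both (u := n / 2 + 1) hc (by omega) F hF
  unfold Sigma2
  set hi := (F.filter (fun x => n / 2 + 1 < x.card)).card with hhi
  set lo := (F.filter (fun x => x.card + (n / 2 + 1) < n)).card with hlo
  rcases Nat.even_or_odd' n with ⟨k, hk | hk⟩
  · -- even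
    have e1 : n / 2 = k := by omega
    have e2 : (n + 1) / 2 = k := by omega
    rw [e1] at *
    rw [e2] at hS2
    have q1 : s ≤ hi + lo + (G.filter (fun x => x.card + 1 = k)).card := by
      refine hS1.trans ?_
      rw [hhi, hlo]
      refine (Finset.card_le_card (t := ((F.filter (fun x => n / 2 + 1 < x.card)) ∪
        (F.filter (fun x => x.card + (n / 2 + 1) < n))) ∪ (G.filter (fun x => x.card + 1 = k))) ?_).trans
        ((Finset.card_union_le _ _).trans (Nat.add_le_add_right (Finset.card_union_le _ _) _))
      intro x hx
      obtain ⟨hx1, hx2⟩ := Finset.mem_sdiff.1 hx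
      simp only [Finset.mem_union, mem_levelFam, not_or] at hx2
      simp only [Finset.mem_union, Finset.mem_filter, hx1, true_and]
      by_cases h : x.card + 1 = k
      · exact Or.inr ⟨g3 x hx1 (by omega) (by omega), h⟩
      · left; omega
    have q2 : s ≤ hi + lo + (G.filter (fun x => x.card = k + 1)).card := by
      refine hS2.trans ?_
      rw [hhi, hlo]
      refine (Finset.card_le_card (t := ((F.filter (fun x => n / 2 + 1 < x.card)) ∪
        (F.filter (fun x => x.card + (n / 2 + 1) < n))) ∪ (G.filter (fun x => x.card = k + 1))) ?_).trans
        ((Finset.card_union_le _ _).trans (Nat.add_le_add_right (Finset.card_union_le _ _) _))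
      intro x hx
      obtain ⟨hx1, hx2⟩ := Finset.mem_sdiff.1 hx
      simp only [Finset.mem_union, mem_levelFam, not_or] at hx2
      simp only [Finset.mem_union, Finset.mem_filter, hx1, true_and]
      by_cases h : x.card = k + 1
      · exact Or.inr ⟨g3 x hx1 (by omega) (by omega), h⟩
      · left; omega
    have key : G.card + 4 * min (min (G.filter (fun x => x.card + 1 = k)).card
        (G.filter (fun x => x.card = k + 1)).card) s ≤ n.choose k + n.choose (k + 1) := by
      rcases le_total (G.filter (fun x => x.card + 1 = k)).card (G.filter (fun x => x.card = k + 1)).card with h | h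
      · have := three_level hk hc G g1 (fun x hx => by have := g2 x hx; omega) h
        rw [min_eq_left h]; exact this
      · have c1 := card_filter_compls G (fun j => j + 1 = k) (fun j => j = k + 1) (fun j hj => by omega)
        have c2 := card_filter_compls G (fun j => j = k + 1) (fun j => j + 1 = k) (fun j hj => by omega)
        have := three_level hk hc Gᶜˢ (threeFree_compls g1) (fun x hx => by
          have := g2 _ (Finset.mem_compls.1 hx)
          have h3 : xᶜ.card + x.card = n := by simp
          omega) (by rw [c1, c2]; exact h)
        rw [min_eq_right h]
        rw [c1, Finset.card_compls] at this
        exact this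
    omega
  · have e1 : n / 2 = k := by omega
    have e2 : (n + 1) / 2 = k + 1 := by omega
    rw [e1] at *
    have q1 : s ≤ hi + lo := by
      refine hS1.trans ?_
      rw [hhi, hlo]
      refine (Finset.card_le_card ?_).trans (Finset.card_union_le _ _)
      intro x hx
      obtain ⟨hx1, hx2⟩ := Finset.mem_sdiff.1 hx
      simp only [Finset.mem_union, mem_levelFam, not_or] at hx2
      simp only [Finset.mem_union, Finset.mem_filter, hx1, true_and]
      omega
    have q2 : G.card ≤ n.choose k + n.choose (k + 1) := by
      refine le_trans ?_ (Nat.add_le_add (card_level G k) (card_level G (k + 1)))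
      refine (Finset.card_le_card ?_).trans (Finset.card_union_le _ _)
      intro x hx
      have := g2 x hx
      simp only [Finset.mem_union, Finset.mem_filter, hx, true_and]
      omega
    omega

lemma card_prefixed_inter {n : ℕ} {A M : Finset (Fin n)} (hAM : A ⊆ M) :
    (Numbering.prefixed A ∩ Numbering.prefixed M).card ≤
      A.card.factorial * (M.card - A.card).factorial * (n - M.card).factorial := by
  classical
  let A' : Finset M := A.subtype (· ∈ M)
  have hA' : A'.card = A.card := by
    rw [Finset.card_subtype, Finset.filter_true_of_mem]
    exact fun x hx => hAM hx
  have h1 : (Numbering.prefixed A').card = A.card.factorial * (M.card - A.card).factorial := by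
    rw [Numbering.card_prefixed, hA']; simp
  have h2 : (Finset.univ : Finset (Numbering ↑(Mᶜ))).card = (n - M.card).factorial := by
    rw [Finset.card_univ, Fintype.card_numbering]; simp
  rw [← h1, ← h2, ← Finset.card_product]
  have hinj : ∀ f ∈ Numbering.prefixed A ∩ Numbering.prefixed M, f ∈ Numbering.prefixed M :=
    fun f hf => (Finset.mem_inter.1 hf).2
  refine Finset.card_le_card_of_injOn
    (fun f => if h : f ∈ Numbering.prefixed M then Numbering.prefixedEquiv M ⟨f, h⟩ else
      ((Fintype.equivFin _ , Fintype.equivFin _) : Numbering M × Numbering ↑(Mᶜ))) ?_ ?_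
  · intro f hf
    have hfM := hinj f hf
    have hfA := Numbering.mem_prefixed.1 (Finset.mem_inter.1 hf).1
    simp only [hfM, dif_pos]
    refine Finset.mem_coe.2 (Finset.mem_product.2 ⟨?_, Finset.mem_univ _⟩)
    rw [Numbering.mem_prefixed]
    intro x
    have := hfA x.1
    rw [Finset.mem_subtype, hA']
    exact this
  · intro f hf g hg hfg
    have hfM := hinj f hf
    have hgM := hinj g hg
    simp only [hfM, hgM, dif_pos] at hfg
    have := (Numbering.prefixedEquiv M).injective hfg
    exact congrArg Subtype.val this

lemma le_choose_of {a b : ℕ} (hb : 0 < b) (hba : b < a) : a ≤ a.choose b := by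
  induction a generalizing b with
  | zero => omega
  | succ a ih =>
    obtain ⟨b, rfl⟩ : ∃ c, b = c + 1 := ⟨b - 1, by omega⟩
    rw [Nat.choose_succ_succ']
    by_cases h : b + 1 < a
    · have := ih (by omega) h
      have : 0 < a.choose b := Nat.choose_pos (by omega)
      omega
    · have : a = b + 1 := by omega
      subst this
      simp

/-- weight -/
def wt (n : ℕ) (A : Finset (Fin n)) : ℕ := A.card.factorial * (n - A.card).factorial

lemma card_prefixed_eq {n : ℕ} (A : Finset (Fin n)) : (Numbering.prefixed A).card = wt n A := by
  rw [Numbering.card_prefixed]; simp [wt]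

lemma inter_low {n : ℕ} {A M : Finset (Fin n)} (hAM : A ⊂ M) (hA : A.Nonempty) :
    M.card * (Numbering.prefixed A ∩ Numbering.prefixed M).card ≤ wt n M := by
  have h := card_prefixed_inter hAM.1
  have hlt := Finset.card_lt_card hAM
  have h2 := Nat.choose_mul_factorial_mul_factorial hlt.le
  have h3 := le_choose_of hA.card_pos hlt
  unfold wt
  rw [← h2]
  calc _ ≤ M.card.choose A.card * (A.card.factorial * (M.card - A.card).factorial * (n - M.card).factorial) :=
        Nat.mul_le_mul h3 h
    _ = _ := by ring

lemma inter_high {n : ℕ} {M C : Finset (Fin n)} (hMC : M ⊂ C) (hC : C ≠ Finset.univ) :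
    (n - M.card) * (Numbering.prefixed M ∩ Numbering.prefixed C).card ≤ wt n M := by
  have h := card_prefixed_inter hMC.1
  have hlt := Finset.card_lt_card hMC
  have hCn : C.card < n := by
    have := Finset.card_lt_univ_of_notMem (s := C) (x := (Finset.exists_mem_notMem_of_card_lt_card (s := C) (t := Finset.univ) (Finset.card_lt_card (Finset.ssubset_univ_iff.2 hC))).choose) (Finset.exists_mem_notMem_of_card_lt_card (s := C) (t := Finset.univ) (Finset.card_lt_card (Finset.ssubset_univ_iff.2 hC))).choose_spec.2
    simpa using this
  have h2 := Nat.choose_mul_factorial_mul_factorial (n := n - M.card) (k := C.card - M.card) (by omega)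
  have h3 := le_choose_of (a := n - M.card) (b := C.card - M.card) (by omega) (by omega)
  have e : n - M.card - (C.card - M.card) = n - C.card := by omega
  rw [e] at h2
  unfold wt
  rw [← h2]
  calc _ ≤ (n - M.card).choose (C.card - M.card) * (M.card.factorial * (C.card - M.card).factorial * (n - C.card).factorial) :=
        Nat.mul_le_mul h3 h
    _ = _ := by ring

lemma bf_elim {n : ℕ} {F : Finset (Finset (Fin n))} (hF : ButterflyFree F) {A B C D : Finset (Fin n)}
    (hA : A ∈ F) (hB : B ∈ F) (hC : C ∈ F) (hD : D ∈ F) (hAB : A ≠ B) (hCD : C ≠ D)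
    (h1 : A ⊂ C) (h2 : A ⊂ D) (h3 : B ⊂ C) (h4 : B ⊂ D) : False := by
  refine hF {A, B, C, D} ?_ ⟨A, B, C, D, rfl, hAB, hCD, h1, h2, h3, h4⟩
  intro x hx
  simp only [Finset.mem_insert, Finset.mem_singleton] at hx
  rcases hx with rfl | rfl | rfl | rfl <;> assumption

open Classical in
noncomputable def midSets {n : ℕ} (F : Finset (Finset (Fin n))) : Finset (Finset (Fin n)) :=
  F.filter (fun M => (∃ A ∈ F, A ⊂ M) ∧ ∃ C ∈ F, M ⊂ C)

lemma sum_prefixed {n : ℕ} (T : Finset (Finset (Fin n)))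
    (g : Finset (Fin n) → Finset (Numbering (Fin n))) :
    ∑ f : Numbering (Fin n), (T.filter (fun S => f ∈ g S)).card = ∑ S ∈ T, (g S).card := by
  simp_rw [Finset.card_filter]
  rw [Finset.sum_comm]
  refine Finset.sum_congr rfl fun S _ => ?_
  rw [← Finset.card_filter]
  congr 1
  ext f; simp

lemma lubell_raw {n : ℕ} (hn : 100 ≤ n) (F : Finset (Finset (Fin n))) (hF : ButterflyFree F)
    (h0 : ∅ ∉ F) (h1 : Finset.univ ∉ F) :
    5 * ∑ S ∈ F, wt n S + 2 * ∑ M ∈ midSets F, wt n M ≤ 10 * n.factorial := by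
  classical
  have hmidF : ∀ M ∈ midSets F, M ∈ F := fun M hM => by
    unfold midSets at hM; exact (Finset.mem_filter.1 hM).1
  have hex1 : ∀ M ∈ midSets F, ∃ A, A ∈ F ∧ A ⊂ M := fun M hM => by
    unfold midSets at hM
    obtain ⟨A, h⟩ := (Finset.mem_filter.1 hM).2.1
    exact ⟨A, h⟩
  have hex2 : ∀ M ∈ midSets F, ∃ C, C ∈ F ∧ M ⊂ C := fun M hM => by
    unfold midSets at hM
    obtain ⟨A, h⟩ := (Finset.mem_filter.1 hM).2.2
    exact ⟨A, h⟩
  have hmem : ∀ A ∈ F, ∀ M ∈ F, ∀ C ∈ F, A ⊂ M → M ⊂ C → M ∈ midSets F := by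
    intro A hA M hM C hC h1 h2
    unfold midSets
    exact Finset.mem_filter.2 ⟨hM, ⟨A, hA, h1⟩, C, hC, h2⟩
  choose! a haF haM using hex1
  choose! c hcF hcM using hex2
  have ua : ∀ M ∈ midSets F, ∀ A ∈ F, A ⊂ M → A = a M := by
    intro M hM A hA hAM
    by_contra hne
    exact bf_elim hF hA (haF M hM) (hmidF M hM) (hcF M hM) hne (hcM M hM).ne hAM
      (hAM.trans (hcM M hM)) (haM M hM) ((haM M hM).trans (hcM M hM))
  have uc : ∀ M ∈ midSets F, ∀ C ∈ F, M ⊂ C → C = c M := by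
    intro M hM C hC hMC
    by_contra hne
    exact bf_elim hF (haF M hM) (hmidF M hM) hC (hcF M hM) (haM M hM).ne hne
      ((haM M hM).trans hMC) ((haM M hM).trans (hcM M hM)) hMC (hcM M hM)
  have hpt : ∀ f : Numbering (Fin n),
      (F.filter (fun S => f ∈ Numbering.prefixed S)).card
        + ((midSets F).filter (fun S => f ∈ Numbering.prefixed S)).card ≤
      2 + ((midSets F).filter (fun M => f ∈ Numbering.prefixed (a M) ∩ Numbering.prefixed M)).card
        + ((midSets F).filter (fun M => f ∈ Numbering.prefixed M ∩ Numbering.prefixed (c M))).card := by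
    intro f
    have hsub : ∀ S T : Finset (Fin n), f ∈ Numbering.prefixed S → f ∈ Numbering.prefixed T →
        S.card ≤ T.card → S ⊆ T := fun S T hS hT h =>
      (Numbering.mem_prefixed.1 hS).subset_of_card_le_card (Numbering.mem_prefixed.1 hT) h
    by_cases hM : ∃ M ∈ midSets F, f ∈ Numbering.prefixed M
    · obtain ⟨M, hM, hfM⟩ := hM
      have hcomp : ∀ S ∈ F, f ∈ Numbering.prefixed S → S = M ∨ S = a M ∨ S = c M := by
        intro S hS hfS
        by_cases hSM : S = M
        · exact Or.inl hSM
        right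
        rcases le_total S.card M.card with h | h
        · left
          exact ua M hM S hS (Finset.ssubset_iff_subset_ne.2 ⟨hsub S M hfS hfM h, hSM⟩)
        · right
          exact uc M hM S hS (Finset.ssubset_iff_subset_ne.2 ⟨hsub M S hfM hfS h, fun h => hSM h.symm⟩)
      have hmid1 : ((midSets F).filter (fun S => f ∈ Numbering.prefixed S)).card ≤ 1 := by
        rw [Finset.card_le_one_iff_subset_singleton]
        refine ⟨M, fun S hS => Finset.mem_singleton.2 ?_⟩
        obtain ⟨hS1, hS2⟩ := Finset.mem_filter.1 hS
        rcases hcomp S (hmidF S hS1) hS2 with h | h | h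
        · exact h
        · exfalso
          have hSM : S ⊂ M := h ▸ haM M hM
          have := ua M hM (a S) (haF S hS1) ((haM S hS1).trans hSM)
          rw [← h] at this
          exact (haM S hS1).ne this
        · exfalso
          have hSM : M ⊂ S := h ▸ hcM M hM
          have := uc M hM (c S) (hcF S hS1) (hSM.trans (hcM S hS1))
          rw [← h] at this
          exact (hcM S hS1).ne this.symm
      have hFc : (F.filter (fun S => f ∈ Numbering.prefixed S)).card ≤
          1 + (if f ∈ Numbering.prefixed (a M) then 1 else 0)
            + (if f ∈ Numbering.prefixed (c M) then 1 else 0) := by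
        have hs : F.filter (fun S => f ∈ Numbering.prefixed S) ⊆
            ({M} ∪ (if f ∈ Numbering.prefixed (a M) then {a M} else ∅))
              ∪ (if f ∈ Numbering.prefixed (c M) then {c M} else ∅) := by
          intro S hS
          obtain ⟨hS1, hS2⟩ := Finset.mem_filter.1 hS
          rcases hcomp S hS1 hS2 with h | h | h
          · simp [h]
          · rw [h] at hS2; rw [if_pos hS2]; simp [h]
          · rw [h] at hS2; rw [if_pos hS2]; simp [h]
        refine (Finset.card_le_card hs).trans ((Finset.card_union_le _ _).trans ?_)
        refine Nat.add_le_add ((Finset.card_union_le _ _).trans (Nat.add_le_add (by simp) ?_)) ?_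
        · split_ifs <;> simp
        · split_ifs <;> simp
      have k1 : (if f ∈ Numbering.prefixed (a M) then 1 else 0) ≤
          ((midSets F).filter (fun M => f ∈ Numbering.prefixed (a M) ∩ Numbering.prefixed M)).card := by
        split_ifs with h
        · exact Finset.card_pos.2 ⟨M, Finset.mem_filter.2 ⟨hM, Finset.mem_inter.2 ⟨h, hfM⟩⟩⟩
        · exact Nat.zero_le _
      have k2 : (if f ∈ Numbering.prefixed (c M) then 1 else 0) ≤
          ((midSets F).filter (fun M => f ∈ Numbering.prefixed M ∩ Numbering.prefixed (c M))).card := by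
        split_ifs with h
        · exact Finset.card_pos.2 ⟨M, Finset.mem_filter.2 ⟨hM, Finset.mem_inter.2 ⟨hfM, h⟩⟩⟩
        · exact Nat.zero_le _
      omega
    · have he : (midSets F).filter (fun S => f ∈ Numbering.prefixed S) = ∅ :=
        Finset.filter_eq_empty_iff.2 fun S hS h => hM ⟨S, hS, h⟩
      rw [he, Finset.card_empty]
      have : (F.filter (fun S => f ∈ Numbering.prefixed S)).card ≤ 2 := by
        set H := F.filter (fun S => f ∈ Numbering.prefixed S) with hH
        by_contra hgt
        push Not at hgt
        have hne : H.Nonempty := Finset.card_pos.1 (by omega)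
        obtain ⟨L, hL, hLmin⟩ := Finset.exists_min_image H Finset.card hne
        obtain ⟨U, hU, hUmax⟩ := Finset.exists_max_image H Finset.card hne
        have : ∃ S ∈ H, S ∉ ({L, U} : Finset (Finset (Fin n))) := by
          by_contra hall
          push Not at hall
          have := Finset.card_le_card (s := H) (t := {L, U}) hall
          have := Finset.card_le_two (a := L) (b := U)
          omega
        obtain ⟨S, hS, hSn⟩ := this
        simp only [Finset.mem_insert, Finset.mem_singleton, not_or] at hSn
        obtain ⟨hS1, hS2⟩ := Finset.mem_filter.1 hS
        obtain ⟨hL1, hL2⟩ := Finset.mem_filter.1 hL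
        obtain ⟨hU1, hU2⟩ := Finset.mem_filter.1 hU
        refine hM ⟨S, hmem L hL1 S hS1 U hU1 ?_ ?_, hS2⟩
        · exact Finset.ssubset_iff_subset_ne.2 ⟨hsub L S hL2 hS2 (hLmin S hS), fun h => hSn.1 h.symm⟩
        · exact Finset.ssubset_iff_subset_ne.2 ⟨hsub S U hS2 hU2 (hUmax S hS), hSn.2⟩
      omega
  have hsum := Finset.sum_le_sum (s := Finset.univ) fun f _ => hpt f
  simp only [Finset.sum_add_distrib] at hsum
  rw [sum_prefixed F, sum_prefixed (midSets F) (fun S => Numbering.prefixed S),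
    sum_prefixed (midSets F) (fun M => Numbering.prefixed (a M) ∩ Numbering.prefixed M),
    sum_prefixed (midSets F) (fun M => Numbering.prefixed M ∩ Numbering.prefixed (c M))] at hsum
  simp only [card_prefixed_eq, Finset.sum_const, Finset.card_univ, Fintype.card_numbering,
    Fintype.card_fin, smul_eq_mul] at hsum
  have hloc : ∀ M ∈ midSets F, 5 * ((Numbering.prefixed (a M) ∩ Numbering.prefixed M).card
      + (Numbering.prefixed M ∩ Numbering.prefixed (c M)).card) ≤ 3 * wt n M := by
    intro M hM
    have hane : (a M).Nonempty := by
      rw [Finset.nonempty_iff_ne_empty]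
      intro h; exact h0 (h ▸ haF M hM)
    have hcne : c M ≠ Finset.univ := fun h => h1 (h ▸ hcF M hM)
    have l1 := inter_low (haM M hM) hane
    have l2 := inter_high (hcM M hM) hcne
    have c1 := Finset.card_lt_card (haM M hM)
    have c2 := hane.card_pos
    have c3 := Finset.card_lt_card (hcM M hM)
    have c4 : (c M).card < n := by
      have := Finset.card_lt_card (Finset.ssubset_univ_iff.2 hcne)
      simpa using this
    set x := (Numbering.prefixed (a M) ∩ Numbering.prefixed M).card
    set y := (Numbering.prefixed M ∩ Numbering.prefixed (c M)).card
    have arith : ∀ (p q x y w : ℕ), 2 ≤ p → 50 ≤ q → p * x ≤ w → q * y ≤ w → 5 * (x + y) ≤ 3 * w := by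
      intro p q x y w h1 h2 h3 h4
      have := Nat.mul_le_mul_right x h1
      have := Nat.mul_le_mul_right y h2
      omega
    rcases le_total M.card 50 with h | h
    · exact arith _ _ _ _ _ (by omega) (by omega) l1 l2
    · rw [add_comm]; exact arith _ _ _ _ _ (by omega) (by omega) l2 l1
  have hloc2 := Finset.sum_le_sum hloc
  rw [← Finset.mul_sum, ← Finset.mul_sum, Finset.sum_add_distrib] at hloc2
  omega

lemma choose_le_second {n j : ℕ} (hj : j ≠ n / 2) : n.choose j ≤ n.choose (n / 2 + 1) := by
  rcases Nat.even_or_odd' n with ⟨k, hk | hk⟩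
  · have e : n / 2 = k := by omega
    rw [e] at *
    have mono : ∀ a b, a ≤ b → b ≤ k → n.choose a ≤ n.choose b := by
      intro a b hab hb
      induction b, hab using Nat.le_induction with
      | base => exact le_rfl
      | succ b _ ih => exact (ih (by omega)).trans (Nat.choose_le_succ_of_lt_half_left (by omega))
    have hs : 0 < k → n.choose (k + 1) = n.choose (k - 1) := fun h =>
      Nat.choose_symm_of_eq_add (by omega)
    rcases lt_or_gt_of_ne hj with h | h
    · rw [hs (by omega)]
      exact mono _ _ (by omega) (by omega)
    · by_cases hn : n < j
      · rw [Nat.choose_eq_zero_of_lt hn]; exact Nat.zero_le _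
      · rw [hs (by omega), ← Nat.choose_symm (by omega : j ≤ n)]
        exact mono _ _ (by omega) (by omega)
  · have e : n / 2 = k := by omega
    have : n.choose (n / 2 + 1) = n.choose (n / 2) := Nat.choose_symm_of_eq_add (by omega)
    rw [this]
    exact Nat.choose_le_middle _ _

lemma wt_mul {n : ℕ} (S : Finset (Fin n)) : n.choose S.card * wt n S = n.factorial := by
  have h : S.card ≤ n := by simpa using Finset.card_le_univ S
  rw [wt, ← mul_assoc]
  exact Nat.choose_mul_factorial_mul_factorial h

lemma lubell_final {n : ℕ} (hn : 100 ≤ n) (F : Finset (Finset (Fin n))) (hF : ButterflyFree F)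
    (h0 : ∅ ∉ F) (h1 : Finset.univ ∉ F) :
    3 * F.card + (midSets F).card ≤ 3 * Sigma2 n := by
  have raw := lubell_raw hn F hF h0 h1
  unfold Sigma2
  set k := n / 2 with hk
  have hr : n.choose (k + 1) * (k + 1) = n.choose k * (n - k) := Nat.choose_succ_right_eq n k
  set p0 := n.choose k with hp0
  set p1 := n.choose (k + 1) with hp1
  have hp0pos : 0 < p0 := Nat.choose_pos (by omega)
  have hp10 : p1 ≤ p0 := Nat.choose_le_middle _ _
  have hN : 0 < n.factorial := Nat.factorial_pos n
  have h56 : 5 * p0 ≤ 6 * p1 := by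
    have : p0 * k ≤ p1 * (k + 1) := by rw [hr]; exact Nat.mul_le_mul_left _ (by omega)
    have h50 : 50 ≤ k := by omega
    by_contra hcon
    push Not at hcon
    nlinarith
  have w0 : ∀ S : Finset (Fin n), n.factorial ≤ p0 * wt n S := fun S => by
    rw [← wt_mul S]; exact Nat.mul_le_mul_right _ (Nat.choose_le_middle _ _)
  have w1 : ∀ S : Finset (Fin n), S.card ≠ k → n.factorial ≤ p1 * wt n S := fun S hS => by
    rw [← wt_mul S]; exact Nat.mul_le_mul_right _ (choose_le_second hS)
  set x := (F.filter (fun S => S.card = k)).card with hx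
  set y := (F.filter (fun S => ¬ S.card = k)).card with hy
  have hxy : x + y = F.card := Finset.card_filter_add_card_filter_not _
  have hxp : x ≤ p0 := card_level F k
  have s1 : x * n.factorial ≤ p0 * ∑ S ∈ F.filter (fun S => S.card = k), wt n S := by
    rw [Finset.mul_sum, hx, ← smul_eq_mul]
    exact Finset.card_nsmul_le_sum _ _ _ (fun S _ => w0 S)
  have s2 : y * n.factorial ≤ p1 * ∑ S ∈ F.filter (fun S => ¬ S.card = k), wt n S := by
    rw [Finset.mul_sum, hy, ← smul_eq_mul]
    exact Finset.card_nsmul_le_sum _ _ _ (fun S hS => w1 S (Finset.mem_filter.1 hS).2)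
  set z := (midSets F).card with hz
  have s3 : z * n.factorial ≤ p0 * ∑ S ∈ midSets F, wt n S := by
    rw [Finset.mul_sum, hz, ← smul_eq_mul]
    exact Finset.card_nsmul_le_sum _ _ _ (fun S _ => w0 S)
  have s4 := Finset.sum_filter_add_sum_filter_not F (fun S => S.card = k) (fun S => wt n S)
  rw [← s4] at raw
  set X := ∑ S ∈ F.filter (fun S => S.card = k), wt n S
  set Y := ∑ S ∈ F.filter (fun S => ¬ S.card = k), wt n S
  set Z := ∑ S ∈ midSets F, wt n S
  have key : 5 * x * p1 + 5 * y * p0 + 2 * z * p1 ≤ 10 * p0 * p1 := by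
    refine Nat.le_of_mul_le_mul_right ?_ hN
    have a1 := Nat.mul_le_mul_left (5 * p1) s1
    have a2 := Nat.mul_le_mul_left (5 * p0) s2
    have a3 := Nat.mul_le_mul_left (2 * p1) s3
    have a4 := Nat.mul_le_mul_left (p0 * p1) raw
    nlinarith
  rw [← hxy]
  refine Nat.le_of_mul_le_mul_left ?_ (Nat.mul_pos (by norm_num : 0 < 5) hp0pos)
  zify at *
  nlinarith [mul_nonneg (sub_nonneg.2 hxp) (sub_nonneg.2 hp10), mul_nonneg (Int.natCast_nonneg z) (sub_nonneg.2 h56)]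

lemma Cond.mono {n s t : ℕ} (h : Cond n t) (hst : s ≤ t) : Cond n s :=
  ⟨h.1, lt_of_le_of_lt (Nat.pow_le_pow_left (Nat.mul_le_mul_left _ hst) _) h.2⟩

lemma card_levelFam (n j : ℕ) : (levelFam n j).card = n.choose j := by
  have : levelFam n j = Finset.powersetCard j Finset.univ := by
    ext x; simp [mem_levelFam, Finset.mem_powersetCard]
  rw [this]; simp

lemma missing_bound {n j : ℕ} (G V : Finset (Finset (Fin n)))
    (hG : G ⊆ levelFam n j ∪ levelFam n (j + 1)) (hV : V ⊆ levelFam n j ∪ levelFam n (j + 1))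
    (h1 : (G ∩ V).card ≤ 1) (h4 : 4 ≤ V.card) :
    G.card + 3 ≤ n.choose j + n.choose (j + 1) := by
  have h := Finset.card_union_add_card_inter G V
  have h2 : (G ∪ V).card ≤ n.choose j + n.choose (j + 1) := by
    rw [← card_levelFam, ← card_levelFam]
    exact (Finset.card_le_card (Finset.union_subset hG hV)).trans (Finset.card_union_le _ _)
  omega

lemma up_case {n j : ℕ} (hn : 100 ≤ n) (hj0 : 0 < j) (hj : j + 10 < n) (G : Finset (Finset (Fin n)))
    (hG : G ⊆ levelFam n j ∪ levelFam n (j + 1))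
    (hu : ∀ A ∈ G, ∀ C ∈ G, ∀ D ∈ G, A ⊂ C → A ⊂ D → C = D) :
    G.card + 3 ≤ n.choose j + n.choose (j + 1) := by
  by_cases h : ∃ A ∈ G, A.card = j
  · obtain ⟨A, hA, hAj⟩ := h
    refine missing_bound G (Aᶜ.image (fun i => insert i A)) hG ?_ ?_ ?_
    · intro x hx
      obtain ⟨i, hi, rfl⟩ := Finset.mem_image.1 hx
      rw [Finset.mem_union, mem_levelFam, mem_levelFam,
        Finset.card_insert_of_notMem (Finset.mem_compl.1 hi)]
      omega
    · rw [Finset.card_le_one]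
      intro C hC D hD
      obtain ⟨hC1, hC2⟩ := Finset.mem_inter.1 hC
      obtain ⟨hD1, hD2⟩ := Finset.mem_inter.1 hD
      obtain ⟨i, hi, rfl⟩ := Finset.mem_image.1 hC2
      obtain ⟨i', hi', rfl⟩ := Finset.mem_image.1 hD2
      exact hu A hA _ hC1 _ hD1 (Finset.ssubset_insert (Finset.mem_compl.1 hi))
        (Finset.ssubset_insert (Finset.mem_compl.1 hi'))
    · rw [Finset.card_image_of_injOn, Finset.card_compl, Fintype.card_fin]
      · omega
      · intro a ha b hb hab
        have ha' : a ∉ A := by simpa using ha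
        have : a ∈ insert b A := by
          have h := Finset.mem_insert_self a A
          simp only at hab
          rwa [hab] at h
        rcases Finset.mem_insert.1 this with h | h
        · exact h
        · exact absurd h ha'
  · refine missing_bound G (levelFam n j) hG Finset.subset_union_left ?_ ?_
    · have : G ∩ levelFam n j = ∅ := by
        rw [Finset.eq_empty_iff_forall_notMem]
        intro x hx
        obtain ⟨h1, h2⟩ := Finset.mem_inter.1 hx
        exact h ⟨x, h1, mem_levelFam.1 h2⟩
      rw [this]; simp
    · rw [card_levelFam]
      have := le_choose_of hj0 (by omega : j < n)
      omega

lemma down_case {n j : ℕ} (hn : 100 ≤ n) (hj0 : 10 < j) (hj : j + 10 < n) (G : Finset (Finset (Fin n)))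
    (hG : G ⊆ levelFam n j ∪ levelFam n (j + 1))
    (hu : ∀ A ∈ G, ∀ C ∈ G, ∀ D ∈ G, C ⊂ A → D ⊂ A → C = D) :
    G.card + 3 ≤ n.choose j + n.choose (j + 1) := by
  by_cases h : ∃ A ∈ G, A.card = j + 1
  · obtain ⟨A, hA, hAj⟩ := h
    refine missing_bound G (A.image (fun i => A.erase i)) hG ?_ ?_ ?_
    · intro x hx
      obtain ⟨i, hi, rfl⟩ := Finset.mem_image.1 hx
      rw [Finset.mem_union, mem_levelFam, mem_levelFam, Finset.card_erase_of_mem hi]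
      omega
    · rw [Finset.card_le_one]
      intro C hC D hD
      obtain ⟨hC1, hC2⟩ := Finset.mem_inter.1 hC
      obtain ⟨hD1, hD2⟩ := Finset.mem_inter.1 hD
      obtain ⟨i, hi, rfl⟩ := Finset.mem_image.1 hC2
      obtain ⟨i', hi', rfl⟩ := Finset.mem_image.1 hD2
      exact hu A hA _ hC1 _ hD1 (Finset.erase_ssubset hi) (Finset.erase_ssubset hi')
    · rw [Finset.card_image_of_injOn (Finset.erase_injOn A)]
      omega
  · refine missing_bound G (levelFam n (j + 1)) hG Finset.subset_union_right ?_ ?_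
    · have : G ∩ levelFam n (j + 1) = ∅ := by
        rw [Finset.eq_empty_iff_forall_notMem]
        intro x hx
        obtain ⟨h1, h2⟩ := Finset.mem_inter.1 hx
        exact h ⟨x, h1, mem_levelFam.1 h2⟩
      rw [this]; simp
    · rw [card_levelFam]
      have := le_choose_of (by omega : 0 < j + 1) (by omega : j + 1 < n)
      omega

lemma sigmaStar_form {n : ℕ} (hn : 100 ≤ n) {S : Finset (Finset (Fin n))} (hS : S ∈ SigmaStar n) :
    ∃ j, 10 < j ∧ j + 10 < n ∧ S = levelFam n j ∪ levelFam n (j + 1) ∧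
      n.choose j + n.choose (j + 1) = Sigma2 n := by
  rcases hS with rfl | hS
  · exact ⟨n / 2, by omega, by omega, rfl, rfl⟩
  · rw [Set.mem_singleton_iff] at hS
    subst hS
    refine ⟨(n + 1) / 2 - 1, by omega, by omega, ?_, ?_⟩
    · rw [show (n + 1) / 2 - 1 + 1 = (n + 1) / 2 by omega]
    · rw [Sigma2, add_comm]
      congr 1 <;> exact Nat.choose_symm_of_eq_add (by omega)

lemma end_case {n m : ℕ} (hc : Cond n m) (hm : 1 ≤ m) (F : Finset (Finset (Fin n)))
    (hF : ButterflyFree F) (hS : ∀ S ∈ SigmaStar n, m ≤ (F \ S).card)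
    (he : ∅ ∈ F ∨ Finset.univ ∈ F) : 4 * F.card + m ≤ 4 * Sigma2 n := by
  have hn := hc.1
  set E : Finset (Finset (Fin n)) := {∅, Finset.univ} with hE
  have hEc : E.card ≤ 2 := Finset.card_le_two
  set G := F \ E with hG
  have hGF : ∀ x ∈ G, x ∈ F ∧ ∅ ⊂ x ∧ x ⊂ Finset.univ := by
    intro x hx
    obtain ⟨h1, h2⟩ := Finset.mem_sdiff.1 hx
    simp only [hE, Finset.mem_insert, Finset.mem_singleton, not_or] at h2
    refine ⟨h1, ?_, ?_⟩
    · exact Finset.empty_ssubset.2 (Finset.nonempty_iff_ne_empty.2 h2.1)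
    · exact Finset.ssubset_univ_iff.2 h2.2
  have hcard : F.card ≤ G.card + 2 := by
    have h1 : F ⊆ G ∪ E := by
      intro x hx
      simp only [hG, Finset.mem_union, Finset.mem_sdiff]
      tauto
    have := (Finset.card_le_card h1).trans (Finset.card_union_le _ _)
    omega
  have hGS : ∀ S : Finset (Finset (Fin n)), (F \ S).card ≤ (G \ S).card + 2 := by
    intro S
    have h1 : F \ S ⊆ (G \ S) ∪ E := by
      intro x hx
      simp only [hG, Finset.mem_union, Finset.mem_sdiff] at hx ⊢
      tauto
    have := (Finset.card_le_card h1).trans (Finset.card_union_le _ _)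
    omega
  have hup : ∅ ∈ F → ∀ A ∈ G, ∀ C ∈ G, ∀ D ∈ G, A ⊂ C → A ⊂ D → C = D := by
    intro h0 A hA C hC D hD h1 h2
    by_contra hne
    exact bf_elim hF h0 (hGF A hA).1 (hGF C hC).1 (hGF D hD).1 (hGF A hA).2.1.ne hne
      (hGF C hC).2.1 (hGF D hD).2.1 h1 h2
  have hdn : Finset.univ ∈ F → ∀ A ∈ G, ∀ C ∈ G, ∀ D ∈ G, C ⊂ A → D ⊂ A → C = D := by
    intro h0 A hA C hC D hD h1 h2
    by_contra hne
    exact bf_elim hF (hGF C hC).1 (hGF D hD).1 (hGF A hA).1 h0 hne (hGF A hA).2.2.ne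
      h1 (hGF C hC).2.2 h2 (hGF D hD).2.2
  have h3 : ThreeFree G := by
    intro A hA B hB C hC h1 h2
    rcases he with h | h
    · exact h2.ne (hup h A hA B hB C hC h1 (h1.trans h2))
    · exact h1.ne (hdn h C hC A hA B hB (h1.trans h2) h2)
  by_cases hall : ∀ S ∈ SigmaStar n, 1 ≤ (G \ S).card
  · have := two_sperner (s := max 1 (m - 2)) (hc.mono (by omega)) G h3 (fun S hSS => by
      have := hall S hSS
      have := hS S hSS
      have := hGS S
      omega)
    omega
  · push Not at hall
    obtain ⟨S, hSS, h0⟩ := hall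
    have hm2 : m ≤ 2 := by
      have := hS S hSS
      have := hGS S
      omega
    have hsub : G ⊆ S := by
      rw [← Finset.sdiff_eq_empty_iff_subset, ← Finset.card_eq_zero]; omega
    obtain ⟨j, j1, j2, rfl, j4⟩ := sigmaStar_form hn hSS
    have : G.card + 3 ≤ Sigma2 n := by
      rw [← j4]
      rcases he with h | h
      · exact up_case hn (by omega) j2 G hsub (hup h)
      · exact down_case hn j1 j2 G hsub (hdn h)
    omega

lemma main_nat {n m : ℕ} (hc : Cond n m) (hm : 1 ≤ m) (F : Finset (Finset (Fin n)))
    (hF : ButterflyFree F) (hS : ∀ S ∈ SigmaStar n, m ≤ (F \ S).card) :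
    4 * F.card + m ≤ 4 * Sigma2 n := by
  by_cases he : ∅ ∈ F ∨ Finset.univ ∈ F
  · exact end_case hc hm F hF hS he
  push Not at he
  have hl := lubell_final hc.1 F hF he.1 he.2
  by_cases hz : 3 * m ≤ 4 * (midSets F).card
  · omega
  have hsub : midSets F ⊆ F := by unfold midSets; exact Finset.filter_subset _ _
  have h3 : ThreeFree (F \ midSets F) := by
    intro A hA B hB C hC h1 h2
    refine (Finset.mem_sdiff.1 hB).2 ?_
    unfold midSets
    exact Finset.mem_filter.2 ⟨(Finset.mem_sdiff.1 hB).1, ⟨A, (Finset.mem_sdiff.1 hA).1, h1⟩,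
      C, (Finset.mem_sdiff.1 hC).1, h2⟩
  have hcard := Finset.card_sdiff_add_card_eq_card hsub
  have := two_sperner (s := m - (midSets F).card) (hc.mono (by omega)) _ h3 (fun S hSS => by
    have h4 := hS S hSS
    have h1 : F \ S ⊆ ((F \ midSets F) \ S) ∪ midSets F := by
      intro x hx
      simp only [Finset.mem_union, Finset.mem_sdiff] at hx ⊢
      tauto
    have := (Finset.card_le_card h1).trans (Finset.card_union_le _ _)
    omega)
  omega

lemma cond_eventually (ε : ℝ) (hε : 0 < ε ∧ ε < 1) :
    ∃ n₀ : ℕ, ∀ n : ℕ, n₀ ≤ n → ∀ m : ℕ, (m : ℝ) ≤ (2 : ℝ) ^ ((n : ℝ) ^ (1 - ε)) → Cond n m := by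
  have t1 : Filter.Tendsto (fun x : ℝ => x ^ ε) Filter.atTop Filter.atTop := tendsto_rpow_atTop hε.1
  have e1 : ∀ᶠ n : ℕ in Filter.atTop, (100 : ℝ) ≤ (n : ℝ) ^ ε :=
    (t1.comp tendsto_natCast_atTop_atTop).eventually_ge_atTop 100
  have t2 : Filter.Tendsto (fun n : ℕ => (n : ℝ) ^ 6 / ((2 : ℝ) ^ (1 / 10 : ℝ)) ^ n) Filter.atTop (nhds 0) :=
    tendsto_pow_const_div_const_pow_of_one_lt 6 (Real.one_lt_rpow (by norm_num) (by norm_num))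
  have e2 : ∀ᶠ n : ℕ in Filter.atTop, (n : ℝ) ^ 6 / ((2 : ℝ) ^ (1 / 10 : ℝ)) ^ n < 1 / 24 ^ 6 :=
    t2.eventually (gt_mem_nhds (by norm_num))
  obtain ⟨n₀, h⟩ := Filter.eventually_atTop.1 (e1.and (e2.and (Filter.eventually_ge_atTop 100)))
  refine ⟨n₀, fun n hn m hm => ?_⟩
  obtain ⟨h1, h2, h3⟩ := h n hn
  refine ⟨h3, ?_⟩
  have hnpos : (0 : ℝ) < n := by exact_mod_cast (by omega : 0 < n)
  have h100 : (100 : ℝ) ≤ n := by exact_mod_cast h3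
  have hexp : (n : ℝ) ^ (1 - ε) ≤ n / 100 := by
    rw [Real.rpow_sub hnpos, Real.rpow_one]
    exact div_le_div_of_nonneg_left hnpos.le (by norm_num) h1
  have hm2 : (m : ℝ) ≤ (2 : ℝ) ^ ((n : ℝ) / 100) :=
    hm.trans (Real.rpow_le_rpow_of_exponent_le (by norm_num) hexp)
  have hm6 : (m : ℝ) ^ 6 ≤ (2 : ℝ) ^ ((n : ℝ) * 6 / 100) := by
    calc (m : ℝ) ^ 6 ≤ ((2 : ℝ) ^ ((n : ℝ) / 100)) ^ 6 := by gcongr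
      _ = (2 : ℝ) ^ ((n : ℝ) * 6 / 100) := by
        rw [← Real.rpow_mul_natCast (by norm_num)]; congr 1; push_cast; ring
  have hn6 : (24 * (n : ℝ)) ^ 6 < (2 : ℝ) ^ ((n : ℝ) / 10) := by
    rw [← Real.rpow_mul_natCast (by norm_num), div_lt_iff₀ (by positivity)] at h2
    have e : (1 / 10 : ℝ) * n = n / 10 := by ring
    rw [e] at h2
    rw [mul_pow]
    linarith
  have hfin : ((24 * n * m : ℕ) : ℝ) ^ 6 < (2 : ℝ) ^ (n / 2 : ℕ) := by
    push_cast
    rw [mul_pow, ← Real.rpow_natCast 2 (n / 2)]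
    have h4 : (n : ℝ) - 1 ≤ 2 * ((n / 2 : ℕ) : ℝ) := by
      have : n ≤ 2 * (n / 2) + 1 := by omega
      have : (n : ℝ) ≤ 2 * ((n / 2 : ℕ) : ℝ) + 1 := by exact_mod_cast this
      linarith
    calc (24 * (n : ℝ)) ^ 6 * (m : ℝ) ^ 6 ≤ (24 * (n : ℝ)) ^ 6 * (2 : ℝ) ^ ((n : ℝ) * 6 / 100) := by gcongr
      _ < (2 : ℝ) ^ ((n : ℝ) / 10) * (2 : ℝ) ^ ((n : ℝ) * 6 / 100) := by gcongr
      _ = (2 : ℝ) ^ ((n : ℝ) / 10 + (n : ℝ) * 6 / 100) := by rw [Real.rpow_add (by norm_num)]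
      _ ≤ (2 : ℝ) ^ ((n / 2 : ℕ) : ℝ) := by
        refine Real.rpow_le_rpow_of_exponent_le (by norm_num) ?_
        linarith
  exact_mod_cast hfin

end ButterflyHelpers

/-- Stability of maximum butterfly-free families: if `F` is butterfly-free and differs from
every family of `Σ*(n,2)` in at least `m` sets, then `|F| ≤ Σ(n,2) − m/4`, provided
`1 ≤ m ≤ 2^(n^(1-ε))`. -/
theorem butterfly_stability (ε : ℝ) (hε : 0 < ε ∧ ε < 1) :
    ∃ n₀ : ℕ, ∀ n : ℕ, n₀ ≤ n → ∀ m : ℕ, 1 ≤ m →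
      (m : ℝ) ≤ (2 : ℝ) ^ ((n : ℝ) ^ (1 - ε)) →
      ∀ F : Finset (Finset (Fin n)), ButterflyFree F →
      (∀ S ∈ SigmaStar n, m ≤ (F \ S).card) →
      (F.card : ℝ) ≤ (Sigma2 n : ℝ) - m / 4 := by
  obtain ⟨n₀, h⟩ := cond_eventually ε hε
  refine ⟨n₀, fun n hn m hm hm2 F hF hS => ?_⟩
  have h1 := main_nat (h n hn m hm2) hm F hF hS
  have h2 : 4 * (F.card : ℝ) + m ≤ 4 * (Sigma2 n : ℝ) := by exact_mod_cast h1
  linarith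
end

section
/- There exists n₀ such that for every odd n ≥ n₀ and every positive integer m the following holds: if F ⊆ 2^[n] is 2-Sperner and the number of sets G ⊆ [n] with G ∉ F and |G| ∈ {⌊n/2⌋, ⌈n/2⌉} is at least m, then |F| ≤ Σ(n,2) − 1.9·m/n. -/
/-- A family is 2-Sperner if it contains no chain of three of its members. -/
def TwoSperner {n : ℕ} (F : Finset (Finset (Fin n))) : Prop :=
  ∀ A ∈ F, ∀ B ∈ F, ∀ C ∈ F, ¬ (A ⊂ B ∧ B ⊂ C)

lemma aux_choose_low (k j : ℕ) (hj : j + 1 ≤ k) :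
    (2*k+1).choose j * (k+2) ≤ (2*k+1).choose k * k := by
  obtain ⟨t, rfl⟩ : ∃ t, k = t + 1 := ⟨k - 1, by omega⟩
  have h1 : (2*(t+1)+1).choose j ≤ (2*(t+1)+1).choose t := by
    have hjt : j ≤ t := by omega
    clear hj
    induction hjt using Nat.decreasingInduction with
    | self => exact le_rfl
    | of_succ i hi ih => exact (Nat.choose_le_succ_of_lt_half_left (by omega)).trans ih
  have h2 := Nat.choose_succ_right_eq (2*(t+1)+1) t
  rw [show 2*(t+1)+1 - t = t+1+2 by omega] at h2
  rw [h2]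
  exact Nat.mul_le_mul_right _ h1

lemma aux_choose (k j : ℕ) (hj : j ≤ 2*k+1) (h1 : j ≠ k) (h2 : j ≠ k+1) :
    (2*k+1).choose j * (k+2) ≤ (2*k+1).choose k * k := by
  rcases Nat.lt_or_ge j k with h | h
  · exact aux_choose_low k j h
  · rw [← Nat.choose_symm hj]
    exact aux_choose_low k _ (by omega)

lemma aux_lym {n : ℕ} (F : Finset (Finset (Fin n))) (hF : TwoSperner F) :
    ∑ s ∈ F, ((n.choose s.card : ℕ) : ℝ)⁻¹ ≤ 2 := by
  classical
  rw [← Finset.sum_filter_add_sum_filter_not F (fun s => ∃ t ∈ F, t ⊂ s)]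
  have key : ∀ G : Finset (Finset (Fin n)), IsAntichain (· ⊆ ·) (SetLike.coe G) →
      ∑ s ∈ G, ((n.choose s.card : ℕ) : ℝ)⁻¹ ≤ 1 := by
    intro G hG
    have := Finset.lubell_yamamoto_meshalkin_inequality_sum_inv_choose (𝕜 := ℝ) hG
    simpa using this
  have h1 := key (F.filter (fun s => ∃ t ∈ F, t ⊂ s)) (by
    intro a ha b hb hab hs
    simp only [Finset.coe_filter, Set.mem_setOf_eq] at ha hb
    obtain ⟨haF, t, htF, hta⟩ := ha
    exact hF t htF a haF b hb.1 ⟨hta, lt_of_le_of_ne hs hab⟩)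
  have h2 := key (F.filter (fun s => ¬ ∃ t ∈ F, t ⊂ s)) (by
    intro a ha b hb hab hs
    simp only [Finset.coe_filter, Set.mem_setOf_eq] at ha hb
    exact hb.2 ⟨a, ha.1, lt_of_le_of_ne hs hab⟩)
  linarith

/-- For odd `n`: if `F` is 2-Sperner and at least `m` sets of size `⌊n/2⌋` or `⌈n/2⌉` are
missing from `F`, then `|F| ≤ Σ(n,2) − 1.9·m/n`. -/
theorem two_sperner_stab_odd_missing :
    ∃ n₀ : ℕ, ∀ n : ℕ, n₀ ≤ n → Odd n → ∀ m : ℕ, 1 ≤ m →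
      ∀ F : Finset (Finset (Fin n)), TwoSperner F →
      m ≤ ((levelFam n (n / 2) ∪ levelFam n ((n + 1) / 2)) \ F).card →
      (F.card : ℝ) ≤ (Sigma2 n : ℝ) - 1.9 * m / n := by
  classical
  refine ⟨3, ?_⟩
  rintro n hn ⟨k, rfl⟩ m hm F hF hmiss
  have hk1 : (2*k+1)/2 = k := by omega
  have hk2 : (2*k+1+1)/2 = k+1 := by omega
  rw [hk1, hk2] at hmiss
  have hk : 1 ≤ k := by omega
  have hsym : (2*k+1).choose (k+1) = (2*k+1).choose k := by
    rw [← Nat.choose_symm (by omega : k ≤ 2*k+1)]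
    congr 1; omega
  have hlev : ∀ j, (levelFam (2*k+1) j).card = (2*k+1).choose j := by
    intro j
    have : levelFam (2*k+1) j = Finset.powersetCard j Finset.univ := by
      ext s; simp [levelFam, Finset.mem_powersetCard]
    rw [this]; simp
  set M := levelFam (2*k+1) k ∪ levelFam (2*k+1) (k+1) with hM
  have hMmem : ∀ s, s ∈ M ↔ s.card = k ∨ s.card = k+1 := by
    intro s; simp [hM, levelFam]
  have hMc : M.card = 2 * (2*k+1).choose k := by
    rw [hM, Finset.card_union_of_disjoint, hlev, hlev, hsym]
    · ring
    · rw [Finset.disjoint_left]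
      intro s h1 h2
      simp [levelFam] at h1 h2
      omega
  have hS : Sigma2 (2*k+1) = 2 * (2*k+1).choose k := by
    rw [Sigma2, hk1, hsym]; ring
  rw [hS]
  have hCpos : 0 < (2*k+1).choose k := Nat.choose_pos (by omega)
  have hlym := aux_lym F hF
  have e1 : (F ∩ M).card + (F \ M).card = F.card := Finset.card_inter_add_card_sdiff F M
  have e2 : (M ∩ F).card + (M \ F).card = M.card := Finset.card_inter_add_card_sdiff M F
  rw [Finset.inter_comm, hMc] at e2
  rw [← Finset.sum_inter_add_sum_sdiff F M] at hlym
  generalize hC : (2*k+1).choose k = C at *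
  have hCR : (0:ℝ) < C := by exact_mod_cast hCpos
  have hkR : (1:ℝ) ≤ k := by exact_mod_cast hk
  have s1 : ∑ s ∈ F ∩ M, (((2*k+1).choose s.card : ℕ) : ℝ)⁻¹ = (F ∩ M).card * (C:ℝ)⁻¹ := by
    rw [Finset.sum_congr rfl (g := fun _ => (C:ℝ)⁻¹), Finset.sum_const, nsmul_eq_mul]
    intro s hs
    rcases (hMmem s).1 (Finset.mem_inter.1 hs).2 with h | h
    · rw [h, hC]
    · rw [h, hsym]
  have s2 : (F \ M).card * ((k+2) * (C * k : ℝ)⁻¹) ≤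
      ∑ s ∈ F \ M, (((2*k+1).choose s.card : ℕ) : ℝ)⁻¹ := by
    rw [← nsmul_eq_mul]
    apply Finset.card_nsmul_le_sum
    intro s hs
    have hnm := (Finset.mem_sdiff.1 hs).2
    rw [hMmem] at hnm
    push Not at hnm
    have hle : s.card ≤ 2*k+1 := by simpa using Finset.card_le_univ s
    have h := aux_choose k s.card hle hnm.1 hnm.2
    have hpos : 0 < (2*k+1).choose s.card := Nat.choose_pos hle
    rw [hC] at h
    have hR : (((2*k+1).choose s.card : ℕ) : ℝ) * (k+2) ≤ C * k := by exact_mod_cast h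
    have hposR : (0:ℝ) < (((2*k+1).choose s.card : ℕ) : ℝ) := by exact_mod_cast hpos
    rw [← div_eq_mul_inv, ← one_div, div_le_div_iff₀ (by positivity) hposR]
    linarith
  rw [s1] at hlym
  have h3 : ((F ∩ M).card : ℝ) * (C:ℝ)⁻¹ + (F \ M).card * ((k+2) * (C * k : ℝ)⁻¹) ≤ 2 := by
    linarith
  have h4 : ((F ∩ M).card : ℝ) * k + (F \ M).card * (k+2) ≤ 2 * C * k := by
    have := mul_le_mul_of_nonneg_right h3 (by positivity : (0:ℝ) ≤ C * k)
    have e : (((F ∩ M).card : ℝ) * (C:ℝ)⁻¹ + (F \ M).card * ((k+2) * (C * k : ℝ)⁻¹)) * (C * k)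
        = ((F ∩ M).card : ℝ) * k + (F \ M).card * (k+2) := by
      have : (k:ℝ) ≠ 0 := by positivity
      field_simp
    linarith
  have e1R : ((F ∩ M).card : ℝ) + (F \ M).card = F.card := by exact_mod_cast e1
  have e2R : ((F ∩ M).card : ℝ) + (M \ F).card = 2 * C := by exact_mod_cast e2
  have hmR : (m : ℝ) ≤ (M \ F).card := by exact_mod_cast hmiss
  have hm0 : (0:ℝ) ≤ m := by positivity
  generalize ((F ∩ M).card : ℝ) = c at *
  generalize ((F \ M).card : ℝ) = a at *
  generalize ((M \ F).card : ℝ) = b at *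
  have h5 : 2 * b ≤ (b - a) * (k + 2) := by nlinarith
  have h6 : 2 * m / (k+2 : ℝ) ≤ b - a := by
    rw [div_le_iff₀ (by positivity)]; linarith
  have h7 : 1.9 * (m:ℝ) / ((2*k+1 : ℕ) : ℝ) ≤ 2 * m / (k+2 : ℝ) := by
    push_cast
    rw [div_le_div_iff₀ (by positivity) (by positivity)]
    nlinarith [mul_nonneg hm0 (sub_nonneg.2 hkR)]
  push_cast at h7 ⊢
  linarith
end
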